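/- Fix s ∈ ℂ with Re s > 0 such that s ≠ 1 and s is not an even positive integer. Let α, β > 0 be real with αβ = 4π³. Then ∑_{n=1}^∞ ψ_s(n) n^{−1/2} e^{−√(nβ)} sin(π/4 − √(nβ)) = (√β/√2)·ζ(−s) + Γ(s)·cos(π/4 + πs/4)·ζ((1+s)/2)·(2β)^{−s/2} + (1/√2)·ζ(1/2)·ζ(1−s) + 2^{−s−1/2} π^{−s−2} √β ∑_{n=1}^∞ (ψ_{1−s}(n)/n)·{ −π³√n/(√β·Γ(1−s)·sin(πs/2)) + 2^{2s} π^{3s/2+2} (n/β)^{(s+1)/2} Γ(s/2)·₁F₁(s/2; 1/2; −nα) }. -/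

import Mathlib

open Complex Finset
open scoped Real BigOperators Classical

/-- `ψ_s(n) = ∑_{j² ∣ n, j ≥ 1} j^s` with complex exponent. -/
noncomputable def cpsi (s : ℂ) (n : ℕ) : ℂ :=
  ∑ j ∈ (Finset.Icc 1 n).filter (fun j => j ^ 2 ∣ n), (j : ℂ) ^ s

/-- Rising factorial `(a)_k`. -/
noncomputable def poch (a : ℂ) (k : ℕ) : ℂ := ∏ i ∈ Finset.range k, (a + i)

/-- Kummer's confluent hypergeometric function `₁F₁(a;b;z)`. -/
noncomputable def F11 (a b z : ℂ) : ℂ :=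
  ∑' k : ℕ, poch a k / (poch b k * (k.factorial : ℂ)) * z ^ k

section RW1
open MeasureTheory Set Filter Topology

lemma rw_mc {f : ℝ → ℂ} (hf : ContinuousOn f (Ioi 0)) {C c : ℝ} (hc : 0 < c)
    (hb : ∀ v > 0, ‖f v‖ ≤ C * Real.exp (-c * v)) {s : ℂ} (hs : 0 < s.re) :
    MellinConvergent f s := by
  have hC : 0 ≤ C := by
    have := (norm_nonneg _).trans (hb 1 one_pos)
    exact nonneg_of_mul_nonneg_left this (Real.exp_pos _)
  refine mellinConvergent_of_isBigO_rpow_exp (a := c) (b := 0) hc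
    (hf.locallyIntegrableOn measurableSet_Ioi) ?_ ?_ hs
  · refine Asymptotics.IsBigO.of_bound C ?_
    filter_upwards [eventually_gt_atTop 0] with v hv
    rw [Real.norm_of_nonneg (Real.exp_pos _).le]
    exact hb v hv
  · refine Asymptotics.IsBigO.of_bound C ?_
    filter_upwards [self_mem_nhdsWithin] with v hv
    have hv' : (0:ℝ) < v := hv
    simp only [neg_zero, Real.rpow_zero, norm_one, mul_one]
    refine (hb v hv).trans ?_
    have : Real.exp (-c * v) ≤ 1 := by
      rw [Real.exp_le_one_iff]; nlinarith
    nlinarith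

lemma rw_md {f : ℝ → ℂ} (hf : ContinuousOn f (Ioi 0)) {C c : ℝ} (hc : 0 < c)
    (hb : ∀ v > 0, ‖f v‖ ≤ C * Real.exp (-c * v)) {s : ℂ} (hs : 0 < s.re) :
    DifferentiableAt ℂ (mellin f) s := by
  have hC : 0 ≤ C := by
    have := (norm_nonneg _).trans (hb 1 one_pos)
    exact nonneg_of_mul_nonneg_left this (Real.exp_pos _)
  refine mellin_differentiableAt_of_isBigO_rpow_exp (a := c) (b := 0) hc
    (hf.locallyIntegrableOn measurableSet_Ioi) ?_ ?_ hs
  · refine Asymptotics.IsBigO.of_bound C ?_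
    filter_upwards [eventually_gt_atTop 0] with v hv
    rw [Real.norm_of_nonneg (Real.exp_pos _).le]
    exact hb v hv
  · refine Asymptotics.IsBigO.of_bound C ?_
    filter_upwards [self_mem_nhdsWithin] with v hv
    have hv' : (0:ℝ) < v := hv
    simp only [neg_zero, Real.rpow_zero, norm_one, mul_one]
    refine (hb v hv).trans ?_
    have : Real.exp (-c * v) ≤ 1 := by
      rw [Real.exp_le_one_iff]; nlinarith
    nlinarith

lemma rw_exp_deriv :
    ∀ x ∈ (univ : Set ℝ), HasDerivWithinAt (Real.exp ∘ Neg.neg) (-Real.exp (-x)) univ x :=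
  fun x _ ↦ mul_neg_one (Real.exp (-x)) ▸
    ((Real.hasDerivAt_exp (-x)).comp x (hasDerivAt_neg x)).hasDerivWithinAt

lemma rw_exp_image : Set.image (Real.exp ∘ Neg.neg) (univ : Set ℝ) = Set.Ioi (0:ℝ) := by
  rw [Set.image_comp, Set.image_univ_of_surjective neg_surjective, Set.image_univ, Real.range_exp]

lemma rw_exp_inj : (univ : Set ℝ).InjOn (Real.exp ∘ Neg.neg) :=
  Real.exp_injective.injOn.comp neg_injective.injOn (univ.mapsTo_univ _)

lemma rw_exp_aux (x : ℝ) (s : ℂ) (f : ℂ) :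
    Real.exp (-x) • (cexp (-↑x) ^ (s - 1) * f) = cexp (-(s * ↑x)) * f := by
  rw [real_smul, ← mul_assoc]
  push_cast
  rw [show cexp (-(x:ℂ)) * cexp (-(x:ℂ)) ^ (s - 1) = cexp (-(x:ℂ)) ^ (1:ℂ) * cexp (-(x:ℂ)) ^ (s - 1) by
    rw [cpow_one]]
  rw [← cpow_add _ _ (Complex.exp_ne_zero _), cpow_def_of_ne_zero (Complex.exp_ne_zero _),
    Complex.log_exp (by simp [Real.pi_pos]) (by simpa using Real.pi_nonneg)]
  ring_nf

lemma rw_mellin_exp (f : ℝ → ℂ) (s : ℂ) :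
    mellin f s = ∫ (u : ℝ), cexp (-s * u) * f (Real.exp (-u)) := by
  rw [mellin, ← rw_exp_image, integral_image_eq_integral_abs_deriv_smul
        MeasurableSet.univ rw_exp_deriv rw_exp_inj]
  simp [rw_exp_aux, -real_smul]

lemma rw_mellin_exp_int {f : ℝ → ℂ} {s : ℂ} (h : MellinConvergent f s) :
    Integrable (fun u : ℝ => cexp (-s * u) * f (Real.exp (-u))) := by
  rw [MellinConvergent, ← rw_exp_image, integrableOn_image_iff_integrableOn_abs_deriv_smul
        MeasurableSet.univ rw_exp_deriv rw_exp_inj] at h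
  simpa [rw_exp_aux, -real_smul] using h

/-- rotation of the ray of integration in a Mellin transform -/
lemma rw_rot {F : ℂ → ℂ} (hF : Differentiable ℂ F) (φ : ℝ) {C c : ℝ} (hc : 0 < c)
    (hb : ∀ v : ℝ, 0 < v → ∀ y ∈ uIcc 0 φ, ‖F (v * cexp (y * I))‖ ≤ C * Real.exp (-c * v))
    {s : ℂ} (hs : 0 < s.re) :
    mellin (fun v : ℝ => F v) s = cexp (φ * I * s) * mellin (fun v : ℝ => F (v * cexp (φ * I))) s := by
  have hC : 0 ≤ C := by
    have := (norm_nonneg _).trans (hb 1 one_pos 0 left_mem_uIcc)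
    exact nonneg_of_mul_nonneg_left this (Real.exp_pos _)
  set G : ℂ → ℂ := fun z => cexp (-s * z) * F (cexp (-z)) with hG
  have hGd : Differentiable ℂ G := by
    have : Differentiable ℂ (fun z : ℂ => F (cexp (-z))) := hF.comp (by fun_prop)
    have h2 : Differentiable ℂ (fun z : ℂ => cexp (-s * z)) := by fun_prop
    exact h2.mul this
  have hinteg : ∀ y ∈ uIcc 0 φ, MellinConvergent (fun v : ℝ => F (v * cexp (y * I))) s := by
    intro y hy
    refine rw_mc (C := C) (Continuous.continuousOn ?_) hc (fun v hv => hb v hv y hy) hs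
    exact hF.continuous.comp (by fun_prop)
  have hGI : ∀ (u y : ℝ), G (u + ((-y : ℝ) : ℂ) * I)
      = cexp (y * I * s) * (cexp (-s * u) * F ((Real.exp (-u) : ℝ) * cexp (y * I))) := by
    intro u y
    simp only [hG]
    rw [← mul_assoc, ← Complex.exp_add]
    congr 2
    · push_cast; ring
    · push_cast; rw [← Complex.exp_add]; congr 1; ring
  have hGint : ∀ y ∈ uIcc 0 φ, Integrable (fun u : ℝ => G (u + ((-y : ℝ) : ℂ) * I)) := by
    intro y hy
    simp_rw [hGI]
    exact (rw_mellin_exp_int (hinteg y hy)).const_mul _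
  have hGval : ∀ y, ∫ u : ℝ, G (u + ((-y : ℝ) : ℂ) * I)
      = cexp (y * I * s) * mellin (fun v : ℝ => F (v * cexp (y * I))) s := by
    intro y
    simp_rw [hGI]
    rw [integral_const_mul, rw_mellin_exp]
  set B : ℝ := Real.exp (|φ| * |s.im|) * C with hB
  have hGb : ∀ u y : ℝ, y ∈ uIcc 0 φ → ‖G (u + ((-y : ℝ) : ℂ) * I)‖
      ≤ B * (Real.exp (-s.re * u) * Real.exp (-c * Real.exp (-u))) := by
    intro u y hy
    rw [hGI, norm_mul, norm_mul, Complex.norm_exp, Complex.norm_exp]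
    have h1 := hb (Real.exp (-u)) (Real.exp_pos _) y hy
    have h2 : ((y:ℂ) * I * s).re ≤ |φ| * |s.im| := by
      have : ((y:ℂ) * I * s).re = -(y * s.im) := by simp
      rw [this]
      have hy' : |y| ≤ |φ| := by
        have := abs_sub_left_of_mem_uIcc hy
        simpa using this
      calc -(y * s.im) ≤ |y * s.im| := neg_le_abs _
        _ = |y| * |s.im| := abs_mul _ _
        _ ≤ _ := by gcongr
    have h3 : (-s * (u:ℂ)).re = -s.re * u := by simp
    rw [h3, hB]
    calc Real.exp ((y:ℂ) * I * s).re * (Real.exp (-s.re * u) * ‖F ((Real.exp (-u) : ℝ) * cexp (y * I))‖)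
        ≤ Real.exp (|φ| * |s.im|) * (Real.exp (-s.re * u) * (C * Real.exp (-c * Real.exp (-u)))) := by
          gcongr
      _ = _ := by ring
  -- limits of vertical sides
  have hlimP : Tendsto (fun R : ℝ => B * (Real.exp (-s.re * R) * Real.exp (-c * Real.exp (-R)))) atTop (𝓝 0) := by
    have h1 : Tendsto (fun R : ℝ => B * Real.exp (-s.re * R)) atTop (𝓝 0) := by
      have : Tendsto (fun R : ℝ => -s.re * R) atTop atBot :=
        tendsto_id.const_mul_atTop_of_neg (by linarith)
      simpa using (Real.tendsto_exp_atBot.comp this).const_mul B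
    refine squeeze_zero (fun R => by positivity) (fun R => ?_) h1
    have : Real.exp (-c * Real.exp (-R)) ≤ 1 := by
      rw [Real.exp_le_one_iff]; nlinarith [Real.exp_pos (-R)]
    have h0 := Real.exp_pos (-s.re * R)
    have hB0 : 0 ≤ B := by positivity
    calc _ ≤ B * (Real.exp (-s.re * R) * 1) := by gcongr
      _ = _ := by ring
  have hlimM : Tendsto (fun R : ℝ => B * (Real.exp (-s.re * (-R)) * Real.exp (-c * Real.exp (-(-R))))) atTop (𝓝 0) := by
    have h1 : Tendsto (fun x : ℝ => x ^ s.re * Real.exp (-c * x)) atTop (𝓝 0) :=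
      tendsto_rpow_mul_exp_neg_mul_atTop_nhds_zero _ _ hc
    have h2 := (h1.comp Real.tendsto_exp_atTop).const_mul B
    rw [mul_zero] at h2
    refine h2.congr (fun R => ?_)
    simp only [Function.comp, neg_neg]
    rw [← Real.exp_mul]
    congr 3; ring
  have hvert : ∀ (g : ℝ → ℝ), Tendsto (fun R : ℝ => B * (Real.exp (-s.re * g R) * Real.exp (-c * Real.exp (-g R)))) atTop (𝓝 0) →
      Tendsto (fun R : ℝ => ∫ y in (0:ℝ)..(-φ), G ((g R : ℝ) + y * I)) atTop (𝓝 0) := by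
    intro g hg
    rw [tendsto_zero_iff_norm_tendsto_zero]
    have h2 := hg.mul_const |(-φ) - 0|
    rw [zero_mul] at h2
    refine squeeze_zero (fun R => norm_nonneg _) (fun R => ?_) h2
    refine intervalIntegral.norm_integral_le_of_norm_le_const ?_
    intro y hy
    have := hGb (g R) (-y) (by
      have h3 := uIoc_subset_uIcc hy
      rcases le_total 0 φ with h | h
      · rw [uIcc_of_le h]; rw [Set.uIcc_of_ge (by linarith)] at h3
        exact ⟨by linarith [h3.2], by linarith [h3.1]⟩
      · rw [uIcc_of_ge h]; rw [Set.uIcc_of_le (by linarith)] at h3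
        exact ⟨by linarith [h3.2], by linarith [h3.1]⟩)
    rw [neg_neg] at this
    exact this
  have hV1 := hvert (fun R => R) hlimP
  have hV2 := hvert (fun R => -R) hlimM
  have hrect : ∀ R : ℝ, (∫ x in (-R)..R, G (x + ((-0 : ℝ) : ℂ) * I)) - (∫ x in (-R)..R, G (x + ((-φ : ℝ) : ℂ) * I))
      + I • (∫ y in (0:ℝ)..(-φ), G ((R : ℝ) + y * I)) - I • (∫ y in (0:ℝ)..(-φ), G ((-R : ℝ) + y * I)) = 0 := by
    intro R
    have := Complex.integral_boundary_rect_eq_zero_of_differentiableOn G ⟨-R, 0⟩ ⟨R, -φ⟩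
      hGd.differentiableOn
    simpa using this
  have hT : ∀ y ∈ uIcc 0 φ, Tendsto (fun R : ℝ => ∫ x in (-R)..R, G (x + ((-y : ℝ) : ℂ) * I)) atTop
      (𝓝 (∫ u : ℝ, G (u + ((-y : ℝ) : ℂ) * I))) := fun y hy =>
    intervalIntegral_tendsto_integral (hGint y hy) tendsto_neg_atTop_atBot tendsto_id
  have hlim := (((hT 0 left_mem_uIcc).sub (hT φ right_mem_uIcc)).add (hV1.const_smul I)).sub (hV2.const_smul I)
  have hz : (∫ u : ℝ, G (u + ((-(0:ℝ) : ℝ) : ℂ) * I)) - (∫ u : ℝ, G (u + ((-φ : ℝ) : ℂ) * I)) + I • (0:ℂ) - I • (0:ℂ) = 0 := by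
    refine tendsto_nhds_unique hlim ?_
    refine tendsto_const_nhds.congr (fun R => ?_)
    exact (hrect R).symm
  rw [hGval, hGval] at hz
  simp only [ofReal_zero, zero_mul, Complex.exp_zero, mul_one, one_mul, smul_zero, add_zero, sub_zero] at hz
  exact sub_eq_zero.mp hz

end RW1

section RW2
open MeasureTheory Set Filter Topology

lemma rw_cos_half {y : ℝ} (hy : |y| ≤ π / 4) : 1 / 2 ≤ Real.cos y := by
  rw [← Real.cos_abs, ← Real.cos_pi_div_three]
  have := Real.pi_pos
  exact Real.cos_le_cos_of_nonneg_of_le_pi (abs_nonneg _) (by linarith) (by linarith)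

lemma rw_poly {c v : ℝ} (hc : 0 < c) (hv : 0 ≤ v) : 1 + v ^ 2 ≤ (1 + 2 / c ^ 2) * Real.exp (c * v) := by
  have h1 := Real.pow_div_factorial_le_exp (c * v) (by positivity) 2
  have h2 : 1 ≤ Real.exp (c * v) := Real.one_le_exp (by positivity)
  have h3 : v ^ 2 = 2 / c ^ 2 * ((c * v) ^ 2 / (Nat.factorial 2 : ℝ)) := by
    simp [Nat.factorial]; field_simp
  rw [h3, add_mul, one_mul]
  gcongr

lemma rw_mellin_dom {f : ℝ → ℝ → ℂ} {f0 b : ℝ → ℂ} {s : ℂ} (hb : MellinConvergent b s)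
    (hc : ∀ d > 0, ContinuousOn (f d) (Ioi 0))
    (hle : ∀ d > 0, ∀ v > 0, ‖f d v‖ ≤ ‖b v‖)
    (hlim : ∀ v > 0, Tendsto (fun d => f d v) (𝓝[>] 0) (𝓝 (f0 v))) :
    Tendsto (fun d => mellin (f d) s) (𝓝[>] 0) (𝓝 (mellin f0 s)) := by
  refine tendsto_integral_filter_of_dominated_convergence (fun v : ℝ => ‖(v:ℂ) ^ (s - 1) • b v‖) ?_ ?_ hb.norm ?_
  · filter_upwards [self_mem_nhdsWithin] with d hd
    refine ContinuousOn.aestronglyMeasurable ?_ measurableSet_Ioi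
    refine ContinuousOn.mul (f := fun v : ℝ => (v:ℂ) ^ (s - 1)) ?_ (hc d hd)
    intro v hv
    exact (continuousAt_ofReal_cpow_const _ _ (Or.inr (ne_of_gt hv))).continuousWithinAt
  · filter_upwards [self_mem_nhdsWithin] with d hd
    refine (ae_restrict_iff' measurableSet_Ioi).mpr (ae_of_all _ (fun v hv => ?_))
    rw [norm_smul, norm_smul]
    gcongr
    exact hle d hd v hv
  · refine (ae_restrict_iff' measurableSet_Ioi).mpr (ae_of_all _ (fun v hv => ?_))
    exact (hlim v hv).const_smul _

lemma rw_mc_of_le {f b : ℝ → ℂ} {s : ℂ} (hb : MellinConvergent b s)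
    (hc : ContinuousOn f (Ioi 0)) (hle : ∀ v > 0, ‖f v‖ ≤ ‖b v‖) : MellinConvergent f s := by
  refine Integrable.mono' hb.norm ?_ ?_
  · refine ContinuousOn.aestronglyMeasurable ?_ measurableSet_Ioi
    refine ContinuousOn.mul (f := fun v : ℝ => (v:ℂ) ^ (s - 1)) ?_ hc
    intro v hv
    exact (continuousAt_ofReal_cpow_const _ _ (Or.inr (ne_of_gt hv))).continuousWithinAt
  · refine (ae_restrict_iff' measurableSet_Ioi).mpr (ae_of_all _ (fun v hv => ?_))
    rw [norm_smul, norm_smul]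
    gcongr
    exact hle v hv

lemma rw_mellin_sum {ι : Type*} [Countable ι] {f : ι → ℝ → ℂ} {b : ℝ → ℂ} {u : ι → ℝ} {s : ℂ}
    (hb : MellinConvergent b s) (hu : Summable u)
    (hc : ∀ i, ContinuousOn (f i) (Ioi 0))
    (hle : ∀ i, ∀ v > 0, ‖f i v‖ ≤ u i * ‖b v‖) :
    HasSum (fun i => mellin (f i) s) (mellin (fun v => ∑' i, f i v) s) := by
  have hconv : ∀ i, MellinConvergent (f i) s := fun i =>
    rw_mc_of_le (b := fun v => (u i : ℂ) • b v) (hb.const_smul _) (hc i) (fun v hv => by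
      refine (hle i v hv).trans ?_
      rw [norm_smul]
      gcongr
      simpa using le_abs_self (u i))
  have := hasSum_integral_of_summable_integral_norm (F := fun i (v : ℝ) => (v:ℂ) ^ (s - 1) • f i v)
    (μ := volume.restrict (Ioi (0:ℝ))) (fun i => hconv i) ?_
  · simpa only [smul_eq_mul, tsum_mul_left, mellin] using this
  · refine Summable.of_nonneg_of_le (fun i => by positivity) (fun i => ?_)
      (hu.mul_right (∫ v in Ioi (0:ℝ), ‖(v:ℂ) ^ (s - 1) • b v‖))
    rw [← integral_const_mul]
    refine setIntegral_mono_on (hconv i).norm (hb.norm.const_mul _) measurableSet_Ioi (fun v hv => ?_)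
    rw [norm_smul, norm_smul]
    calc _ ≤ ‖(v:ℂ) ^ (s - 1)‖ * (u i * ‖b v‖) := by gcongr; exact hle i v hv
      _ = _ := by ring

lemma rw_gamma_ray {x φ : ℝ} (hx : 0 < x) (hφ : |φ| ≤ π / 4) {s : ℂ} (hs : 0 < s.re) :
    mellin (fun v : ℝ => cexp (-(x * cexp (φ * I)) * v)) s = cexp (-(φ * I * s)) * (x:ℂ) ^ (-s) * Complex.Gamma s := by
  have h := rw_rot (F := fun u => cexp (-x * u)) (by fun_prop) φ (C := 1) (c := x / 2) (by positivity) ?_ hs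
  · have h0 : mellin (fun v : ℝ => cexp (-x * v)) s = (x:ℂ) ^ (-s) * Complex.Gamma s := by
      have := Complex.integral_cpow_mul_exp_neg_mul_Ioi hs hx
      rw [mellin]
      simp only [smul_eq_mul, neg_mul]
      rw [this, one_div, cpow_neg, inv_cpow]
      rw [arg_ofReal_of_nonneg hx.le]; exact Real.pi_pos.ne
    have h1 : (fun v : ℝ => cexp (-x * (v * cexp (φ * I)))) = fun v : ℝ => cexp (-(x * cexp (φ * I)) * v) := by
      funext v; congr 1; ring
    rw [h1, h0] at h
    rw [mul_assoc, h, ← mul_assoc, ← Complex.exp_add]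
    simp
  · intro v hv y hy
    have hy' : |y| ≤ |φ| := by
      have := abs_sub_left_of_mem_uIcc hy
      simpa using this
    rw [Complex.norm_exp, one_mul]
    apply Real.exp_le_exp.mpr
    have : (-(x:ℂ) * (v * cexp (y * I))).re = -(x * v * Real.cos y) := by
      rw [Complex.exp_mul_I]; simp [← ofReal_cos, ← ofReal_sin]; ring
    rw [this]
    have := rw_cos_half (hy'.trans hφ)
    nlinarith [mul_pos hx hv]

lemma rw_sin_pos : 0 < Real.sin (π / 4) := by
  rw [Real.sin_pi_div_four]; positivity

/-- rotation with an oscillating factor -/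
lemma rw_rot2 {G : ℂ → ℂ} (hG : Differentiable ℂ G) {e : ℝ} (he : e = 1 ∨ e = -1) {C x : ℝ} (hx : 0 < x)
    (hb : ∀ v : ℝ, 0 < v → ∀ y ∈ Set.Icc 0 (π / 4), ‖G (v * cexp ((e * y : ℝ) * I))‖ ≤ C * (1 + v ^ 2))
    {s : ℂ} (hs : 0 < s.re) (hGm : MellinConvergent (fun v : ℝ => G v) s) :
    mellin (fun v : ℝ => G v * cexp (I * e * x * v)) s =
      cexp ((e * (π / 4) : ℝ) * I * s) * mellin (fun v : ℝ => G (v * cexp ((e * (π / 4) : ℝ) * I)) *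
        cexp (I * e * x * (v * cexp ((e * (π / 4) : ℝ) * I)))) s := by
  have hπ := Real.pi_pos
  have hC : 0 ≤ C := by
    have := (norm_nonneg _).trans (hb 1 one_pos 0 ⟨le_rfl, by positivity⟩)
    nlinarith
  have hre : ∀ (d v y : ℝ), ((I * e * x - d) * (v * cexp ((e * y : ℝ) * I))).re
      = -(x * v * Real.sin y) - d * v * Real.cos y := by
    intro d v y
    rw [Complex.exp_mul_I, ← ofReal_cos, ← ofReal_sin]
    rcases he with h | h <;> subst h <;> simp [-ofReal_cos, -ofReal_sin] <;> ring
  have hnorm : ∀ (d v y : ℝ), ‖cexp ((I * e * x - d) * (v * cexp ((e * y : ℝ) * I)))‖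
      = Real.exp (-(x * v * Real.sin y) - d * v * Real.cos y) := by
    intro d v y; rw [Complex.norm_exp, hre]
  have key : ∀ d : ℝ, 0 < d → mellin (fun v : ℝ => G v * cexp ((I * e * x - d) * v)) s =
      cexp ((e * (π / 4) : ℝ) * I * s) * mellin (fun v : ℝ => G (v * cexp ((e * (π / 4) : ℝ) * I)) *
        cexp ((I * e * x - d) * (v * cexp ((e * (π / 4) : ℝ) * I)))) s := by
    intro d hd
    refine rw_rot (F := fun u => G u * cexp ((I * e * x - d) * u)) (hG.mul (by fun_prop)) (e * (π / 4))
      (C := C * (1 + 2 / (d / 4) ^ 2)) (c := d / 4) (by positivity) ?_ hs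
    intro v hv y hy
    obtain ⟨y', hy', rfl⟩ : ∃ y' ∈ Set.Icc 0 (π / 4), y = e * y' := by
      rcases he with h | h <;> subst h
      · refine ⟨y, ?_, by simp⟩
        rwa [one_mul, Set.uIcc_of_le (by positivity)] at hy
      · refine ⟨-y, ?_, by simp⟩
        rw [Set.uIcc_of_ge (by linarith)] at hy
        exact ⟨by linarith [hy.2], by linarith [hy.1]⟩
    rw [norm_mul, hnorm]
    have h1 := hb v hv y' hy'
    have hcos := rw_cos_half (y := y') (by rw [abs_of_nonneg hy'.1]; exact hy'.2)
    have hsin : 0 ≤ Real.sin y' := Real.sin_nonneg_of_nonneg_of_le_pi hy'.1 (by linarith [hy'.2])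
    have h2 : Real.exp (-(x * v * Real.sin y') - d * v * Real.cos y') ≤ Real.exp (-(d / 2) * v) := by
      apply Real.exp_le_exp.mpr
      have : 0 ≤ x * v * Real.sin y' := by positivity
      nlinarith [mul_pos hd hv]
    have h3 := rw_poly (c := d / 4) (v := v) (by positivity) hv.le
    calc _ ≤ (C * ((1 + 2 / (d / 4) ^ 2) * Real.exp (d / 4 * v))) * Real.exp (-(d / 2) * v) := by
          gcongr; exact h1.trans (by gcongr)
      _ = C * (1 + 2 / (d / 4) ^ 2) * (Real.exp (d / 4 * v) * Real.exp (-(d / 2) * v)) := by ring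
      _ = _ := by rw [← Real.exp_add]; congr 2; ring
  have hL : Tendsto (fun d : ℝ => mellin (fun v : ℝ => G v * cexp ((I * e * x - d) * v)) s) (𝓝[>] 0)
      (𝓝 (mellin (fun v : ℝ => G v * cexp (I * e * x * v)) s)) := by
    refine rw_mellin_dom hGm ?_ ?_ ?_
    · intro d hd
      exact ((hG.continuous.comp continuous_ofReal).mul (by fun_prop)).continuousOn
    · intro d hd v hv
      rw [norm_mul]
      have := hnorm d v 0
      simp only [mul_zero, ofReal_zero, zero_mul, Complex.exp_zero, mul_one, Real.sin_zero, Real.cos_zero] at this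
      rw [this]
      have h1 : Real.exp (-0 - d * v) ≤ 1 := Real.exp_le_one_iff.mpr (by nlinarith [mul_pos hd hv])
      exact mul_le_of_le_one_right (norm_nonneg _) h1
    · intro v hv
      refine Tendsto.mono_left ?_ nhdsWithin_le_nhds
      have : Continuous (fun d : ℝ => G v * cexp ((I * e * x - d) * v)) := by fun_prop
      simpa using this.tendsto 0
  have hS := rw_sin_pos
  set c0 := x * Real.sin (π / 4) with hc0
  have hc0p : 0 < c0 := by positivity
  have hR : Tendsto (fun d : ℝ => cexp ((e * (π / 4) : ℝ) * I * s) * mellin (fun v : ℝ => G (v * cexp ((e * (π / 4) : ℝ) * I)) *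
        cexp ((I * e * x - d) * (v * cexp ((e * (π / 4) : ℝ) * I)))) s) (𝓝[>] 0)
      (𝓝 (cexp ((e * (π / 4) : ℝ) * I * s) * mellin (fun v : ℝ => G (v * cexp ((e * (π / 4) : ℝ) * I)) *
        cexp (I * e * x * (v * cexp ((e * (π / 4) : ℝ) * I)))) s)) := by
    refine Tendsto.const_mul _ ?_
    refine rw_mellin_dom (b := fun v : ℝ => ((C * (1 + 2 / (c0 / 2) ^ 2) * Real.exp (-(c0 / 2) * v) : ℝ) : ℂ)) ?_ ?_ ?_ ?_
    · refine rw_mc (C := C * (1 + 2 / (c0 / 2) ^ 2)) (c := c0 / 2) (by fun_prop) (by positivity) ?_ hs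
      intro v hv
      rw [Complex.norm_real, Real.norm_of_nonneg (by positivity)]
    · intro d hd
      refine Continuous.continuousOn (Continuous.mul (hG.continuous.comp (by fun_prop)) (by fun_prop))
    · intro d hd v hv
      rw [norm_mul, hnorm, Complex.norm_real, Real.norm_of_nonneg (by positivity)]
      have h1 := hb v hv (π / 4) ⟨by positivity, le_rfl⟩
      have hcos := rw_cos_half (y := π / 4) (by rw [abs_of_nonneg (by positivity)])
      have h3 := rw_poly (c := c0 / 2) (v := v) (by positivity) hv.le
      have h2 : Real.exp (-(x * v * Real.sin (π / 4)) - d * v * Real.cos (π / 4)) ≤ Real.exp (-c0 * v) := by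
        apply Real.exp_le_exp.mpr
        rw [hc0]
        have : 0 ≤ d * v * Real.cos (π / 4) := mul_nonneg (mul_pos hd hv).le (by linarith)
        linarith
      calc _ ≤ (C * ((1 + 2 / (c0 / 2) ^ 2) * Real.exp (c0 / 2 * v))) * Real.exp (-c0 * v) := by
            gcongr; exact h1.trans (by gcongr)
        _ = C * (1 + 2 / (c0 / 2) ^ 2) * (Real.exp (c0 / 2 * v) * Real.exp (-c0 * v)) := by ring
        _ = _ := by rw [← Real.exp_add]; congr 2; ring
    · intro v hv
      refine Tendsto.mono_left ?_ nhdsWithin_le_nhds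
      have : Continuous (fun d : ℝ => G (v * cexp ((e * (π / 4) : ℝ) * I)) *
        cexp ((I * e * x - d) * (v * cexp ((e * (π / 4) : ℝ) * I)))) := by fun_prop
      simpa using this.tendsto 0
  refine tendsto_nhds_unique hL (hR.congr' ?_)
  filter_upwards [self_mem_nhdsWithin] with d hd
  exact (key d hd).symm

end RW2

section RW3
open MeasureTheory Set Filter Topology

lemma rw_exp_sub_one {w : ℂ} (hw : w.re ≤ 0) : ‖cexp w - 1‖ ≤ ‖w‖ := by
  have h := Convex.norm_image_sub_le_of_norm_hasDerivWithin_le (f := cexp) (f' := cexp) (C := 1)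
    (s := {z : ℂ | z.re ≤ 0}) (x := 0) (y := w)
    (fun x _ => (Complex.hasDerivAt_exp x).hasDerivWithinAt)
    (fun x hx => by rw [Complex.norm_exp]; exact Real.exp_le_one_iff.mpr hx)
    (convex_halfSpace_re_le 0) (by simp) hw
  simpa using h

/-- the summable weights `k^{-3/2}` -/
noncomputable def rwu (k : ℕ) : ℝ := (Real.sqrt ((k:ℝ) + 1))⁻¹ * ((k:ℝ) + 1)⁻¹

lemma rwu_eq (k : ℕ) : rwu k = 1 / |(k:ℝ) + 1| ^ (3 / 2 : ℝ) := by
  have h : (0:ℝ) < (k:ℝ) + 1 := by positivity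
  rw [rwu, abs_of_pos h, Real.sqrt_eq_rpow, ← Real.rpow_neg_one ((k:ℝ) + 1), ← Real.rpow_neg h.le,
    ← Real.rpow_add h, one_div (_ ^ _), ← Real.rpow_neg h.le]
  norm_num

lemma rwu_summable : Summable rwu := by
  have := (Real.summable_one_div_nat_add_rpow 1 (3/2)).mpr (by norm_num)
  exact this.congr (fun k => (rwu_eq k).symm)

lemma rwu_nonneg (k : ℕ) : 0 ≤ rwu k := by unfold rwu; positivity

/-- terms of `E` -/
noncomputable def rwEt (k : ℕ) (a : ℂ) : ℂ :=
  ((Real.sqrt ((k:ℝ) + 1))⁻¹ : ℝ) * (cexp (-(a ^ 2 / (4 * π * ((k:ℝ) + 1)))) - 1)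

noncomputable def rwE (a : ℂ) : ℂ := ∑' k : ℕ, rwEt k a

noncomputable def rwEt' (k : ℕ) (a : ℂ) : ℂ :=
  ((Real.sqrt ((k:ℝ) + 1))⁻¹ : ℝ) * (cexp (-(a ^ 2 / (4 * π * ((k:ℝ) + 1)))) * (-(2 * a / (4 * π * ((k:ℝ) + 1)))))

lemma rwEt_deriv (k : ℕ) (a : ℂ) : HasDerivAt (rwEt k) (rwEt' k a) a := by
  have h1 : HasDerivAt (fun a : ℂ => -(a ^ 2 / (4 * π * ((k:ℝ) + 1)))) (-(2 * a / (4 * π * ((k:ℝ) + 1)))) a := by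
    have := ((hasDerivAt_pow 2 a).div_const (4 * π * ((k:ℝ) + 1) : ℂ)).fun_neg
    simpa using this
  exact ((h1.cexp).sub_const 1).const_mul _

lemma rw_arg_norm (k : ℕ) (a : ℂ) : ‖a / (4 * π * ((k:ℝ) + 1) : ℂ)‖ = ‖a‖ * (4 * π)⁻¹ * ((k:ℝ) + 1)⁻¹ := by
  have : (4 * π * ((k:ℝ) + 1) : ℂ) = ((4 * π * ((k:ℝ) + 1) : ℝ) : ℂ) := by push_cast; ring
  have hp := Real.pi_pos
  rw [this, norm_div, Complex.norm_real, Real.norm_of_nonneg (by positivity)]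
  field_simp

lemma rwEt_bound (k : ℕ) {a : ℂ} (ha : 0 ≤ (a ^ 2).re) : ‖rwEt k a‖ ≤ rwu k * ((4 * π)⁻¹ * ‖a‖ ^ 2) := by
  have hp := Real.pi_pos
  have h1 : (-(a ^ 2 / (4 * π * ((k:ℝ) + 1) : ℂ))).re ≤ 0 := by
    have : (4 * π * ((k:ℝ) + 1) : ℂ) = ((4 * π * ((k:ℝ) + 1) : ℝ) : ℂ) := by push_cast; ring
    rw [this, neg_re, div_ofReal_re, neg_nonpos]
    positivity
  rw [rwEt, norm_mul, Complex.norm_real, Real.norm_of_nonneg (by positivity)]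
  have h2 := rw_exp_sub_one h1
  rw [norm_neg, rw_arg_norm, norm_pow] at h2
  calc _ ≤ (√((k:ℝ) + 1))⁻¹ * (‖a‖ ^ 2 * (4 * π)⁻¹ * ((k:ℝ) + 1)⁻¹) := by gcongr
    _ = _ := by unfold rwu; ring

lemma rwEt_summable {a : ℂ} (ha : 0 ≤ (a ^ 2).re) : Summable (fun k => rwEt k a) :=
  Summable.of_norm_bounded (rwu_summable.mul_right _) (fun k => rwEt_bound k ha)

lemma rwE_bound {a : ℂ} (ha : 0 ≤ (a ^ 2).re) : ‖rwE a‖ ≤ (∑' k, rwu k) * ((4 * π)⁻¹ * ‖a‖ ^ 2) := by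
  rw [← tsum_mul_right]
  exact tsum_of_norm_bounded (rwu_summable.mul_right _).hasSum (fun k => rwEt_bound k ha)

lemma rwE_deriv (a : ℂ) : HasDerivAt rwE (∑' k, rwEt' k a) a := by
  have hp := Real.pi_pos
  set R := ‖a‖ + 1 with hR
  have hRp : 0 < R := by positivity
  refine hasDerivAt_tsum_of_isPreconnected (t := Metric.ball (0:ℂ) R) (y₀ := 0)
    (u := fun k => rwu k * (2 * R * (4 * π)⁻¹ * Real.exp (R ^ 2 * (4 * π)⁻¹)))
    (rwu_summable.mul_right _) Metric.isOpen_ball (convex_ball _ _).isPreconnected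
    (fun k y _ => rwEt_deriv k y) ?_ (by simpa using hRp) ?_ (by simp [hR])
  · intro k y hy
    have hy' : ‖y‖ ≤ R := by simpa using (mem_ball_zero_iff.mp hy).le
    rw [rwEt', norm_mul, norm_mul, norm_neg, rw_arg_norm, Complex.norm_real,
      Real.norm_of_nonneg (by positivity), norm_mul]
    have h1 : ‖cexp (-(y ^ 2 / (4 * π * ((k:ℝ) + 1))))‖ ≤ Real.exp (R ^ 2 * (4 * π)⁻¹) := by
      refine (Complex.norm_exp_le_exp_norm _).trans (Real.exp_le_exp.mpr ?_)
      rw [norm_neg, rw_arg_norm, norm_pow]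
      have : ((k:ℝ) + 1)⁻¹ ≤ 1 := inv_le_one_of_one_le₀ (by linarith [Nat.cast_nonneg (α := ℝ) k])
      calc _ ≤ R ^ 2 * (4 * π)⁻¹ * 1 := by gcongr
        _ = _ := by ring
    have h2 : ‖(2:ℂ)‖ = 2 := by simp
    rw [h2]
    calc _ ≤ (√((k:ℝ) + 1))⁻¹ * (Real.exp (R ^ 2 * (4 * π)⁻¹) * (2 * R * (4 * π)⁻¹ * ((k:ℝ) + 1)⁻¹)) := by
          gcongr
      _ = _ := by unfold rwu; ring
  · exact rwEt_summable (by simp)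

lemma rwE_diff : Differentiable ℂ rwE := fun a => (rwE_deriv a).differentiableAt

lemma rwE_zero : rwE 0 = 0 := by simp [rwE, rwEt]

end RW3

section RW4
open scoped FourierTransform
open MeasureTheory Set Filter Topology

lemma rw_fourier_even {f0 : ℝ → ℂ} (hinteg : IntegrableOn f0 (Ioi 0)) (ξ : ℝ) :
    𝓕 (fun x : ℝ => f0 |x|) ξ = (∫ x in Ioi (0:ℝ), f0 x * cexp (I * (1:ℝ) * (2 * π * ξ : ℝ) * x))
      + ∫ x in Ioi (0:ℝ), f0 x * cexp (I * (-1:ℝ) * (2 * π * ξ : ℝ) * x) := by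
  have hnorm : ∀ (e x : ℝ), ‖cexp (I * e * (2 * π * ξ : ℝ) * x)‖ = 1 := by
    intro e x
    rw [show I * (e:ℂ) * (2 * π * ξ : ℝ) * x = ((e * (2 * π * ξ) * x : ℝ) : ℂ) * I by push_cast; ring]
    exact Complex.norm_exp_ofReal_mul_I _
  have hI : ∀ e : ℝ, IntegrableOn (fun x : ℝ => f0 x * cexp (I * e * (2 * π * ξ : ℝ) * x)) (Ioi 0) := by
    intro e
    refine Integrable.mul_bdd (c := 1) hinteg ?_ ?_
    · exact (Continuous.aestronglyMeasurable (by fun_prop))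
    · exact ae_of_all _ (fun x => (hnorm e x).le)
  set g : ℝ → ℂ := fun x => f0 |x| * cexp (I * (-1:ℝ) * (2 * π * ξ : ℝ) * x) with hg
  have h1 : 𝓕 (fun x : ℝ => f0 |x|) ξ = ∫ x, g x := by
    rw [Real.fourier_eq']
    congr 1
    funext x
    simp only [hg, smul_eq_mul]
    rw [mul_comm]
    congr 2
    simp
    ring
  have hgp : IntegrableOn g (Ioi 0) := (hI (-1)).congr_fun (fun x hx => by
    simp only [hg]; rw [abs_of_pos hx]) measurableSet_Ioi
  have hgn : IntegrableOn (fun x => g (-x)) (Ioi 0) := (hI 1).congr_fun (fun x hx => by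
    simp only [hg]; rw [abs_neg, abs_of_pos hx]; push_cast; congr 2; ring) measurableSet_Ioi
  have hgn' : IntegrableOn g (Iic 0) := by
    have := (integrableOn_Ici_iff_integrableOn_Ioi).mpr hgn
    have h2 := (MeasurePreserving.integrableOn_comp_preimage (Measure.measurePreserving_neg (volume : Measure ℝ))
      (Homeomorph.neg ℝ).measurableEmbedding (f := g) (s := Iic 0))
    rw [← h2]
    have h3 : (Neg.neg ⁻¹' Set.Iic (0:ℝ)) = Set.Ici 0 := by ext; simp
    rw [h3]
    exact this
  rw [h1, ← intervalIntegral.integral_Iic_add_Ioi hgn' hgp]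
  congr 1
  · have := integral_comp_neg_Ioi (0:ℝ) g
    rw [neg_zero] at this
    rw [← this]
    refine setIntegral_congr_fun measurableSet_Ioi (fun x hx => ?_)
    simp only [hg]; rw [abs_neg, abs_of_pos hx]; push_cast; congr 2; ring
  · refine setIntegral_congr_fun measurableSet_Ioi (fun x hx => ?_)
    simp only [hg]; rw [abs_of_pos hx]

lemma rw_fourier_even_neg {f0 : ℝ → ℂ} (hinteg : IntegrableOn f0 (Ioi 0)) (ξ : ℝ) :
    𝓕 (fun x : ℝ => f0 |x|) (-ξ) = 𝓕 (fun x : ℝ => f0 |x|) ξ := by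
  rw [rw_fourier_even hinteg, rw_fourier_even hinteg, add_comm]
  congr 2 <;> funext x <;> congr 2 <;> push_cast <;> ring

lemma rw_hasSum_even {f : ℤ → ℂ} (hf : ∀ n, f (-n) = f n) (h : Summable (fun n : ℕ => f (n + 1))) :
    HasSum f (f 0 + 2 * ∑' n : ℕ, f (n + 1)) := by
  have h1 : HasSum (fun n : ℕ => f n) (∑' n : ℕ, f (n + 1) + f 0) := by
    have := (hasSum_nat_add_iff (f := fun n : ℕ => f n) 1).mp (by simpa using h.hasSum)
    simpa using this
  have h2 : HasSum (fun n : ℕ => f (-((n:ℤ) + 1))) (∑' n : ℕ, f (n + 1)) := by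
    simp_rw [hf]; exact h.hasSum
  have := HasSum.of_nat_of_neg_add_one h1 h2
  convert this using 1; ring

lemma rw_poisson_even {f0 : ℝ → ℂ} (hinteg : IntegrableOn f0 (Ioi 0)) (hcont : Continuous (fun x : ℝ => f0 |x|))
    {b C : ℝ} (hb : 1 < b) (hbd : ∀ x ≥ 1, ‖f0 x‖ ≤ C * x ^ (-b))
    (h2 : Summable (fun n : ℕ => 𝓕 (fun x : ℝ => f0 |x|) ((n:ℝ) + 1))) :
    f0 0 + 2 * ∑' n : ℕ, f0 ((n:ℝ) + 1) = 𝓕 (fun x : ℝ => f0 |x|) 0 +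
      2 * ∑' n : ℕ, 𝓕 (fun x : ℝ => f0 |x|) ((n:ℝ) + 1) := by
  have hO : (fun x : ℝ => f0 |x|) =O[cocompact ℝ] fun x => |x| ^ (-b) := by
    refine Asymptotics.IsBigO.of_bound C ?_
    have : ∀ᶠ x : ℝ in cocompact ℝ, 1 ≤ |x| := by
      have := tendsto_norm_cocompact_atTop (E := ℝ) |>.eventually_ge_atTop 1
      simpa using this
    filter_upwards [this] with x hx
    rw [Real.norm_of_nonneg (by positivity)]
    exact hbd _ hx
  have hs0 : Summable (fun n : ℕ => f0 ((n:ℝ) + 1)) := by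
    have h1 := (Real.summable_one_div_nat_add_rpow 1 b).mpr hb
    refine Summable.of_norm_bounded (h1.mul_left C) (fun n => ?_)
    have hp : (0:ℝ) < (n:ℝ) + 1 := by positivity
    refine (hbd _ (by linarith [Nat.cast_nonneg (α := ℝ) n])).trans (le_of_eq ?_)
    rw [abs_of_pos hp, Real.rpow_neg hp.le, one_div]
  have hF := rw_hasSum_even (f := fun n : ℤ => 𝓕 (fun x : ℝ => f0 |x|) (n:ℝ))
    (fun n => by push_cast; exact rw_fourier_even_neg hinteg _) (by simpa using h2)
  have hS := rw_hasSum_even (f := fun n : ℤ => f0 |(n:ℝ)|)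
    (fun n => by push_cast; rw [abs_neg]) (by
      refine hs0.congr (fun n => ?_)
      push_cast
      rw [abs_of_nonneg (by positivity)])
  have hP := Real.tsum_eq_tsum_fourier_of_rpow_decay_of_summable hcont hb hO hF.summable 0
  simp only [zero_add, fourier_eval_zero, mul_one, QuotientAddGroup.mk_zero] at hP
  rw [hS.tsum_eq, hF.tsum_eq] at hP
  have hab : ∀ n : ℕ, |(n:ℝ) + 1| = (n:ℝ) + 1 := fun n => abs_of_nonneg (by positivity)
  simpa [hab] using hP

lemma rw_omega {e : ℝ} (he : e = 1 ∨ e = -1) :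
    cexp ((e * (π / 4) : ℝ) * I) = (Real.sqrt 2 / 2 : ℝ) * (1 + e * I) := by
  rw [Complex.exp_mul_I, ← ofReal_cos, ← ofReal_sin]
  rcases he with h | h <;> subst h
  · rw [one_mul, Real.cos_pi_div_four, Real.sin_pi_div_four]; push_cast; ring
  · rw [neg_one_mul, Real.cos_neg, Real.sin_neg, Real.cos_pi_div_four, Real.sin_pi_div_four]; push_cast; ring

end RW4

section RW5
open MeasureTheory Set Filter Topology
open scoped FourierTransform

lemma rwA_rot {a Y e h : ℝ} (ha : 0 < a) (hY : 0 < Y) (he : e = 1 ∨ e = -1) (hh : h = 1 ∨ h = -1)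
    {s : ℂ} (hs : 0 < s.re) :
    mellin (fun v : ℝ => cexp (-(1 + h * I) * a * v + I * e * Y * (v:ℂ)^2)) s =
      cexp ((e * (π / 4) : ℝ) * I * s) * mellin (fun v : ℝ =>
        cexp (-(1 + h * I) * a * (v * cexp ((e * (π / 4) : ℝ) * I)) - Y * (v:ℂ)^2)) s := by
  have h0 := rw_rot (F := fun u => cexp (-(1 + h * I) * a * u + I * e * Y * u^2)) (by fun_prop) (e * (π / 4))
    (C := Real.exp (a ^ 2 / (4 * Y))) (c := a) ha ?_ hs
  · rw [h0]
    congr 2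
    funext v
    congr 1
    have : cexp ((e * (π / 4) : ℝ) * I) ^ 2 = e * I := by
      rw [← Complex.exp_nat_mul, show ((2:ℕ):ℂ) * ((e * (π / 4) : ℝ) * I) = e * (π/2 * I) by push_cast; ring]
      rcases he with h | h <;> subst h
      · rw [ofReal_one, one_mul, Complex.exp_pi_div_two_mul_I, one_mul]
      · push_cast
        rw [neg_one_mul, Complex.exp_neg, Complex.exp_pi_div_two_mul_I, inv_I]; ring
    rw [mul_pow, this]
    have e2 : (e:ℂ)^2 = 1 := by rcases he with h | h <;> subst h <;> simp
    linear_combination (-(1:ℂ)) * (-(I ^ 2) * (Y:ℂ) * (v:ℂ)^2) * e2 + ((Y:ℂ) * (v:ℂ)^2) * I_sq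
  · intro v hv y hy
    obtain ⟨y', hy', rfl⟩ : ∃ y' ∈ Set.Icc 0 (π/4), y = e * y' := by
      have hπ := Real.pi_pos
      rcases he with h | h <;> subst h
      · rw [Set.uIcc_of_le (by positivity)] at hy
        exact ⟨y, by simpa using hy, by ring⟩
      · rw [Set.uIcc_of_ge (by linarith)] at hy
        exact ⟨-y, by constructor <;> linarith [hy.1, hy.2], by ring⟩
    rw [Complex.norm_exp, ← Real.exp_add]
    refine Real.exp_le_exp.mpr ?_
    have hre : (-(1 + h * I) * a * (v * cexp ((e * y' : ℝ) * I)) + I * e * Y * (v * cexp ((e * y' : ℝ) * I))^2).re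
        = -(a * v * (Real.cos (e * y') - h * Real.sin (e * y'))) - e * Y * v^2 * Real.sin (2 * (e * y')) := by
      rw [Complex.exp_mul_I, ← ofReal_cos, ← ofReal_sin, Real.sin_two_mul]
      generalize Real.cos (e * y') = c0
      generalize Real.sin (e * y') = s0
      simp [pow_two]
      ring
    rw [hre]
    have h1 : -(a * v * (Real.cos (e * y') - h * Real.sin (e * y'))) - e * Y * v^2 * Real.sin (2 * (e * y'))
       = -(a * v * (Real.cos y' - h * e * Real.sin y')) - Y * v^2 * Real.sin (2 * y') := by
      rcases he with h | h <;> subst h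
      · simp
      · rw [show 2 * (-1 * y') = - (2 * y') by ring]
        simp
    rw [h1]
    have hs0 : 0 ≤ Real.sin y' := Real.sin_nonneg_of_nonneg_of_le_pi hy'.1 (by linarith [hy'.2, Real.pi_pos])
    have hcs : Real.sin y' ≤ Real.cos y' := by
      rw [← Real.sin_pi_div_two_sub]
      apply Real.sin_le_sin_of_le_of_le_pi_div_two <;> linarith [hy'.2, hy'.1, Real.pi_pos]
    have hc1 := Real.cos_le_one y'
    have hsc := Real.sin_sq_add_cos_sq y'
    rw [Real.sin_two_mul]
    set S := Real.sin y'
    set Q := Real.cos y'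
    have h2 : Q - S ≤ Q - h * e * S := by
      have : h * e ≤ 1 := by
        rcases he with h | h <;> rcases hh with h' | h' <;> subst h <;> subst h' <;> norm_num
      nlinarith
    have h3 : 1 - 2 * S * Q ≤ Q - S := by nlinarith
    have h4 : a * v * (1 - 2 * S * Q) ≤ a * v * (Q - h * e * S) := by
      have := h3.trans h2
      gcongr
    have h5 : a * v - Y * v^2 ≤ a^2 / (4 * Y) := by
      rw [le_div_iff₀ (by positivity)]
      nlinarith [sq_nonneg (2 * Y * v - a)]
    have h6 : 0 ≤ 2 * S * Q := by nlinarith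
    have h7 : 2 * S * Q ≤ 1 := by nlinarith [sq_nonneg (S - Q)]
    have h8 : 2 * S * Q * (a * v - Y * v^2) ≤ a^2 / (4 * Y) := by
      have h9 : 0 ≤ a^2 / (4 * Y) := by positivity
      nlinarith
    nlinarith

lemma rw_gauss_int {Y : ℝ} (hY : 0 < Y) (b : ℝ) :
    (∫ v : ℝ, I * v * cexp (-(I * b * v) - Y * (v:ℂ)^2)) =
      (b / (2 * Y) * Real.sqrt (π / Y) * Real.exp (-b ^ 2 / (4 * Y)) : ℝ)
    ∧ Integrable (fun v : ℝ => I * v * cexp (-(I * b * v) - Y * (v:ℂ)^2)) := by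
  have hb1 : ∀ v : ℝ, cexp (-(I * b * v) - Y * (v:ℂ)^2) = cexp (-Y * (v:ℂ)^2) * cexp ((-(b * v) : ℝ) * I) := by
    intro v; rw [← Complex.exp_add]; congr 1; push_cast; ring
  have hi1 : Integrable (fun v : ℝ => cexp (-(I * b * v) - Y * (v:ℂ)^2)) := by
    simp_rw [hb1]
    refine Integrable.mul_bdd (c := 1) (integrable_cexp_neg_mul_sq (by simpa using hY)) ?_ ?_
    · exact (Continuous.aestronglyMeasurable (by fun_prop))
    · exact ae_of_all _ (fun x => (Complex.norm_exp_ofReal_mul_I _).le)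
  have hi2 : Integrable (fun v : ℝ => v * cexp (-(I * b * v) - Y * (v:ℂ)^2)) := by
    simp_rw [hb1, ← mul_assoc]
    refine Integrable.mul_bdd (c := 1) (integrable_mul_cexp_neg_mul_sq (by simpa using hY)) ?_ ?_
    · exact (Continuous.aestronglyMeasurable (by fun_prop))
    · exact ae_of_all _ (fun x => (Complex.norm_exp_ofReal_mul_I _).le)
  have hd : ∀ v : ℝ, HasDerivAt (fun v : ℝ => cexp (-(I * b * v) - Y * (v:ℂ)^2))
      ((-(I * b)) * cexp (-(I * b * v) - Y * (v:ℂ)^2) - 2 * Y * (v * cexp (-(I * b * v) - Y * (v:ℂ)^2))) v := by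
    intro v
    have h1 : HasDerivAt (fun z : ℂ => cexp (-(I * b * z) - Y * z^2)) (cexp (-(I * b * v) - Y * (v:ℂ)^2) * 
       (-(I * b * 1) - Y * (2 * v))) (v:ℂ) := by
      apply HasDerivAt.cexp
      have h2 := ((hasDerivAt_id (v:ℂ)).const_mul (I * b)).neg
      have h3 := ((hasDerivAt_pow 2 (v:ℂ))).const_mul (Y:ℂ)
      have h4 := h2.sub h3
      simp only [Nat.cast_ofNat, Nat.add_one_sub_one, pow_one] at h4
      exact h4
    have := h1.comp_ofReal
    convert this using 1
    ring
  have h0 := integral_eq_zero_of_hasDerivAt_of_integrable hd ((hi1.const_mul _).sub (hi2.const_mul _)) hi1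
  rw [integral_sub (hi1.const_mul _) (hi2.const_mul _), integral_const_mul, integral_const_mul] at h0
  have hq := integral_cexp_quadratic (b := -(Y:ℂ)) (by simpa using hY) (-(I * b)) 0
  have hq' : ∫ v : ℝ, cexp (-(I * b * v) - Y * (v:ℂ)^2) = (Real.sqrt (π / Y) * Real.exp (-b ^ 2 / (4 * Y)) : ℝ) := by
    rw [show (fun v : ℝ => cexp (-(I * b * v) - Y * (v:ℂ)^2)) = fun v : ℝ => cexp (-(Y:ℂ) * v^2 + -(I*b) * v + 0) by
      funext v; congr 1; ring, hq]
    rw [neg_neg, Real.sqrt_eq_rpow]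
    push_cast
    rw [Complex.ofReal_cpow (by positivity)]
    push_cast
    congr 2
    rw [neg_sq, mul_pow, I_sq]
    field_simp
    ring
  constructor
  · simp_rw [mul_assoc]
    rw [integral_const_mul]
    rw [hq'] at h0
    have hY' : (Y:ℂ) ≠ 0 := by exact_mod_cast hY.ne'
    have h5 : (∫ v : ℝ, v * cexp (-(I * (b * v)) - Y * (v:ℂ)^2)) = (∫ v : ℝ, v * cexp (-(I * b * v) - Y * (v:ℂ)^2)) := by
      simp_rw [mul_assoc]
    rw [h5]
    set J := ∫ v : ℝ, v * cexp (-(I * b * v) - Y * (v:ℂ)^2)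
    push_cast
    push_cast at h0
    generalize cexp (-b ^ 2 / (4 * Y)) = E at *
    field_simp
    linear_combination (-I) * h0 - (b * (Real.sqrt (π / Y) * E)) * I_sq
  · simp_rw [mul_assoc]
    refine Integrable.const_mul ?_ _
    simpa [mul_assoc] using hi2

end RW5

section RW6
open MeasureTheory Set Filter Topology
open scoped FourierTransform

noncomputable def rwf (a x : ℝ) : ℂ := ((Real.exp (-(a * Real.sqrt x)) * Real.cos (a * Real.sqrt x) : ℝ) : ℂ)

lemma rwA_mc {a Y e h : ℝ} (ha : 0 < a)
    {s : ℂ} (hs : 0 < s.re) :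
    MellinConvergent (fun v : ℝ => cexp (-(1 + h * I) * a * v + I * e * Y * (v:ℂ)^2)) s := by
  refine rw_mc (C := 1) (c := a) (Continuous.continuousOn (by fun_prop)) ha (fun v hv => ?_) hs
  rw [Complex.norm_exp, one_mul]
  refine le_of_eq ?_
  congr 1
  simp [pow_two]

lemma rwf_sq {a u : ℝ} (hu : 0 < u) :
    2 * rwf a (u ^ 2) = cexp (-(1 + (1:ℝ) * I) * a * u) + cexp (-(1 + (-1:ℝ) * I) * a * u) := by
  rw [rwf, Real.sqrt_sq hu.le]
  push_cast
  rw [Complex.cos, show -(1 + 1 * I) * a * u = -(a * u) + -(a * u) * I by ring, 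
    show -(1 + -1 * I) * a * u = -(a * u) + (a * u) * I by ring, Complex.exp_add, Complex.exp_add]
  ring

lemma rwA_int {a Y e : ℝ} (ha : 0 < a) :
    ∫ x in Ioi (0:ℝ), rwf a x * cexp (I * e * Y * x) =
      mellin (fun v : ℝ => cexp (-(1 + (1:ℝ) * I) * a * v + I * e * Y * (v:ℂ)^2)) 2 +
      mellin (fun v : ℝ => cexp (-(1 + (-1:ℝ) * I) * a * v + I * e * Y * (v:ℂ)^2)) 2 := by
  have hs : 0 < (2:ℂ).re := by norm_num
  have h1 := rwA_mc (Y := Y) (e := e) (h := 1) ha hs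
  have h2 := rwA_mc (Y := Y) (e := e) (h := -1) ha hs
  rw [mellin, mellin, ← integral_add h1 h2, ← integral_comp_rpow_Ioi_of_pos (p := 2) (by norm_num)]
  refine setIntegral_congr_fun measurableSet_Ioi (fun v hv => ?_)
  have hv : 0 < v := hv
  simp only [Real.rpow_two, smul_eq_mul, real_smul]
  rw [show (2:ℝ) - 1 = 1 by norm_num, Real.rpow_one, show (2:ℂ) - 1 = 1 by norm_num, cpow_one,
    Complex.exp_add, Complex.exp_add, ← mul_add, ← add_mul, ← rwf_sq hv]
  push_cast
  ring

lemma rwA_FT0 {a e : ℝ} (ha : 0 < a) :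
    ∫ x in Ioi (0:ℝ), rwf a x * cexp (I * e * (0:ℝ) * x) = 0 := by
  rw [rwA_int ha]
  have hs : 0 < (2:ℂ).re := by norm_num
  have key : ∀ h : ℝ, h = 1 ∨ h = -1 → mellin (fun v : ℝ => cexp (-(1 + h * I) * a * v + I * e * (0:ℝ) * (v:ℂ)^2)) 2
     = cexp (-((h * (π / 4) : ℝ) * I * 2)) * ((Real.sqrt 2 * a : ℝ):ℂ) ^ (-2:ℂ) * Complex.Gamma 2 := by
    intro h hh
    rw [← rw_gamma_ray (by positivity) ?_ hs]
    · congr 1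
      funext v
      congr 1
      rw [rw_omega hh]
      have h2 : (Real.sqrt 2 : ℂ) ^ 2 = 2 := by exact_mod_cast Real.sq_sqrt (by norm_num : (0:ℝ) ≤ 2)
      push_cast
      linear_combination (a * (1 + h * I) * v / 2 : ℂ) * h2
    · have := Real.pi_pos
      rcases hh with h | h <;> subst h <;> simp [abs_of_pos this, abs_div]
  rw [key 1 (Or.inl rfl), key (-1) (Or.inr rfl)]
  have e1 : cexp (-((1 * (π / 4) : ℝ) * I * 2)) = - I := by
    rw [show -(((1 * (π / 4) : ℝ):ℂ) * I * 2) = -(π/2 * I) by push_cast; ring, Complex.exp_neg, Complex.exp_pi_div_two_mul_I, inv_I]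
  have e2 : cexp (-((-1 * (π / 4) : ℝ) * I * 2)) = I := by
    rw [show -(((-1 * (π / 4) : ℝ):ℂ) * I * 2) = (π/2 * I) by push_cast; ring, Complex.exp_pi_div_two_mul_I]
  rw [e1, e2]; ring

lemma rwA_FT {a Y : ℝ} (ha : 0 < a) (hY : 0 < Y) :
    (∫ x in Ioi (0:ℝ), rwf a x * cexp (I * (1:ℝ) * Y * x)) + ∫ x in Ioi (0:ℝ), rwf a x * cexp (I * (-1:ℝ) * Y * x)
    = (Real.sqrt 2 * a / (2 * Y) * Real.sqrt (π / Y) * Real.exp (-(Real.sqrt 2 * a) ^ 2 / (4 * Y)) : ℝ) := by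
  have hs : 0 < (2:ℂ).re := by norm_num
  rw [rwA_int ha, rwA_int ha]
  rw [rwA_rot ha hY (Or.inl rfl) (Or.inl rfl) hs, rwA_rot ha hY (Or.inl rfl) (Or.inr rfl) hs,
    rwA_rot ha hY (Or.inr rfl) (Or.inl rfl) hs, rwA_rot ha hY (Or.inr rfl) (Or.inr rfl) hs]
  have e1 : cexp (((1 * (π / 4) : ℝ) * I * 2)) = I := by
    rw [show (((1 * (π / 4) : ℝ):ℂ) * I * 2) = (π/2 * I) by push_cast; ring, Complex.exp_pi_div_two_mul_I]
  have e2 : cexp (((-1 * (π / 4) : ℝ) * I * 2)) = -I := by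
    rw [show (((-1 * (π / 4) : ℝ):ℂ) * I * 2) = -(π/2 * I) by push_cast; ring, Complex.exp_neg, Complex.exp_pi_div_two_mul_I, inv_I]
  rw [e1, e2]
  obtain ⟨g1, g2⟩ := rw_gauss_int hY (Real.sqrt 2 * a)
  rw [← g1]
  have h2 : (Real.sqrt 2 : ℂ) ^ 2 = 2 := by exact_mod_cast Real.sq_sqrt (by norm_num : (0:ℝ) ≤ 2)
  have t1 : (fun v : ℝ => cexp (-(1 + (1:ℝ) * I) * a * (v * cexp ((1 * (π / 4) : ℝ) * I)) - Y * (v:ℂ)^2))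
    = fun v : ℝ => cexp (-(I * (Real.sqrt 2 * a : ℝ) * v) - Y * (v:ℂ)^2) := by
    funext v; rw [rw_omega (Or.inl rfl)]; congr 1; push_cast; linear_combination (- Real.sqrt 2 / 2 * a * v : ℂ) * I_sq
  have t2 : (fun v : ℝ => cexp (-(1 + (-1:ℝ) * I) * a * (v * cexp ((1 * (π / 4) : ℝ) * I)) - Y * (v:ℂ)^2))
    = fun v : ℝ => cexp (-((Real.sqrt 2 * a : ℝ) * v) - Y * (v:ℂ)^2) := by
    funext v; rw [rw_omega (Or.inl rfl)]; congr 1; push_cast; linear_combination (Real.sqrt 2 / 2 * a * v : ℂ) * I_sq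
  have t3 : (fun v : ℝ => cexp (-(1 + (1:ℝ) * I) * a * (v * cexp ((-1 * (π / 4) : ℝ) * I)) - Y * (v:ℂ)^2))
    = fun v : ℝ => cexp (-((Real.sqrt 2 * a : ℝ) * v) - Y * (v:ℂ)^2) := by
    funext v; rw [rw_omega (Or.inr rfl)]; congr 1; push_cast; linear_combination (Real.sqrt 2 / 2 * a * v : ℂ) * I_sq
  have t4 : (fun v : ℝ => cexp (-(1 + (-1:ℝ) * I) * a * (v * cexp ((-1 * (π / 4) : ℝ) * I)) - Y * (v:ℂ)^2))
    = fun v : ℝ => cexp ((I * (Real.sqrt 2 * a : ℝ) * v) - Y * (v:ℂ)^2) := by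
    funext v; rw [rw_omega (Or.inr rfl)]; congr 1; push_cast; linear_combination (- Real.sqrt 2 / 2 * a * v : ℂ) * I_sq
  rw [t1, t2, t3, t4]
  generalize Real.sqrt 2 * a = b at *
  rw [← intervalIntegral.integral_Iic_add_Ioi (b := (0:ℝ)) g2.integrableOn g2.integrableOn]
  have h3 := integral_comp_neg_Ioi (0:ℝ) (fun v : ℝ => I * v * cexp (-(I * b * v) - Y * (v:ℂ)^2))
  rw [neg_zero] at h3
  rw [← h3]
  have h4 : (∫ v in Ioi (0:ℝ), I * (v:ℝ) * cexp (-(I * b * v) - Y * (v:ℂ)^2)) = I * mellin (fun v : ℝ => cexp (-(I * b * v) - Y * (v:ℂ)^2)) 2 := by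
    rw [mellin, ← integral_const_mul]
    refine setIntegral_congr_fun measurableSet_Ioi (fun v hv => ?_)
    simp only [smul_eq_mul]
    rw [show (2:ℂ) - 1 = 1 by norm_num, cpow_one]; ring
  have h5 : (∫ v in Ioi (0:ℝ), I * (-v:ℝ) * cexp (-(I * b * (-v:ℝ)) - Y * ((-v:ℝ):ℂ)^2)) = -I * mellin (fun v : ℝ => cexp ((I * b * v) - Y * (v:ℂ)^2)) 2 := by
    rw [mellin, ← integral_const_mul]
    refine setIntegral_congr_fun measurableSet_Ioi (fun v hv => ?_)
    simp only [smul_eq_mul]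
    rw [show (2:ℂ) - 1 = 1 by norm_num, cpow_one]; push_cast
    rw [show -(I * b * -(v:ℂ)) - Y * (-(v:ℂ))^2 = (I * b * v) - Y * (v:ℂ)^2 by ring]; ring
  rw [h4, h5]
  ring

lemma rw_exp_sqrt_decay {a : ℝ} (ha : 0 < a) {x : ℝ} (hx : 1 ≤ x) :
    Real.exp (-(a * Real.sqrt x)) ≤ 24 / a ^ 4 * x ^ (-2:ℝ) := by
  have h0 : 0 ≤ x := by linarith
  have h1 := Real.pow_div_factorial_le_exp (a * Real.sqrt x) (by positivity) 4
  have h2 : (a * Real.sqrt x) ^ 4 = a ^ 4 * x ^ 2 := by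
    rw [mul_pow, show Real.sqrt x ^ 4 = (Real.sqrt x ^ 2) ^ 2 by ring, Real.sq_sqrt h0]
  rw [h2] at h1
  rw [Real.exp_neg, Real.rpow_neg h0, Real.rpow_two]
  have h3 : 0 < a ^ 4 * x ^ 2 / (Nat.factorial 4 : ℝ) := by positivity
  calc (Real.exp (a * Real.sqrt x))⁻¹ ≤ (a ^ 4 * x ^ 2 / (Nat.factorial 4 : ℝ))⁻¹ := inv_anti₀ h3 h1
    _ = _ := by
      simp [Nat.factorial]; field_simp

lemma rwf_norm (a x : ℝ) : ‖rwf a x‖ ≤ Real.exp (-(a * Real.sqrt x)) := by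
  rw [rwf, Complex.norm_real, norm_mul, Real.norm_of_nonneg (Real.exp_pos _).le]
  exact mul_le_of_le_one_right (Real.exp_pos _).le (Real.abs_cos_le_one _)

lemma rwf_cont (a : ℝ) : Continuous (rwf a) := by unfold rwf; fun_prop

lemma rwf_int {a : ℝ} (ha : 0 < a) : IntegrableOn (rwf a) (Ioi 0) := by
  have h := (integrableOn_Ioi_comp_rpow_iff' (rwf a) (p := 2) (by norm_num)).mp ?_
  · exact h
  have h2 : MellinConvergent (fun v : ℝ => rwf a (v ^ 2)) 2 := by
    refine rw_mc (C := 1) (c := a) ?_ ha (fun v hv => ?_) (by norm_num)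
    · exact ((rwf_cont a).comp (by fun_prop)).continuousOn
    · refine (rwf_norm _ _).trans (le_of_eq ?_)
      rw [Real.sqrt_sq (le_of_lt hv)]; ring_nf
  refine IntegrableOn.congr_fun h2 (fun v hv => ?_) measurableSet_Ioi
  simp only [smul_eq_mul, real_smul]
  rw [show (2:ℝ) - 1 = 1 by norm_num, Real.rpow_one, show (2:ℂ) - 1 = 1 by norm_num, cpow_one, Real.rpow_two]

lemma rwA_term {a : ℝ} (k : ℕ) :
    (Real.sqrt 2 * a / (2 * (2 * π * ((k:ℝ) + 1))) * Real.sqrt (π / (2 * π * ((k:ℝ) + 1))) *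
      Real.exp (-(Real.sqrt 2 * a) ^ 2 / (4 * (2 * π * ((k:ℝ) + 1)))) : ℝ) = - (1 / 2 : ℂ) * rwEt' k a := by
  have hπ := Real.pi_pos
  have hk : (0:ℝ) < (k:ℝ) + 1 := by positivity
  have h2 : (Real.sqrt 2) ^ 2 = 2 := Real.sq_sqrt (by norm_num : (0:ℝ) ≤ 2)
  have e1 : -(Real.sqrt 2 * a) ^ 2 / (4 * (2 * π * ((k:ℝ) + 1))) = -(a ^ 2 / (4 * π * ((k:ℝ) + 1))) := by
    rw [mul_pow, h2]; field_simp
  have e2 : Real.sqrt (π / (2 * π * ((k:ℝ) + 1))) = (Real.sqrt 2)⁻¹ * (Real.sqrt ((k:ℝ) + 1))⁻¹ := by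
    rw [show π / (2 * π * ((k:ℝ) + 1)) = 2⁻¹ * ((k:ℝ) + 1)⁻¹ by field_simp, Real.sqrt_mul (by norm_num), Real.sqrt_inv, Real.sqrt_inv]
  rw [e1, e2, rwEt']
  have h3 : Real.sqrt 2 * a / (2 * (2 * π * ((k:ℝ) + 1))) * ((Real.sqrt 2)⁻¹ * (Real.sqrt ((k:ℝ) + 1))⁻¹) =
     (Real.sqrt ((k:ℝ) + 1))⁻¹ * (2 * a / (4 * π * (k + 1))) / 2 := by
    have : Real.sqrt 2 ≠ 0 := by positivity
    have : Real.sqrt (k + 1) ≠ 0 := by positivity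
    field_simp
    ring
  rw [h3]
  push_cast
  ring

lemma rwEt'_bound (k : ℕ) (a : ℝ) : ‖rwEt' k a‖ ≤ rwu k * (|a| / (2 * π)) := by
  have hπ := Real.pi_pos
  have hk : (0:ℝ) < (k:ℝ) + 1 := by positivity
  have h0 : rwEt' k a = ((Real.sqrt ((k:ℝ) + 1))⁻¹ * (Real.exp (-(a ^ 2 / (4 * π * ((k:ℝ) + 1)))) * (-(2 * a / (4 * π * ((k:ℝ) + 1))))) : ℝ) := by
    rw [rwEt']; push_cast; rfl
  rw [h0, Complex.norm_real, norm_mul, norm_mul, norm_neg, rwu, Real.norm_of_nonneg (by positivity : 0 ≤ (Real.sqrt ((k:ℝ) + 1))⁻¹),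
    Real.norm_of_nonneg (Real.exp_pos _).le, mul_assoc (Real.sqrt ((k:ℝ) + 1))⁻¹]
  refine mul_le_mul_of_nonneg_left ?_ (by positivity)
  rw [Real.norm_eq_abs, abs_div, abs_mul, abs_of_pos (by positivity : 0 < 4 * π * ((k:ℝ) + 1)), abs_of_pos (by norm_num : (0:ℝ) < 2)]
  have : Real.exp (-(a ^ 2 / (4 * π * ((k:ℝ) + 1)))) ≤ 1 := Real.exp_le_one_iff.mpr (by
    rw [neg_nonpos]; positivity)
  calc _ ≤ 1 * (2 * |a| / (4 * π * ((k:ℝ) + 1))) := by gcongr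
    _ = _ := by field_simp; ring

lemma rwEt'_summable (a : ℝ) : Summable (fun k => rwEt' k a) :=
  Summable.of_norm_bounded (rwu_summable.mul_right _) (fun k => rwEt'_bound k a)

lemma rwA {a : ℝ} (ha : 0 < a) :
    1 + 2 * ∑' n : ℕ, rwf a ((n:ℝ) + 1) = - ∑' k, rwEt' k a := by
  have hF : ∀ n : ℕ, 𝓕 (fun x : ℝ => rwf a |x|) ((n:ℝ) + 1) = -(1/2:ℂ) * rwEt' n a := by
    intro n
    rw [rw_fourier_even (rwf_int ha), rwA_FT ha (by have := Real.pi_pos; positivity), rwA_term]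
  have hF0 : 𝓕 (fun x : ℝ => rwf a |x|) 0 = 0 := by
    rw [rw_fourier_even (rwf_int ha), mul_zero, rwA_FT0 ha, rwA_FT0 ha, add_zero]
  have h := rw_poisson_even (rwf_int ha) ((rwf_cont a).comp continuous_abs) (b := 2) (C := 24 / a ^ 4) (by norm_num)
    (fun x hx => (rwf_norm _ _).trans (rw_exp_sqrt_decay ha hx)) (by
      simp_rw [hF]; exact (rwEt'_summable a).mul_left _)
  rw [hF0] at h
  simp_rw [hF] at h
  rw [tsum_mul_left] at h
  rw [show rwf a 0 = 1 by simp [rwf]] at h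
  rw [h]; ring

end RW6

section RW7
open MeasureTheory Set Filter Topology

noncomputable def rwSt (m : ℕ) (a : ℝ) : ℝ :=
  (Real.sqrt ((m:ℝ) + 1))⁻¹ * (Real.exp (-(a * Real.sqrt ((m:ℝ) + 1))) * Real.sin (π / 4 - a * Real.sqrt ((m:ℝ) + 1)))

noncomputable def rwS (a : ℝ) : ℂ := ∑' m : ℕ, (rwSt m a : ℂ)

lemma rwSt_deriv (m : ℕ) (a : ℝ) : HasDerivAt (fun a : ℝ => (rwSt m a : ℂ)) (-(Real.sqrt 2) * rwf a ((m:ℝ) + 1)) a := by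
  have hr : Real.sqrt ((m:ℝ) + 1) ≠ 0 := by positivity
  unfold rwf
  have h : HasDerivAt (rwSt m) (-(Real.sqrt 2) * (Real.exp (-(a * Real.sqrt ((m:ℝ) + 1))) * Real.cos (a * Real.sqrt ((m:ℝ) + 1)))) a := by
    unfold rwSt
    generalize Real.sqrt ((m:ℝ) + 1) = r at *
    have h1 : HasDerivAt (fun a : ℝ => a * r) r a := by simpa using (hasDerivAt_id a).mul_const r
    have h2 := (h1.fun_neg).exp
    have h3 := (h1.const_sub (π / 4)).sin
    have h4 := (h2.mul h3).const_mul r⁻¹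
    refine HasDerivAt.congr_deriv h4 ?_
    rw [Real.sin_sub, Real.cos_sub, Real.sin_pi_div_four, Real.cos_pi_div_four]
    field_simp
    ring
  have := h.ofReal_comp
  convert this using 1
  push_cast; ring

lemma rw_exp_sqrt_summable {a : ℝ} (ha : 0 < a) : Summable (fun m : ℕ => Real.exp (-(a * Real.sqrt ((m:ℝ) + 1)))) := by
  have h1 := (Real.summable_one_div_nat_add_rpow 1 2).mpr (by norm_num)
  refine Summable.of_nonneg_of_le (fun _ => (Real.exp_pos _).le) (fun m => ?_) (h1.mul_left (24 / a ^ 4))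
  have hm : (0:ℝ) ≤ m := Nat.cast_nonneg m
  refine (rw_exp_sqrt_decay ha (by linarith)).trans (le_of_eq ?_)
  rw [abs_of_nonneg (by positivity), Real.rpow_neg (by positivity), one_div]

lemma rwSt_bound (m : ℕ) (a : ℝ) : ‖(rwSt m a : ℂ)‖ ≤ Real.exp (-(a * Real.sqrt ((m:ℝ) + 1))) := by
  have hm : (0:ℝ) ≤ m := Nat.cast_nonneg m
  have hr : 1 ≤ Real.sqrt ((m:ℝ) + 1) := Real.one_le_sqrt.mpr (by linarith)
  rw [Complex.norm_real, rwSt, norm_mul, norm_mul, Real.norm_of_nonneg (by positivity), Real.norm_of_nonneg (Real.exp_pos _).le]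
  calc _ ≤ 1 * (Real.exp (-(a * Real.sqrt ((m:ℝ) + 1))) * 1) := by
        gcongr
        · exact inv_le_one_of_one_le₀ hr
        · exact Real.abs_sin_le_one _
    _ = _ := by ring

lemma rwSt_summable {a : ℝ} (ha : 0 < a) : Summable (fun m => (rwSt m a : ℂ)) :=
  Summable.of_norm_bounded (rw_exp_sqrt_summable ha) (fun m => rwSt_bound m a)

lemma rwS_deriv {a : ℝ} (ha : 0 < a) :
    HasDerivAt rwS (∑' m : ℕ, -(Real.sqrt 2 : ℂ) * rwf a ((m:ℝ) + 1)) a := by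
  refine hasDerivAt_tsum_of_isPreconnected (t := Set.Ioi (a / 2)) (y₀ := a)
    (u := fun m : ℕ => Real.sqrt 2 * Real.exp (-(a / 2 * Real.sqrt ((m:ℝ) + 1))))
    ((rw_exp_sqrt_summable (by positivity)).mul_left _) isOpen_Ioi isPreconnected_Ioi
    (fun m y hy => rwSt_deriv m y) (fun m y hy => ?_) (by simp only [Set.mem_Ioi]; linarith) (rwSt_summable ha)
    (by simp only [Set.mem_Ioi]; linarith)
  rw [norm_mul, norm_neg, Complex.norm_real, Real.norm_of_nonneg (by positivity)]
  gcongr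
  refine (rwf_norm _ _).trans ?_
  have hy : a / 2 < y := hy
  gcongr

lemma rwS_const : ∃ K : ℂ, ∀ a : ℝ, 0 < a → (Real.sqrt 2 : ℂ) * rwS a = K + a + rwE a := by
  have h2 : (Real.sqrt 2 : ℂ) ^ 2 = 2 := by exact_mod_cast Real.sq_sqrt (by norm_num : (0:ℝ) ≤ 2)
  have hd : ∀ a ∈ Set.Ioi (0:ℝ), HasDerivAt (fun a : ℝ => (Real.sqrt 2 : ℂ) * rwS a - a - rwE a) 0 a := by
    intro a ha
    have h1 := ((rwS_deriv ha).const_mul (Real.sqrt 2 : ℂ)).sub (ofRealCLM.hasDerivAt (x := a))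
    have h3 := h1.sub ((rwE_deriv (a:ℂ)).comp_ofReal)
    refine h3.congr_deriv ?_
    rw [tsum_mul_left]
    have := rwA ha
    simp only [ofRealCLM_apply, ofReal_one]
    linear_combination -(∑' n : ℕ, rwf a ((n:ℝ) + 1)) * h2 - this
  obtain ⟨K, hK⟩ := isOpen_Ioi.exists_is_const_of_deriv_eq_zero isPreconnected_Ioi
    (fun a ha => (hd a ha).differentiableAt.differentiableWithinAt) (fun a ha => (hd a ha).deriv)
  refine ⟨K, fun a ha => ?_⟩
  have := hK a ha
  linear_combination this

noncomputable def rwK : ℂ := Classical.choose rwS_const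
lemma rwK_spec {a : ℝ} (ha : 0 < a) : (Real.sqrt 2 : ℂ) * rwS a = rwK + a + rwE a := Classical.choose_spec rwS_const a ha

noncomputable def rwD (a : ℂ) : ℂ := (rwK + a + rwE a) / (Real.sqrt 2 : ℂ)

lemma rw_sqrt2_ne : (Real.sqrt 2 : ℂ) ≠ 0 := by
  exact_mod_cast (by positivity : Real.sqrt 2 ≠ 0)

lemma rwD_eq {a : ℝ} (ha : 0 < a) : rwD a = rwS a := by
  rw [rwD, ← rwK_spec ha, mul_div_cancel_left₀ _ rw_sqrt2_ne]

lemma rwD_diff : Differentiable ℂ rwD := by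
  intro a
  exact (((differentiableAt_const _).add differentiableAt_id).add (rwE_deriv a).differentiableAt).div_const _

lemma rwS_decay {a : ℝ} (ha : 1 ≤ a) : ‖rwS a‖ ≤ (∑' m : ℕ, Real.exp (-(1/2 * Real.sqrt ((m:ℝ) + 1)))) * Real.exp (-(1/2) * a) := by
  rw [← tsum_mul_right]
  refine tsum_of_norm_bounded ((rw_exp_sqrt_summable (by norm_num)).mul_right _).hasSum (fun m => ?_)
  refine (rwSt_bound m a).trans ?_
  rw [← Real.exp_add]
  refine Real.exp_le_exp.mpr ?_
  have hm : (0:ℝ) ≤ m := Nat.cast_nonneg m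
  have hr : 1 ≤ Real.sqrt ((m:ℝ) + 1) := Real.one_le_sqrt.mpr (by linarith)
  nlinarith

lemma rwD_decay : ∃ C : ℝ, ∀ a : ℝ, 0 ≤ a → ‖rwD a‖ ≤ C * Real.exp (-(1/2) * a) := by
  obtain ⟨B, hB⟩ := (isCompact_Icc (a := (0:ℝ)) (b := 1)).exists_bound_of_continuousOn
    (f := fun a : ℝ => rwD a) (rwD_diff.continuous.comp continuous_ofReal).continuousOn
  set A := ∑' m : ℕ, Real.exp (-(1/2 * Real.sqrt ((m:ℝ) + 1))) with hA
  have hA0 : 0 ≤ A := tsum_nonneg (fun _ => (Real.exp_pos _).le)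
  have hB0 : 0 ≤ B := (norm_nonneg _).trans (hB 0 (by simp))
  refine ⟨A + B * Real.exp (1/2), fun a ha => ?_⟩
  rw [add_mul]
  rcases le_total a 1 with h | h
  · have h1 := hB a ⟨ha, h⟩
    have h2 : B * 1 ≤ B * Real.exp (1/2) * Real.exp (-(1/2) * a) := by
      rw [mul_assoc, ← Real.exp_add]
      gcongr
      exact Real.one_le_exp (by linarith)
    have h3 : 0 ≤ A * Real.exp (-(1/2) * a) := by positivity
    linarith
  · rw [rwD_eq (by linarith)]
    have h3 : 0 ≤ B * Real.exp (1/2) * Real.exp (-(1/2) * a) := by positivity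
    linarith [rwS_decay h]

lemma rwD_poly : ∃ C : ℝ, ∀ a : ℂ, 0 ≤ (a ^ 2).re → ‖rwD a‖ ≤ C * (1 + ‖a‖ ^ 2) := by
  have hπ := Real.pi_pos
  have hu : 0 ≤ ∑' k, rwu k := tsum_nonneg rwu_nonneg
  refine ⟨(‖rwK‖ + 1 + (∑' k, rwu k) * (4 * π)⁻¹), fun a ha => ?_⟩
  have h2 : 1 ≤ Real.sqrt 2 := Real.one_le_sqrt.mpr (by norm_num)
  rw [rwD, norm_div, Complex.norm_real, Real.norm_of_nonneg (by positivity)]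
  refine (div_le_self (norm_nonneg _) h2).trans ?_
  have h3 := rwE_bound ha
  have h4 := norm_add₃_le (a := rwK) (b := a) (c := rwE a)
  have h5 : ‖a‖ ≤ 1 + ‖a‖ ^ 2 := by nlinarith [sq_nonneg (‖a‖ - 1)]
  have h6 : 0 ≤ (∑' k, rwu k) * (4 * π)⁻¹ := by positivity
  nlinarith [norm_nonneg rwK, sq_nonneg ‖a‖, mul_nonneg (norm_nonneg rwK) (sq_nonneg ‖a‖)]

end RW7

section RW8
open MeasureTheory Set Filter Topology

lemma rw_cpow {x : ℝ} (hx : 0 < x) (s : ℂ) : (x:ℂ) ^ s = cexp (s * (Real.log x : ℝ)) := by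
  rw [cpow_def_of_ne_zero (by exact_mod_cast hx.ne'), ← ofReal_log hx.le, mul_comm]

lemma rw_sqrt_cpow {x : ℝ} (hx : 0 < x) (s : ℂ) : (Real.sqrt x:ℂ) ^ s = (x:ℂ) ^ (s / 2) := by
  rw [rw_cpow (Real.sqrt_pos.mpr hx), rw_cpow hx, Real.log_sqrt hx.le]
  push_cast; congr 1; ring

lemma rw_sqrt_inv {x : ℝ} (hx : 0 < x) : (((Real.sqrt x)⁻¹:ℝ) : ℂ) = (x:ℂ) ^ (-1/2:ℂ) := by
  rw [← rw_sqrt_cpow hx, cpow_neg_one]; push_cast; rfl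

lemma rwSt_cexp (m : ℕ) (v : ℝ) : (rwSt m v : ℂ) = (((Real.sqrt ((m:ℝ) + 1))⁻¹ : ℝ) / (2 * I) * cexp (π / 4 * I)) •
      cexp (-((Real.sqrt 2 * Real.sqrt ((m:ℝ) + 1) : ℝ) * cexp ((1 * (π / 4) : ℝ) * I)) * v) - 
      (((Real.sqrt ((m:ℝ) + 1))⁻¹ : ℝ) / (2 * I) * cexp (-(π / 4 * I))) •
      cexp (-((Real.sqrt 2 * Real.sqrt ((m:ℝ) + 1) : ℝ) * cexp ((-1 * (π / 4) : ℝ) * I)) * v) := by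
  have h2 : (Real.sqrt 2 : ℂ) ^ 2 = 2 := by exact_mod_cast Real.sq_sqrt (by norm_num : (0:ℝ) ≤ 2)
  rw [rw_omega (Or.inl rfl), rw_omega (Or.inr rfl), rwSt]
  generalize Real.sqrt ((m:ℝ) + 1) = r at *
  push_cast
  rw [Complex.sin]
  have e1 : -(Real.sqrt 2 * r * (Real.sqrt 2 / 2 * (1 + 1 * I))) * v = -(v * r) + -(v * r) * I := by
    linear_combination (- r * (1 + I) * v / 2 : ℂ) * h2
  have e2 : -(Real.sqrt 2 * r * (Real.sqrt 2 / 2 * (1 + -1 * I))) * v = -(v * r) + (v * r) * I := by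
    linear_combination (- r * (1 - I) * v / 2 : ℂ) * h2
  rw [e1, e2, Complex.exp_add, Complex.exp_add]
  have e3 : cexp (-(π / 4 - v * r) * I) = cexp (-(π / 4 * I)) * cexp (v * r * I) := by
    rw [← Complex.exp_add]; congr 1; ring
  have e4 : cexp ((π / 4 - v * r) * I) = cexp ((π / 4 * I)) * cexp (-(v * r) * I) := by
    rw [← Complex.exp_add]; congr 1; ring
  rw [e3, e4]
  simp only [smul_eq_mul]
  have hI := I_ne_zero
  rw [show -((v:ℂ) * r) * I = -(v * r * I) by ring]
  generalize cexp (v * r * I) = X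
  generalize cexp (-(v * r * I)) = X'
  generalize cexp (-(π / 4 * I)) = Z
  generalize cexp ((π / 4 * I)) = Z'
  generalize cexp (-(v * r)) = W
  rw [div_mul_eq_mul_div, div_mul_eq_mul_div, div_mul_eq_mul_div, div_mul_eq_mul_div, ← sub_div, eq_div_iff (by simp)]
  linear_combination ((r:ℂ)⁻¹ * W * (Z * X - Z' * X')) * I_sq

lemma rwSt_mellin (m : ℕ) {s : ℂ} (hs : 0 < s.re) :
    mellin (fun v : ℝ => (rwSt m v : ℂ)) s = 1 / ((m:ℂ) + 1) ^ ((1 + s) / 2) * ((Real.sqrt 2 : ℂ) ^ (-s) * Complex.Gamma s *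
      Complex.sin (π / 4 - π * s / 4)) := by
  have hπ := Real.pi_pos
  have hr : 0 < Real.sqrt ((m:ℝ) + 1) := by positivity
  have hx : 0 < Real.sqrt 2 * Real.sqrt ((m:ℝ) + 1) := by positivity
  have hmc : ∀ h : ℝ, h = 1 ∨ h = -1 → MellinConvergent (fun v : ℝ => 
      cexp (-((Real.sqrt 2 * Real.sqrt ((m:ℝ) + 1) : ℝ) * cexp ((h * (π / 4) : ℝ) * I)) * v)) s := by
    intro h hh
    refine rw_mc (C := 1) (c := Real.sqrt ((m:ℝ) + 1)) (Continuous.continuousOn (by fun_prop)) hr (fun v hv => ?_) hs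
    rw [rw_omega hh, Complex.norm_exp, one_mul]
    refine le_of_eq ?_
    congr 1
    have h2 : (Real.sqrt 2) ^ 2 = 2 := Real.sq_sqrt (by norm_num : (0:ℝ) ≤ 2)
    generalize Real.sqrt ((m:ℝ) + 1) = r
    generalize Real.sqrt 2 = q at *
    have : (-(((q * r : ℝ):ℂ) * ((q / 2 : ℝ) * (1 + h * I))) * (v:ℂ)) = ((-(q^2 / 2 * r * v) : ℝ):ℂ) + ((-(q^2 / 2 * r * v) * h : ℝ):ℂ) * I := by
      push_cast; ring
    rw [this, add_re, re_ofReal_mul, I_re, ofReal_re, h2]; ring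
  have hg : ∀ h : ℝ, h = 1 ∨ h = -1 → |h * (π / 4)| ≤ π / 4 := by
    intro h hh
    rcases hh with h | h <;> subst h <;> simp [abs_of_pos hπ, abs_div]
  simp_rw [rwSt_cexp]
  have h1 := hmc 1 (Or.inl rfl)
  have h2 := hmc (-1) (Or.inr rfl)
  have h3 := (hasMellin_sub (h1.const_smul (((Real.sqrt ((m:ℝ) + 1))⁻¹ : ℝ) / (2 * I) * cexp (π / 4 * I)))
    (h2.const_smul (((Real.sqrt ((m:ℝ) + 1))⁻¹ : ℝ) / (2 * I) * cexp (-(π / 4 * I))))).2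
  rw [h3, mellin_const_smul, mellin_const_smul, rw_gamma_ray hx (hg 1 (Or.inl rfl)) hs,
    rw_gamma_ray hx (hg (-1) (Or.inr rfl)) hs]
  have e1 : ((Real.sqrt 2 * Real.sqrt ((m:ℝ) + 1) : ℝ) : ℂ) ^ (-s) = (Real.sqrt 2 : ℂ) ^ (-s) * (Real.sqrt ((m:ℝ) + 1) : ℂ) ^ (-s) := by
    push_cast
    rw [mul_cpow_ofReal_nonneg (by positivity) (by positivity)]
  have e2 : ((((Real.sqrt ((m:ℝ) + 1))⁻¹ : ℝ)) : ℂ) * (Real.sqrt ((m:ℝ) + 1) : ℂ) ^ (-s) = 1 / ((m:ℂ) + 1) ^ ((1 + s) / 2) := by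
    have hm : (0:ℝ) < (m:ℝ) + 1 := by positivity
    have : (((m:ℂ)) + 1) = (((m:ℝ) + 1 : ℝ) : ℂ) := by push_cast; ring
    rw [this, one_div, ← cpow_neg, rw_sqrt_inv hm, rw_sqrt_cpow hm, ← cpow_add _ _ (by exact_mod_cast hm.ne')]
    congr 1; ring
  rw [e1, ← e2]
  rw [Complex.sin]
  simp only [smul_eq_mul]
  have e3 : cexp (-(π / 4 - π * s / 4) * I) = cexp (-(π / 4 * I)) * cexp (-((-1 * (π / 4) : ℝ) * I * s)) := by
    rw [← Complex.exp_add]; congr 1; push_cast; ring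
  have e4 : cexp ((π / 4 - π * s / 4) * I) = cexp ((π / 4 * I)) * cexp (-((1 * (π / 4) : ℝ) * I * s)) := by
    rw [← Complex.exp_add]; congr 1; push_cast; ring
  rw [e3, e4]
  generalize cexp (-((1 * (π / 4) : ℝ) * I * s)) = X
  generalize cexp (-((-1 * (π / 4) : ℝ) * I * s)) = X'
  generalize cexp (-(π / 4 * I)) = Z
  generalize cexp ((π / 4 * I)) = Z'
  have hI := I_ne_zero
  field_simp
  linear_combination Complex.Gamma s * (X * Z' - X' * Z) * I_sq

end RW8

section RW9
open MeasureTheory Set Filter Topology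

lemma rwD_mellin_big {s : ℂ} (hs : 2 < s.re) :
    mellin (fun v : ℝ => rwD v) s = riemannZeta ((1 + s) / 2) * ((Real.sqrt 2 : ℂ) ^ (-s) * Complex.Gamma s *
      Complex.sin (π / 4 - π * s / 4)) := by
  have hb : MellinConvergent (fun v : ℝ => (v:ℂ) ^ (-2:ℂ) • ((8 * Real.exp (-(1/2) * v) : ℝ) : ℂ)) s := by
    rw [MellinConvergent.cpow_smul]
    refine rw_mc (C := 8) (c := 1/2) (Continuous.continuousOn (by fun_prop)) (by norm_num) (fun v hv => ?_) (by simpa using hs)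
    rw [Complex.norm_real, Real.norm_of_nonneg (by positivity)]
  have h := rw_mellin_sum (f := fun (m : ℕ) (v : ℝ) => (rwSt m v : ℂ)) hb rwu_summable
    (fun m => Continuous.continuousOn (by unfold rwSt; fun_prop)) (fun m v hv => ?_)
  · have h1 : mellin (fun v : ℝ => rwD v) s = mellin (fun v => ∑' m : ℕ, (rwSt m v : ℂ)) s := by
      refine setIntegral_congr_fun measurableSet_Ioi (fun v hv => ?_)
      simp only
      rw [rwD_eq hv]; rfl
    rw [h1, ← h.tsum_eq]
    simp_rw [rwSt_mellin _ (by linarith : 0 < s.re)]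
    rw [tsum_mul_right, zeta_eq_tsum_one_div_nat_add_one_cpow (by simp; linarith)]
  · have hv : 0 < v := hv
    have hm : (0:ℝ) < (m:ℝ) + 1 := by positivity
    have hm0 : (0:ℝ) ≤ m := Nat.cast_nonneg m
    have hr : 1 ≤ Real.sqrt ((m:ℝ) + 1) := Real.one_le_sqrt.mpr (by linarith)
    have e1 : ‖(v:ℂ) ^ (-2:ℂ) • ((8 * Real.exp (-(1/2) * v) : ℝ) : ℂ)‖ = (v ^ 2)⁻¹ * (8 * Real.exp (-(1/2) * v)) := by
      rw [norm_smul, Complex.norm_real, Real.norm_of_nonneg (by positivity), norm_cpow_eq_rpow_re_of_pos hv]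
      congr 1
      simp [Real.rpow_neg hv.le]
    rw [e1, Complex.norm_real, rwSt, norm_mul, norm_mul, Real.norm_of_nonneg (by positivity), Real.norm_of_nonneg (Real.exp_pos _).le, rwu]
    have hsq : Real.sqrt ((m:ℝ) + 1) ^ 2 = (m:ℝ) + 1 := Real.sq_sqrt hm.le
    rw [← hsq]
    rw [Real.sqrt_sq (by positivity)]
    generalize Real.sqrt ((m:ℝ) + 1) = r at *
    have hr0 : 0 < r := by linarith
    have h4 := Real.pow_div_factorial_le_exp (v * r / 2) (by positivity) 2
    have h5 : Real.exp (-(v * r)) ≤ 8 / (v * r) ^ 2 * Real.exp (-(1/2) * v) := by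
      have h6 : Real.exp (-(v * r)) ≤ Real.exp (-(v * r / 2)) * Real.exp (-(1/2) * v) := by
        rw [← Real.exp_add]
        refine Real.exp_le_exp.mpr ?_
        nlinarith
      refine h6.trans ?_
      gcongr
      rw [Real.exp_neg]
      calc _ ≤ ((v * r / 2) ^ 2 / (Nat.factorial 2 : ℝ))⁻¹ := inv_anti₀ (by positivity) h4
        _ = _ := by simp [Nat.factorial]; field_simp; norm_num
    calc r⁻¹ * (Real.exp (-(v * r)) * ‖Real.sin (π / 4 - v * r)‖) ≤ r⁻¹ * (8 / (v * r) ^ 2 * Real.exp (-(1/2) * v) * 1) := by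
          gcongr
          exact Real.abs_sin_le_one _
      _ = _ := by field_simp

lemma rwD_mellin_diff {s : ℂ} (hs : 0 < s.re) : DifferentiableAt ℂ (mellin (fun v : ℝ => rwD v)) s := by
  obtain ⟨C, hC⟩ := rwD_decay
  exact rw_md (C := C) (c := 1/2) (rwD_diff.continuous.comp continuous_ofReal).continuousOn (by norm_num)
    (fun v hv => hC v (le_of_lt hv)) hs

lemma rw_isOpen_half (a : ℝ) : IsOpen {s : ℂ | a < s.re} := isOpen_lt continuous_const continuous_re

lemma rw_preconn_half (a : ℝ) : IsPreconnected {s : ℂ | a < s.re} :=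
  (convex_halfSpace_re_gt a).isPreconnected

/-- identity theorem on the right half plane -/
lemma rw_identity {f g : ℂ → ℂ} (hf : ∀ s, 0 < s.re → DifferentiableAt ℂ f s)
    (hg : ∀ s, 0 < s.re → DifferentiableAt ℂ g s) (a : ℝ) (h : ∀ s, a < s.re → 0 < s.re → f s = g s) {s : ℂ} (hs : 0 < s.re) :
    f s = g s := by
  have hf' : AnalyticOnNhd ℂ f {s : ℂ | 0 < s.re} :=
    DifferentiableOn.analyticOnNhd (fun s hs => (hf s hs).differentiableWithinAt) (rw_isOpen_half 0)
  have hg' : AnalyticOnNhd ℂ g {s : ℂ | 0 < s.re} :=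
    DifferentiableOn.analyticOnNhd (fun s hs => (hg s hs).differentiableWithinAt) (rw_isOpen_half 0)
  have hz : ((max a 0 + 1 : ℝ) : ℂ) ∈ {s : ℂ | max a 0 < s.re} := by
    simp only [Set.mem_setOf_eq, ofReal_re]; linarith
  refine hf'.eqOn_of_preconnected_of_eventuallyEq hg' (rw_preconn_half 0) (z₀ := ((max a 0 + 1 : ℝ) : ℂ)) ?_ ?_ hs
  · simp only [Set.mem_setOf_eq, ofReal_re]
    have := le_max_right a 0
    linarith
  · filter_upwards [(rw_isOpen_half (max a 0)).mem_nhds hz] with s hs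
    exact h s (lt_of_le_of_lt (le_max_left _ _) hs) (lt_of_le_of_lt (le_max_right _ _) hs)

lemma rw_Gamma_diff {s : ℂ} (hs : 0 < s.re) : DifferentiableAt ℂ Complex.Gamma s :=
  differentiableAt_Gamma s (fun m h => by
    rw [h] at hs; simp at hs; linarith [Nat.cast_nonneg (α := ℝ) m])

lemma rwD_mellin {s : ℂ} (hs : 0 < s.re) (hs1 : s ≠ 1) :
    mellin (fun v : ℝ => rwD v) s = riemannZeta ((1 + s) / 2) * ((Real.sqrt 2 : ℂ) ^ (-s) * Complex.Gamma s *
      Complex.sin (π / 4 - π * s / 4)) := by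
  have hz : ∀ s : ℂ, s ≠ 1 → (s - 1) * riemannZeta ((1 + s) / 2) = 2 * riemannZeta₁ ((1 + s) / 2) := by
    intro s hs1
    have h0 : s - 1 ≠ 0 := sub_ne_zero.mpr hs1
    rw [riemannZeta_eq_inv_sub_mul (by
      intro h; apply hs1; linear_combination 2 * h), show (1 + s) / 2 - 1 = (s - 1) / 2 by ring]
    field_simp
  have h := rw_identity (f := fun s => (s - 1) * mellin (fun v : ℝ => rwD v) s)
    (g := fun s => 2 * riemannZeta₁ ((1 + s) / 2) * ((Real.sqrt 2 : ℂ) ^ (-s) * Complex.Gamma s *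
      Complex.sin (π / 4 - π * s / 4))) (fun s hs => ?_) (fun s hs => ?_) 2 (fun s hs hs' => ?_) hs
  · rw [← hz s hs1, mul_assoc] at h
    exact mul_left_cancel₀ (sub_ne_zero.mpr hs1) h
  · exact (differentiableAt_id.sub_const 1).mul (rwD_mellin_diff hs)
  · have h1 := rw_Gamma_diff hs
    have h2 : DifferentiableAt ℂ (fun s : ℂ => (Real.sqrt 2 : ℂ) ^ (-s)) s := 
      (differentiableAt_id.fun_neg).const_cpow (Or.inl rw_sqrt2_ne)
    have h3 : DifferentiableAt ℂ (fun s : ℂ => riemannZeta₁ ((1 + s) / 2)) s := by fun_prop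
    have h4 : DifferentiableAt ℂ (fun s : ℂ => Complex.sin (π / 4 - π * s / 4)) s := by fun_prop
    exact ((h3.const_mul 2)).mul ((h2.mul h1).mul h4)
  · have : s ≠ 1 := by rintro rfl; norm_num at hs
    rw [rwD_mellin_big hs, ← hz s this]; ring

lemma rwK_eq : rwK = riemannZeta (1 / 2) := by
  set F : ℂ → ℂ := fun z => rwD z - rwD 0 * cexp (-z) with hF
  have hFd : Differentiable ℂ F := rwD_diff.sub ((differentiable_const _).mul (by fun_prop))
  have hF0 : F 0 = 0 := by simp [hF]
  have hcont : Continuous (dslope F 0) := by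
    rw [continuous_iff_continuousAt]
    intro z
    by_cases hz : z = 0
    · rw [hz, continuousAt_dslope_same]; exact hFd 0
    · exact (continuousAt_dslope_of_ne hz).mpr hFd.continuous.continuousAt
  have hds : ∀ z : ℂ, z ≠ 0 → F z = z * dslope F 0 z := by
    intro z hz
    have := sub_smul_dslope F 0 z
    simp only [sub_zero, smul_eq_mul, hF0] at this
    exact this.symm
  obtain ⟨C, hC⟩ := rwD_decay
  have hC0 : 0 ≤ C := by
    have := (norm_nonneg _).trans (hC 0 le_rfl); simpa using this
  obtain ⟨B, hB⟩ := (isCompact_Icc (a := (0:ℝ)) (b := 1)).exists_bound_of_continuousOn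
    (f := fun a : ℝ => dslope F 0 a) (hcont.comp continuous_ofReal).continuousOn
  have hB0 : 0 ≤ B := (norm_nonneg _).trans (hB 0 (by simp))
  have hbd : ∀ v : ℝ, v > 0 → ‖dslope F 0 v‖ ≤ (2 * C + B * Real.exp (1/2)) * Real.exp (-(1/2) * v) := by
    intro v hv
    rw [add_mul]
    rcases le_total v 1 with h | h
    · have h1 := hB v ⟨hv.le, h⟩
      have h2 : B * 1 ≤ B * Real.exp (1/2) * Real.exp (-(1/2) * v) := by
        rw [mul_assoc, ← Real.exp_add]
        gcongr
        exact Real.one_le_exp (by linarith)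
      have h3 : 0 ≤ 2 * C * Real.exp (-(1/2) * v) := by positivity
      linarith
    · have h1 : ‖F v‖ ≤ 2 * C * Real.exp (-(1/2) * v) := by
        have h4 : ‖rwD 0 * cexp (-v)‖ ≤ C * Real.exp (-(1/2) * v) := by
          rw [norm_mul, Complex.norm_exp]
          have h5 := hC 0 le_rfl
          simp only [ofReal_zero, mul_zero, Real.exp_zero, mul_one] at h5
          gcongr
          simp; linarith
        have := norm_sub_le (rwD v) (rwD 0 * cexp (-v))
        have h6 := hC v hv.le
        simp only [hF]
        linarith
      rw [hds v (by exact_mod_cast hv.ne'), norm_mul, Complex.norm_real, Real.norm_of_nonneg hv.le] at h1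
      have h3 : 0 ≤ B * Real.exp (1/2) * Real.exp (-(1/2) * v) := by positivity
      nlinarith [norm_nonneg (dslope F 0 v)]
  have hN : ∀ s : ℂ, 0 < s.re → s * mellin (fun v : ℝ => rwD v) s = s * mellin (fun v : ℝ => dslope F 0 v) (s + 1) + rwD 0 * Complex.Gamma (s + 1) := by
    intro s hs
    have h1 : MellinConvergent (fun v : ℝ => rwD 0 • cexp (-v)) s := by
      refine MellinConvergent.const_smul (f := fun v : ℝ => cexp (-v)) ?_ _
      refine rw_mc (C := 1) (c := 1) (Continuous.continuousOn (by fun_prop)) (by norm_num) (fun v hv => ?_) hs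
      rw [Complex.norm_exp]; simp
    have h2 : MellinConvergent (fun v : ℝ => (v:ℂ) ^ (1:ℂ) • dslope F 0 v) s := by
      rw [MellinConvergent.cpow_smul]
      exact rw_mc (hcont.comp continuous_ofReal).continuousOn (by norm_num) hbd (by simp; linarith)
    have h3 := (hasMellin_add h2 h1).2
    rw [mellin_cpow_smul, mellin_const_smul] at h3
    have h4 : mellin (fun v : ℝ => cexp (-v)) s = Complex.Gamma s := by
      rw [Complex.Gamma_eq_integral hs, Complex.GammaIntegral_eq_mellin]; congr 1; funext v; simp
    have h5 : mellin (fun v : ℝ => rwD v) s = mellin (fun v : ℝ => (v:ℂ) ^ (1:ℂ) • dslope F 0 v + rwD 0 • cexp (-v)) s := by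
      refine setIntegral_congr_fun measurableSet_Ioi (fun v hv => ?_)
      have hv : 0 < v := hv
      simp only [cpow_one, smul_eq_mul]
      rw [← hds v (by exact_mod_cast hv.ne')]
      simp [hF]
    rw [h5, h3, h4, Complex.Gamma_add_one s (by rintro rfl; simp at hs)]
    simp only [smul_eq_mul]; ring
  have hM : ∀ s : ℝ, 0 < s → s < 1 → riemannZeta ((1 + s) / 2) * ((Real.sqrt 2 : ℂ) ^ (-(s:ℂ)) * Complex.Gamma (s + 1) *
      Complex.sin (π / 4 - π * s / 4)) = s * mellin (fun v : ℝ => dslope F 0 v) (s + 1) + rwD 0 * Complex.Gamma (s + 1) := by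
    intro s hs hs1
    rw [← hN s (by simpa using hs), rwD_mellin (by simpa using hs) (by exact_mod_cast hs1.ne), Complex.Gamma_add_one (s:ℂ) (by exact_mod_cast hs.ne')]
    ring
  have hl : ContinuousAt (fun s : ℂ => riemannZeta ((1 + s) / 2) * ((Real.sqrt 2 : ℂ) ^ (-(s:ℂ)) * Complex.Gamma (s + 1) *
      Complex.sin (π / 4 - π * s / 4))) 0 := by
    have h1 : ContinuousAt (fun s : ℂ => riemannZeta ((1 + s) / 2)) 0 := by
      refine ContinuousAt.comp (f := fun s : ℂ => (1 + s) / 2) (g := riemannZeta) ?_ (by fun_prop)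
      exact (differentiableAt_riemannZeta (by norm_num)).continuousAt
    have h2 : ContinuousAt (fun s : ℂ => Complex.Gamma (s + 1)) 0 := by
      refine ContinuousAt.comp (f := fun s : ℂ => s + 1) (g := Complex.Gamma) ?_ (by fun_prop)
      exact (rw_Gamma_diff (by simp)).continuousAt
    have h3 : ContinuousAt (fun s : ℂ => (Real.sqrt 2 : ℂ) ^ (-s)) 0 := 
      ((differentiableAt_id.fun_neg).const_cpow (Or.inl rw_sqrt2_ne)).continuousAt
    exact h1.mul ((h3.mul h2).mul (by fun_prop))
  have hrr : ContinuousAt (fun s : ℂ => s * mellin (fun v : ℝ => dslope F 0 v) (s + 1) + rwD 0 * Complex.Gamma (s + 1)) 0 := by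
    have h2 : ContinuousAt (fun s : ℂ => Complex.Gamma (s + 1)) 0 := by
      refine ContinuousAt.comp (f := fun s : ℂ => s + 1) (g := Complex.Gamma) ?_ (by fun_prop)
      exact (rw_Gamma_diff (by simp)).continuousAt
    have h3 : ContinuousAt (fun s : ℂ => mellin (fun v : ℝ => dslope F 0 v) (s + 1)) 0 := by
      refine ContinuousAt.comp (f := fun s : ℂ => s + 1) (g := mellin (fun v : ℝ => dslope F 0 v)) ?_ (by fun_prop)
      exact (rw_md (hcont.comp continuous_ofReal).continuousOn (by norm_num) hbd (by simp)).continuousAt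
    exact (continuousAt_id.mul h3).add (continuousAt_const.mul h2)
  have ht : Tendsto (fun s : ℝ => (s:ℂ)) (𝓝[>] 0) (𝓝 (0:ℂ)) := by
    have : ContinuousAt (fun s : ℝ => (s:ℂ)) 0 := continuous_ofReal.continuousAt
    exact (this.tendsto.mono_left nhdsWithin_le_nhds).trans (by simp)
  have hev : ∀ᶠ s : ℝ in 𝓝[>] 0, s ∈ Set.Ioo (0:ℝ) 1 := Ioo_mem_nhdsGT one_pos
  have h1 := hl.tendsto.comp ht
  have h2 := hrr.tendsto.comp ht
  have h3 := tendsto_nhds_unique (h1.congr' (by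
    filter_upwards [hev] with s hs
    exact hM s hs.1 hs.2)) h2
  simp only [add_zero, neg_zero, cpow_zero, zero_add, Complex.Gamma_one, mul_zero, zero_div, sub_zero, zero_mul, mul_one, one_mul] at h3
  have h4 : Complex.sin (π / 4) = Real.sqrt 2 / 2 := by
    have := Real.sin_pi_div_four
    have h5 : ((Real.sin (π / 4) : ℝ) : ℂ) = ((Real.sqrt 2 / 2 : ℝ) : ℂ) := by rw [this]
    push_cast at h5; exact h5
  rw [h4, rwD, rwE_zero] at h3
  have h2 : (Real.sqrt 2 : ℂ) ^ 2 = 2 := by exact_mod_cast Real.sq_sqrt (by norm_num : (0:ℝ) ≤ 2)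
  rw [eq_div_iff rw_sqrt2_ne] at h3
  linear_combination -h3 + riemannZeta (1/2) / 2 * h2

end RW9

section RW10
open MeasureTheory Set Filter Topology

noncomputable def rwo (e : ℝ) : ℂ := cexp ((e * (π / 4) : ℝ) * I)

lemma rwo_ne (e : ℝ) : rwo e ≠ 0 := Complex.exp_ne_zero _

lemma rwo_norm (e : ℝ) : ‖rwo e‖ = 1 := Complex.norm_exp_ofReal_mul_I _

lemma rwo_sq {e : ℝ} (he : e = 1 ∨ e = -1) : rwo e ^ 2 = e * I := by
  have h2 : (Real.sqrt 2 : ℂ) ^ 2 = 2 := by exact_mod_cast Real.sq_sqrt (by norm_num : (0:ℝ) ≤ 2)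
  have e2 : (e:ℂ)^2 = 1 := by rcases he with h | h <;> subst h <;> simp
  rw [rwo, rw_omega he]
  push_cast
  linear_combination (1 + e * I) ^ 2 / 4 * h2 + (e:ℂ)^2 / 2 * I_sq - e2 / 2

lemma rwo_I {e : ℝ} (he : e = 1 ∨ e = -1) : I * e * rwo e = - cexp ((-e * (π / 4) : ℝ) * I) := by
  have he' : -e = 1 ∨ -e = -1 := by rcases he with h | h <;> subst h <;> simp
  have e2 : (e:ℂ)^2 = 1 := by rcases he with h | h <;> subst h <;> simp
  rw [rwo, rw_omega he, rw_omega he']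
  push_cast
  linear_combination (Real.sqrt 2 / 2 * (e:ℂ)^2) * I_sq - (Real.sqrt 2 / 2) * e2

lemma rwo_exp_norm {e : ℝ} (he : e = 1 ∨ e = -1) {x v : ℝ} (hx : 0 < x) (hv : 0 < v) :
    ‖cexp (I * e * x * (v * rwo e))‖ ≤ Real.exp (-(x / 2) * v) := by
  have he' : -e = 1 ∨ -e = -1 := by rcases he with h | h <;> subst h <;> simp
  rw [show I * e * x * (v * rwo e) = (I * e * rwo e) * ((x * v : ℝ) : ℂ) by push_cast; ring, rwo_I he, rw_omega he', Complex.norm_exp]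
  refine Real.exp_le_exp.mpr ?_
  rw [re_mul_ofReal, neg_re, re_ofReal_mul]
  have h2 : 1 ≤ Real.sqrt 2 := Real.one_le_sqrt.mpr (by norm_num)
  simp
  nlinarith [mul_pos hx hv]

lemma rwo_sq_re {e : ℝ} (he : e = 1 ∨ e = -1) (q v : ℝ) : 0 ≤ ((q * (v * rwo e)) ^ 2).re := by
  rw [mul_pow, mul_pow, rwo_sq he]
  rw [show (q:ℂ)^2 * ((v:ℂ)^2 * (e * I)) = ((q^2 * v^2 * e : ℝ):ℂ) * I by push_cast; ring, re_ofReal_mul]; simp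

lemma rwo_arg_norm {e : ℝ} {q v : ℝ} (hq : 0 < q) (hv : 0 < v) : ‖(q * (v * rwo e) : ℂ)‖ = q * v := by
  rw [norm_mul, norm_mul, rwo_norm, Complex.norm_real, Complex.norm_real, Real.norm_of_nonneg hq.le, Real.norm_of_nonneg hv.le, mul_one]

noncomputable def rwc (e : ℝ) (s : ℂ) : ℂ := cexp ((e * (π / 4) : ℝ) * I * s)

lemma rwc_norm {e : ℝ} (he : e = 1 ∨ e = -1) (s : ℂ) : ‖rwc e s‖ ≤ Real.exp (π / 4 * |s.im|) := by
  have hπ := Real.pi_pos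
  rw [rwc, Complex.norm_exp]
  refine Real.exp_le_exp.mpr ?_
  rw [mul_assoc, re_ofReal_mul]
  simp only [mul_re, I_re, I_im, zero_mul, one_mul, zero_sub]
  rcases he with h | h <;> subst h <;> nlinarith [neg_abs_le s.im, le_abs_self s.im]

lemma rw_mellin_norm {f : ℝ → ℂ} {A y : ℝ} (hy : 0 < y) (hf : ∀ v > 0, ‖f v‖ ≤ A * (v ^ 2 * Real.exp (-y * v))) {s : ℂ} (hs : 0 < s.re) :
    ‖mellin f s‖ ≤ A * ((1 / y) ^ (s.re + 2) * Real.Gamma (s.re + 2)) := by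
  rw [← Real.integral_rpow_mul_exp_neg_mul_Ioi (by linarith) hy, ← integral_const_mul, mellin]
  refine norm_integral_le_of_norm_le ?_ ?_
  · have h1 : IntegrableOn (fun t : ℝ => t ^ (s.re + 2 - 1) * Real.exp (- y * t ^ (1:ℝ))) (Ioi 0) := integrableOn_rpow_mul_exp_neg_mul_rpow (by linarith) (by norm_num) hy
    refine (h1.congr_fun (fun t ht => ?_) measurableSet_Ioi).const_mul A
    simp only [Real.rpow_one, neg_mul]
  · refine (ae_restrict_iff' measurableSet_Ioi).mpr (ae_of_all _ (fun v hv => ?_))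
    have hv : 0 < v := hv
    rw [norm_smul, norm_cpow_eq_rpow_re_of_pos hv]
    calc _ ≤ v ^ (s - 1).re * (A * (v ^ 2 * Real.exp (-y * v))) := by
          gcongr; exact hf v hv
      _ = _ := by
          rw [show s.re + 2 - 1 = (s - 1).re + 2 by simp; ring, Real.rpow_add hv, Real.rpow_two, neg_mul]; ring

lemma rw_exp_mc {e : ℝ} (he : e = 1 ∨ e = -1) {x : ℝ} (hx : 0 < x) {s : ℂ} (hs : 0 < s.re) :
    MellinConvergent (fun v : ℝ => cexp (I * e * x * (v * rwo e))) s := by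
  refine rw_mc (C := 1) (c := x / 2) (Continuous.continuousOn (by fun_prop)) (by positivity) (fun v hv => ?_) hs
  rw [one_mul]; exact rwo_exp_norm he hx hv

lemma rw_exp_mellin {e : ℝ} (he : e = 1 ∨ e = -1) {x : ℝ} (hx : 0 < x) {s : ℂ} (hs : 0 < s.re) :
    mellin (fun v : ℝ => cexp (I * e * x * (v * rwo e))) s = rwc e s * (x:ℂ) ^ (-s) * Complex.Gamma s := by
  have hπ := Real.pi_pos
  have h := rw_gamma_ray hx (φ := -e * (π / 4)) (by
    rcases he with h | h <;> subst h <;> simp [abs_of_pos hπ, abs_div]) hs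
  have h1 : (fun v : ℝ => cexp (I * e * x * (v * rwo e))) = fun v : ℝ => cexp (-(x * cexp ((-e * (π / 4) : ℝ) * I)) * v) := by
    funext v; congr 1
    linear_combination (x * v : ℂ) * rwo_I he
  rw [h1, h, rwc]
  congr 3
  push_cast; ring

noncomputable def rwQ (q e x : ℝ) (s : ℂ) : ℂ :=
  rwc e s * mellin (fun v : ℝ => rwE (q * (v * rwo e)) * cexp (I * e * x * (v * rwo e))) s

lemma rwE_ray_bound {q e x : ℝ} (hq : 0 < q) (he : e = 1 ∨ e = -1) (hx : 0 < x) {v : ℝ} (hv : 0 < v) :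
    ‖rwE (q * (v * rwo e)) * cexp (I * e * x * (v * rwo e))‖ ≤ ((∑' k, rwu k) * ((4 * π)⁻¹ * q ^ 2)) * (v ^ 2 * Real.exp (-(x / 2) * v)) := by
  have hπ := Real.pi_pos
  have hu : 0 ≤ ∑' k, rwu k := tsum_nonneg rwu_nonneg
  rw [norm_mul]
  have h1 := rwE_bound (rwo_sq_re he q v)
  rw [rwo_arg_norm hq hv] at h1
  have h2 := rwo_exp_norm he hx hv
  calc _ ≤ (∑' k, rwu k) * ((4 * π)⁻¹ * (q * v) ^ 2) * Real.exp (-(x / 2) * v) := by gcongr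
    _ = _ := by ring

lemma rwE_ray_cont (q e x : ℝ) : Continuous (fun v : ℝ => rwE (q * (v * rwo e)) * cexp (I * e * x * (v * rwo e))) := by
  have := rwE_diff.continuous
  fun_prop

lemma rw_sq_exp {y v : ℝ} (hy : 0 < y) (hv : 0 < v) : v ^ 2 * Real.exp (-y * v) ≤ (1 + 2 / (y / 2) ^ 2) * Real.exp (-(y / 2) * v) := by
  have h := rw_poly (c := y / 2) (by positivity) hv.le
  have h1 : Real.exp (-y * v) = (Real.exp (y / 2 * v))⁻¹ * Real.exp (-(y / 2) * v) := by
    rw [← Real.exp_neg, ← Real.exp_add]; congr 1; ring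
  rw [h1, ← mul_assoc]
  gcongr
  rw [← div_eq_mul_inv, div_le_iff₀ (Real.exp_pos _)]
  linarith

lemma rwE_ray_bound2 {q e x : ℝ} (hq : 0 < q) (he : e = 1 ∨ e = -1) (hx : 0 < x) : ∃ C : ℝ, ∀ v : ℝ, v > 0 →
    ‖rwE (q * (v * rwo e)) * cexp (I * e * x * (v * rwo e))‖ ≤ C * Real.exp (-(x / 2 / 2) * v) := by
  have hπ := Real.pi_pos
  have hu : 0 ≤ ∑' k, rwu k := tsum_nonneg rwu_nonneg
  refine ⟨((∑' k, rwu k) * ((4 * π)⁻¹ * q ^ 2)) * (1 + 2 / (x / 2 / 2) ^ 2), fun v hv => ?_⟩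
  refine (rwE_ray_bound hq he hx hv).trans ?_
  have := rw_sq_exp (y := x / 2) (by positivity) hv
  rw [mul_assoc (_ * _) (1 + _) _]
  exact mul_le_mul_of_nonneg_left this (by positivity)

lemma rwQ_diff {q e x : ℝ} (hq : 0 < q) (he : e = 1 ∨ e = -1) (hx : 0 < x) {s : ℂ} (hs : 0 < s.re) :
    DifferentiableAt ℂ (rwQ q e x) s := by
  obtain ⟨C, hC⟩ := rwE_ray_bound2 hq he hx
  have h1 : DifferentiableAt ℂ (rwc e) s := by unfold rwc; fun_prop
  exact h1.mul (rw_md (rwE_ray_cont q e x).continuousOn (by positivity) hC hs)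

lemma rwQ_bound {q e x : ℝ} (hq : 0 < q) (he : e = 1 ∨ e = -1) (hx : 0 < x) {s : ℂ} (hs : 0 < s.re) :
    ‖rwQ q e x s‖ ≤ Real.exp (π / 4 * |s.im|) * (((∑' k, rwu k) * ((4 * π)⁻¹ * q ^ 2)) * ((1 / (x / 2)) ^ (s.re + 2) * Real.Gamma (s.re + 2))) := by
  rw [rwQ, norm_mul]
  gcongr
  · exact rwc_norm he s
  · exact rw_mellin_norm (by positivity) (fun v hv => rwE_ray_bound hq he hx hv) hs

/-- formula (B1) -/
lemma rwB1 {q e x : ℝ} (hq : 0 < q) (he : e = 1 ∨ e = -1) (hx : 0 < x) {s : ℂ} (hs : 0 < s.re) :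
    (Real.sqrt 2 : ℂ) * mellin (fun v : ℝ => rwD (q * v) * cexp (I * e * x * v)) s =
      rwK * (rwc e s ^ 2 * (x:ℂ) ^ (-s) * Complex.Gamma s) +
      q * (rwc e (s + 1) ^ 2 * (x:ℂ) ^ (-(s + 1)) * Complex.Gamma (s + 1)) + rwQ q e x s := by
  have hπ := Real.pi_pos
  obtain ⟨C, hC⟩ := rwD_poly
  obtain ⟨C', hC'⟩ := rwD_decay
  have hC0 : 0 ≤ C := by
    have := (norm_nonneg _).trans (hC 0 (by simp)); simpa using this
  have hrot := rw_rot2 (G := fun z => rwD (q * z)) (rwD_diff.comp (by fun_prop)) he (C := C * (1 + q ^ 2)) hx (fun v hv y hy => ?_) hs ?_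
  · rw [hrot]
    change (Real.sqrt 2 : ℂ) * (rwc e s * mellin (fun v : ℝ => rwD (q * (v * rwo e)) * cexp (I * e * x * (v * rwo e))) s) = _
    have m1 := (rw_exp_mc he hx hs).const_smul (rwK / Real.sqrt 2)
    have m2 : MellinConvergent (fun v : ℝ => (q * rwo e / Real.sqrt 2) • ((v:ℂ) ^ (1:ℂ) • cexp (I * e * x * (v * rwo e)))) s := by
      refine MellinConvergent.const_smul (f := fun v : ℝ => ((v:ℂ) ^ (1:ℂ) • cexp (I * e * x * (v * rwo e)))) ?_ _
      rw [MellinConvergent.cpow_smul]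
      exact rw_exp_mc he hx (by simp; linarith)
    have m3 : MellinConvergent (fun v : ℝ => (1 / Real.sqrt 2 : ℂ) • (rwE (q * (v * rwo e)) * cexp (I * e * x * (v * rwo e)))) s := by
      refine MellinConvergent.const_smul (f := fun v : ℝ => rwE (q * (v * rwo e)) * cexp (I * e * x * (v * rwo e))) ?_ _
      obtain ⟨C, hC⟩ := rwE_ray_bound2 hq he hx
      exact rw_mc (rwE_ray_cont q e x).continuousOn (by positivity) hC hs
    have m12 := hasMellin_add m1 m2
    have m123 := (hasMellin_add m12.1 m3).2
    rw [m12.2, mellin_const_smul, mellin_const_smul, mellin_const_smul, mellin_cpow_smul, rw_exp_mellin he hx hs, rw_exp_mellin he hx (by simp; linarith)] at m123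
    have hfun : (fun v : ℝ => rwD (q * (v * rwo e)) * cexp (I * e * x * (v * rwo e))) = fun v : ℝ =>
      (rwK / Real.sqrt 2) • cexp (I * e * x * (v * rwo e)) + (q * rwo e / Real.sqrt 2) • ((v:ℂ) ^ (1:ℂ) • cexp (I * e * x * (v * rwo e)))
       + (1 / Real.sqrt 2 : ℂ) • (rwE (q * (v * rwo e)) * cexp (I * e * x * (v * rwo e))) := by
      funext v
      simp only [smul_eq_mul, cpow_one]
      rw [rwD]
      ring
    rw [hfun, m123, rwQ]
    have hc : rwc e (s + 1) = rwc e s * rwo e := by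
      rw [rwc, rwc, rwo, ← Complex.exp_add]; congr 1; ring
    rw [hc]
    simp only [smul_eq_mul]
    have := rw_sqrt2_ne
    generalize mellin (fun v : ℝ => rwE (q * (v * rwo e)) * cexp (I * e * x * (v * rwo e))) s = J
    generalize (x:ℂ) ^ (-(s+1)) = X1
    generalize (x:ℂ) ^ (-s) = X2
    field_simp
  · have hre : 0 ≤ ((q * (v * cexp ((e * y : ℝ) * I))) ^ 2 : ℂ).re := by
      have h1 : ((q * (v * cexp ((e * y : ℝ) * I))) ^ 2 : ℂ) = ((q ^ 2 * v ^ 2 : ℝ) : ℂ) * cexp ((2 * (e * y) : ℝ) * I) := by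
        rw [mul_pow, mul_pow, ← Complex.exp_nat_mul, show ((2:ℕ):ℂ)*((e*y:ℝ)*I) = (2*(e*y):ℝ)*I by push_cast; ring]; push_cast; ring
      rw [h1, re_ofReal_mul, Complex.exp_ofReal_mul_I_re]
      have h2 : 0 ≤ Real.cos (2 * (e * y)) := by
        apply Real.cos_nonneg_of_neg_pi_div_two_le_of_le <;> rcases he with h | h <;> subst h <;> linarith [hy.1, hy.2]
      positivity
    refine (hC _ hre).trans ?_
    have hn : ‖(q * (v * cexp ((e * y : ℝ) * I)) : ℂ)‖ = q * v := by
      rw [norm_mul, norm_mul, Complex.norm_exp_ofReal_mul_I, Complex.norm_real, Complex.norm_real, Real.norm_of_nonneg hq.le, Real.norm_of_nonneg hv.le, mul_one]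
    rw [hn, mul_assoc]
    gcongr
    nlinarith [sq_nonneg q, sq_nonneg v, mul_nonneg (sq_nonneg q) (sq_nonneg v)]
  · refine rw_mc (C := C') (c := 1/2 * q) ?_ (by positivity) (fun v hv => ?_) hs
    · have := rwD_diff.continuous
      exact Continuous.continuousOn (by fun_prop)
    · have := hC' (q * v) (by have : 0 < v := hv; positivity)
      push_cast at this
      refine this.trans (le_of_eq ?_)
      congr 2; ring

end RW10

section RW11
open MeasureTheory Set Filter Topology

noncomputable def rwT (q e x : ℝ) (k : ℕ) (s : ℂ) : ℂ :=
  rwc e s * mellin (fun v : ℝ => rwEt k (q * (v * rwo e)) * cexp (I * e * x * (v * rwo e))) s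

lemma rwEt_ray_bound {q e x : ℝ} (hq : 0 < q) (he : e = 1 ∨ e = -1) (hx : 0 < x) (k : ℕ) {v : ℝ} (hv : 0 < v) :
    ‖rwEt k (q * (v * rwo e)) * cexp (I * e * x * (v * rwo e))‖ ≤ (rwu k * ((4 * π)⁻¹ * q ^ 2)) * (v ^ 2 * Real.exp (-(x / 2) * v)) := by
  have hπ := Real.pi_pos
  have hu := rwu_nonneg k
  rw [norm_mul]
  have h1 := rwEt_bound k (rwo_sq_re he q v)
  rw [rwo_arg_norm hq hv] at h1
  have h2 := rwo_exp_norm he hx hv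
  calc _ ≤ rwu k * ((4 * π)⁻¹ * (q * v) ^ 2) * Real.exp (-(x / 2) * v) := by gcongr
    _ = _ := by ring

lemma rwEt_cont (k : ℕ) : Continuous (rwEt k) := by
  unfold rwEt; fun_prop

lemma rwT_bound {q e x : ℝ} (hq : 0 < q) (he : e = 1 ∨ e = -1) (hx : 0 < x) (k : ℕ) {s : ℂ} (hs : 0 < s.re) :
    ‖rwT q e x k s‖ ≤ Real.exp (π / 4 * |s.im|) * ((rwu k * ((4 * π)⁻¹ * q ^ 2)) * ((1 / (x / 2)) ^ (s.re + 2) * Real.Gamma (s.re + 2))) := by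
  rw [rwT, norm_mul]
  gcongr
  · exact rwc_norm he s
  · exact rw_mellin_norm (by positivity) (fun v hv => rwEt_ray_bound hq he hx k hv) hs

lemma rwT_hasSum {q e x : ℝ} (hq : 0 < q) (he : e = 1 ∨ e = -1) (hx : 0 < x) {s : ℂ} (hs : 0 < s.re) :
    HasSum (fun k => rwT q e x k s) (rwQ q e x s) := by
  have hπ := Real.pi_pos
  have hb : MellinConvergent (fun v : ℝ => ((((4 * π)⁻¹ * q ^ 2) * (v ^ 2 * Real.exp (-(x / 2) * v)) : ℝ) : ℂ)) s := by
    refine rw_mc (C := ((4 * π)⁻¹ * q ^ 2) * (1 + 2 / (x / 2 / 2) ^ 2)) (c := x / 2 / 2) (Continuous.continuousOn (by fun_prop)) (by positivity) (fun v hv => ?_) hs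
    have hv : 0 < v := hv
    rw [Complex.norm_real, Real.norm_of_nonneg (by positivity), mul_assoc (_ * _) (1 + _) _]
    exact mul_le_mul_of_nonneg_left (rw_sq_exp (by positivity) hv) (by positivity)
  have h := rw_mellin_sum (f := fun k v => rwEt k (q * (v * rwo e)) * cexp (I * e * x * (v * rwo e))) hb rwu_summable
    (fun k => by have := rwEt_cont k; exact Continuous.continuousOn (by fun_prop))
    (fun k v hv => by
      have hv : 0 < v := hv
      have h5 : (0:ℝ) ≤ (4 * π)⁻¹ * q ^ 2 * (v ^ 2 * Real.exp (-(x / 2) * v)) := by positivity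
      have h6 := rwEt_ray_bound hq he hx k hv
      rw [mul_assoc (rwu k)] at h6
      rw [Complex.norm_real, Real.norm_of_nonneg h5]
      exact h6)
  clear hb
  have h3 : (fun v : ℝ => ∑' k, rwEt k (q * (v * rwo e)) * cexp (I * e * x * (v * rwo e))) = fun v : ℝ => rwE (q * (v * rwo e)) * cexp (I * e * x * (v * rwo e)) := by
    funext v
    rw [tsum_mul_right, rwE]
  rw [h3] at h
  unfold rwT rwQ
  exact h.mul_left _

lemma rwT_eq {q e x : ℝ} (hq : 0 < q) (he : e = 1 ∨ e = -1) (hx : 0 < x) (k : ℕ) {s : ℂ} (hs : 0 < s.re) :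
    rwT q e x k s = ((Real.sqrt ((k:ℝ) + 1))⁻¹ : ℝ) *
      (mellin (fun v : ℝ => cexp (-((q ^ 2 / (4 * π * ((k:ℝ) + 1)) : ℝ) * v ^ 2)) * cexp (I * e * x * v)) s
        - rwc e s ^ 2 * (x:ℂ) ^ (-s) * Complex.Gamma s) := by
  have hπ := Real.pi_pos
  set t : ℝ := q ^ 2 / (4 * π * ((k:ℝ) + 1)) with ht
  have htp : 0 < t := by positivity
  have hn1 : ∀ z : ℂ, 0 ≤ (z ^ 2).re → ‖cexp (-(t * z ^ 2))‖ ≤ 1 := by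
    intro z hz
    rw [Complex.norm_exp, neg_re, re_ofReal_mul, Real.exp_le_one_iff]
    nlinarith
  have hrot := rw_rot2 (G := fun z => cexp (-(t * z ^ 2))) (by fun_prop) he (C := 1) hx (fun v hv y hy => ?_) hs ?_
  · rw [hrot]
    change _ = _ * (rwc e s * mellin (fun v : ℝ => cexp (-(t * (v * rwo e) ^ 2)) * cexp (I * e * x * (v * rwo e))) s - _)
    have m1 : MellinConvergent (fun v : ℝ => cexp (-(t * (v * rwo e) ^ 2)) * cexp (I * e * x * (v * rwo e))) s := by
      refine rw_mc (C := 1) (c := x / 2) (Continuous.continuousOn (by fun_prop)) (by positivity) (fun v hv => ?_) hs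
      rw [norm_mul]
      have h1 := hn1 (v * rwo e) (by simpa using rwo_sq_re he 1 v)
      have h2 := rwo_exp_norm he hx hv
      gcongr
    have m12 := (hasMellin_sub m1 (rw_exp_mc he hx hs)).2
    rw [rw_exp_mellin he hx hs] at m12
    rw [rwT]
    have hfun : (fun v : ℝ => rwEt k (q * (v * rwo e)) * cexp (I * e * x * (v * rwo e))) = fun v : ℝ =>
      (((Real.sqrt ((k:ℝ) + 1))⁻¹ : ℝ) : ℂ) • (cexp (-(t * (v * rwo e) ^ 2)) * cexp (I * e * x * (v * rwo e)) - cexp (I * e * x * (v * rwo e))) := by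
      funext v
      have : (q * (v * rwo e)) ^ 2 / (4 * π * ((k:ℝ) + 1) : ℂ) = t * (v * rwo e) ^ 2 := by
        rw [ht]; push_cast; ring
      rw [rwEt, this, smul_eq_mul]; ring
    rw [hfun, mellin_const_smul, m12, smul_eq_mul]
    ring
  · have hre : 0 ≤ ((v * cexp ((e * y : ℝ) * I)) ^ 2 : ℂ).re := by
      have h1 : ((v * cexp ((e * y : ℝ) * I)) ^ 2 : ℂ) = ((v ^ 2 : ℝ) : ℂ) * cexp ((2 * (e * y) : ℝ) * I) := by
        rw [mul_pow, ← Complex.exp_nat_mul, show ((2:ℕ):ℂ)*((e*y:ℝ)*I) = (2*(e*y):ℝ)*I by push_cast; ring]; push_cast; ring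
      rw [h1, re_ofReal_mul, Complex.exp_ofReal_mul_I_re]
      have h2 : 0 ≤ Real.cos (2 * (e * y)) := by
        apply Real.cos_nonneg_of_neg_pi_div_two_le_of_le <;> rcases he with h | h <;> subst h <;> linarith [hy.1, hy.2]
      positivity
    refine (hn1 _ hre).trans ?_
    nlinarith [sq_nonneg v]
  · refine rw_mc (C := Real.exp (1 / (4 * t))) (c := 1) (Continuous.continuousOn (by fun_prop)) (by norm_num) (fun v hv => ?_) hs
    rw [Complex.norm_exp, ← Real.exp_add]
    refine Real.exp_le_exp.mpr ?_
    rw [show (-(t * (v:ℂ) ^ 2)) = ((-(t * v ^ 2) : ℝ) : ℂ) by push_cast; ring, ofReal_re]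
    have h3 : 0 ≤ t * (v - 1 / (2 * t)) ^ 2 := by positivity
    have h4 : t * (v - 1 / (2 * t)) ^ 2 = t * v ^ 2 - v + 1 / (4 * t) := by field_simp; ring
    linarith

end RW11

section RW12
open MeasureTheory Set Filter Topology

lemma rw_Gamma_bdd (M : ℝ) : ∃ C : ℝ, ∀ y ∈ Set.Icc (2:ℝ) M, Real.Gamma y ≤ C := by
  obtain ⟨C, hC⟩ := (isCompact_Icc (a := (2:ℝ)) (b := M)).exists_bound_of_continuousOn (f := Real.Gamma)
    (fun y hy => (Real.differentiableAt_Gamma (fun m => by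
      have : (2:ℝ) ≤ y := hy.1
      have h2 : (0:ℝ) ≤ m := by positivity
      linarith)).continuousAt.continuousWithinAt)
  exact ⟨C, fun y hy => (le_abs_self _).trans (hC y hy)⟩

lemma rw_inv_sq_summable : Summable (fun n : ℕ => (((n:ℝ) + 1) ^ 2)⁻¹) := by
  have := (Real.summable_one_div_nat_add_rpow 1 2).mpr (by norm_num)
  refine this.congr (fun n => ?_)
  rw [abs_of_pos (by positivity), Real.rpow_two, one_div]

lemma rw_xbound (n : ℕ) {a : ℝ} (ha : 0 < a) : (1 / ((2 * π * ((n:ℝ) + 1)) / 2)) ^ (a + 2) ≤ (((n:ℝ) + 1) ^ 2)⁻¹ := by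
  have hπ := Real.pi_gt_three
  have h1 : 1 / ((2 * π * ((n:ℝ) + 1)) / 2) ≤ ((n:ℝ) + 1)⁻¹ := by
    rw [one_div]
    apply inv_anti₀ (by positivity)
    nlinarith [(Nat.cast_nonneg n : (0:ℝ) ≤ n)]
  have h2 : ((n:ℝ) + 1)⁻¹ ≤ 1 := inv_le_one_of_one_le₀ (by linarith [(Nat.cast_nonneg n : (0:ℝ) ≤ n)])
  calc (1 / ((2 * π * ((n:ℝ) + 1)) / 2)) ^ (a + 2) ≤ (1 / ((2 * π * ((n:ℝ) + 1)) / 2)) ^ (2:ℝ) :=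
        Real.rpow_le_rpow_of_exponent_ge (by positivity) (h1.trans h2) (by linarith)
    _ ≤ (((n:ℝ) + 1)⁻¹) ^ (2:ℝ) := by gcongr
    _ = _ := by rw [Real.rpow_two, inv_pow]

lemma rwQ_unif {q : ℝ} (hq : 0 < q) (M : ℝ) : ∃ C : ℝ, ∀ (s : ℂ), 0 < s.re → s.re < M → |s.im| < M → ∀ (n : ℕ) (e : ℝ), (e = 1 ∨ e = -1) →
    ‖rwQ q e (2 * π * ((n:ℝ) + 1)) s‖ ≤ C * (((n:ℝ) + 1) ^ 2)⁻¹ := by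
  have hπ := Real.pi_pos
  obtain ⟨G, hG⟩ := rw_Gamma_bdd (M + 2)
  have hu : 0 ≤ ∑' k, rwu k := tsum_nonneg rwu_nonneg
  refine ⟨Real.exp (π / 4 * M) * (((∑' k, rwu k) * ((4 * π)⁻¹ * q ^ 2)) * G), fun s h1 h2 h3 n e he => ?_⟩
  refine (rwQ_bound hq he (by positivity) h1).trans ?_
  have h4 := rw_xbound n h1
  have h5 := hG (s.re + 2) ⟨by linarith, by linarith⟩
  have h6 : 0 < Real.Gamma (s.re + 2) := Real.Gamma_pos_of_pos (by linarith)
  have h7 : 0 ≤ G := h6.le.trans h5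
  calc _ ≤ Real.exp (π / 4 * M) * (((∑' k, rwu k) * ((4 * π)⁻¹ * q ^ 2)) * ((((n:ℝ) + 1) ^ 2)⁻¹ * G)) := by
        gcongr
    _ = _ := by ring

noncomputable def rwR (q : ℝ) (s : ℂ) : ℂ := ∑' n : ℕ, (rwQ q 1 (2 * π * ((n:ℝ) + 1)) s + rwQ q (-1) (2 * π * ((n:ℝ) + 1)) s)

lemma rwQ_summable {q e : ℝ} (hq : 0 < q) (he : e = 1 ∨ e = -1) {s : ℂ} (hs : 0 < s.re) :
    Summable (fun n : ℕ => rwQ q e (2 * π * ((n:ℝ) + 1)) s) := by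
  obtain ⟨C, hC⟩ := rwQ_unif hq (s.re + |s.im| + 1)
  exact Summable.of_norm_bounded (rw_inv_sq_summable.mul_left C) (fun n => hC s hs (by linarith [abs_nonneg s.im]) (by linarith) n e he)

/-- box -/
def rwbox (M : ℝ) : Set ℂ := {s : ℂ | 0 < s.re ∧ s.re < M ∧ |s.im| < M}

lemma rwbox_open (M : ℝ) : IsOpen (rwbox M) := by
  refine (isOpen_lt continuous_const continuous_re).inter ((isOpen_lt continuous_re continuous_const).inter ?_)
  exact isOpen_lt (continuous_im.abs) continuous_const

lemma rwbox_mem {s : ℂ} (hs : 0 < s.re) : s ∈ rwbox (s.re + |s.im| + 1) :=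
  ⟨hs, by linarith [abs_nonneg s.im], by linarith⟩

lemma rwR_diff {q : ℝ} (hq : 0 < q) {s : ℂ} (hs : 0 < s.re) : DifferentiableAt ℂ (rwR q) s := by
  have hπ := Real.pi_pos
  obtain ⟨C, hC⟩ := rwQ_unif hq (s.re + |s.im| + 1)
  have := Complex.differentiableOn_tsum_of_summable_norm (u := fun n : ℕ => 2 * C * (((n:ℝ) + 1) ^ 2)⁻¹)
    (F := fun (n : ℕ) (s : ℂ) => rwQ q 1 (2 * π * ((n:ℝ) + 1)) s + rwQ q (-1) (2 * π * ((n:ℝ) + 1)) s)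
    (rw_inv_sq_summable.mul_left _) (fun n w hw => ?_) (rwbox_open (s.re + |s.im| + 1)) (fun n w hw => ?_)
  · exact this.differentiableAt ((rwbox_open _).mem_nhds (rwbox_mem hs))
  · exact ((rwQ_diff hq (Or.inl rfl) (by positivity) hw.1).add (rwQ_diff hq (Or.inr rfl) (by positivity) hw.1)).differentiableWithinAt
  · refine (norm_add_le _ _).trans ?_
    have h1 := hC w hw.1 hw.2.1 hw.2.2 n 1 (Or.inl rfl)
    have h2 := hC w hw.1 hw.2.1 hw.2.2 n (-1) (Or.inr rfl)
    linarith

lemma rw_rpow_exp (a : ℝ) {c : ℝ} (hc : 0 < c) : ∃ C : ℝ, 0 ≤ C ∧ ∀ x : ℝ, 1 ≤ x → x ^ a * Real.exp (-c * x) ≤ C := by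
  obtain ⟨m, hm⟩ := exists_nat_ge a
  refine ⟨m.factorial / c ^ m, by positivity, fun x hx => ?_⟩
  have hx0 : 0 < x := by linarith
  have h1 : x ^ a ≤ x ^ m := by
    rw [← Real.rpow_natCast]; exact Real.rpow_le_rpow_of_exponent_le hx hm
  have h2 := Real.pow_div_factorial_le_exp (c * x) (by positivity) m
  rw [mul_pow, div_le_iff₀ (by positivity)] at h2
  have h3 : x ^ m ≤ m.factorial / c ^ m * Real.exp (c * x) := by
    rw [div_mul_eq_mul_div, le_div_iff₀ (by positivity)]; linarith
  rw [show Real.exp (-c * x) = (Real.exp (c * x))⁻¹ by rw [← Real.exp_neg]; congr 1; ring, ← div_eq_mul_inv, div_le_iff₀ (Real.exp_pos _)]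
  linarith

lemma rwf0_bound {q : ℝ} (hq : 0 < q) (M : ℝ) : ∃ C : ℝ, 0 ≤ C ∧ ∀ s : ℂ, s.re ≤ M → ∀ x : ℝ, 1 ≤ x →
    ‖(x:ℂ) ^ (s - 1) * rwD (q * x)‖ ≤ C * x ^ (-2:ℝ) := by
  obtain ⟨C, hC⟩ := rwD_decay
  have hC0 : 0 ≤ C := by
    have := (norm_nonneg _).trans (hC 0 le_rfl); simpa using this
  obtain ⟨C2, hC20, hC2⟩ := rw_rpow_exp (M + 1) (c := 1 / 2 * q) (by positivity)
  refine ⟨C * C2, by positivity, fun s hs x hx => ?_⟩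
  have hx0 : 0 < x := by linarith
  rw [norm_mul, norm_cpow_eq_rpow_re_of_pos hx0]
  have h1 := hC (q * x) (by positivity)
  push_cast at h1
  have h2 := hC2 x hx
  have h3 : x ^ (s - 1).re ≤ x ^ (M + 1) * x ^ (-2:ℝ) := by
    rw [← Real.rpow_add hx0]
    refine Real.rpow_le_rpow_of_exponent_le hx ?_
    simp; linarith
  calc _ ≤ (x ^ (M + 1) * x ^ (-2:ℝ)) * (C * Real.exp (-(1/2) * (q * x))) := by gcongr
    _ = C * (x ^ (M + 1) * Real.exp (-(1 / 2 * q) * x)) * x ^ (-2:ℝ) := by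
        rw [show -(1/2) * (q * x) = -(1 / 2 * q) * x by ring]; ring
    _ ≤ _ := by gcongr

noncomputable def rwL (q : ℝ) (s : ℂ) : ℂ := ∑' n : ℕ, ((((n:ℝ) + 1 : ℝ) : ℂ) ^ (s - 1) * rwD (q * ((n:ℝ) + 1 : ℝ)))

lemma rwL_diff {q : ℝ} (hq : 0 < q) {s : ℂ} (hs : 0 < s.re) : DifferentiableAt ℂ (rwL q) s := by
  obtain ⟨C, hC0, hC⟩ := rwf0_bound hq (s.re + |s.im| + 1)
  have := Complex.differentiableOn_tsum_of_summable_norm (u := fun n : ℕ => C * (((n:ℝ) + 1) ^ 2)⁻¹)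
    (F := fun (n : ℕ) (s : ℂ) => ((((n:ℝ) + 1 : ℝ) : ℂ) ^ (s - 1) * rwD (q * ((n:ℝ) + 1 : ℝ))))
    (rw_inv_sq_summable.mul_left _) (fun n w hw => ?_) (rwbox_open (s.re + |s.im| + 1)) (fun n w hw => ?_)
  · exact this.differentiableAt ((rwbox_open _).mem_nhds (rwbox_mem hs))
  · have hne : (((n:ℝ) + 1 : ℝ) : ℂ) ≠ 0 := ofReal_ne_zero.mpr (by positivity)
    have h1 : DifferentiableAt ℂ (fun s : ℂ => (((n:ℝ) + 1 : ℝ) : ℂ) ^ (s - 1)) w :=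
      DifferentiableAt.const_cpow (by fun_prop) (Or.inl hne)
    exact (h1.mul_const _).differentiableWithinAt
  · have := hC w hw.2.1.le ((n:ℝ) + 1) (by linarith [(Nat.cast_nonneg n : (0:ℝ) ≤ n)])
    rwa [Real.rpow_neg (by positivity), Real.rpow_two] at this

end RW12

section RW13
open MeasureTheory Set Filter Topology
open scoped FourierTransform

noncomputable def rwM (s : ℂ) : ℂ := mellin (fun v : ℝ => rwD v) s

lemma rwD_mc {q : ℝ} (hq : 0 < q) {s : ℂ} (hs : 0 < s.re) : MellinConvergent (fun v : ℝ => rwD (q * v)) s := by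
  obtain ⟨C', hC'⟩ := rwD_decay
  refine rw_mc (C := C') (c := 1/2 * q) ?_ (by positivity) (fun v hv => ?_) hs
  · have := rwD_diff.continuous
    exact Continuous.continuousOn (by fun_prop)
  · have := hC' (q * v) (by have : 0 < v := hv; positivity)
    push_cast at this
    refine this.trans (le_of_eq ?_)
    congr 2; ring

lemma rwc_sq_sum (s : ℂ) : rwc 1 s ^ 2 + rwc (-1) s ^ 2 = 2 * Complex.cos (π * s / 2) := by
  rw [rwc, rwc, ← Complex.exp_nat_mul, ← Complex.exp_nat_mul, Complex.two_cos]
  congr 2 <;> push_cast <;> ring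

lemma rw_zeta_hasSum {s : ℂ} (hs : 1 < s.re) : HasSum (fun n : ℕ => ((2 * π * ((n:ℝ) + 1) : ℝ) : ℂ) ^ (-s)) (((2 * π : ℝ) : ℂ) ^ (-s) * riemannZeta s) := by
  have hπ := Real.pi_pos
  have h1 : Summable (fun n : ℕ => 1 / (((n:ℂ) + 1) ^ s)) := by
    have := (Complex.summable_one_div_nat_cpow (p := s)).mpr hs
    have := (summable_nat_add_iff 1).mpr this
    simpa using this
  have h2 := h1.hasSum
  rw [← zeta_eq_tsum_one_div_nat_add_one_cpow hs] at h2
  refine (h2.mul_left _).congr_fun ?_ |> id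
  intro n
  rw [show ((2 * π * ((n:ℝ) + 1) : ℝ) : ℂ) = ((2 * π : ℝ) : ℂ) * (((n:ℝ) + 1 : ℝ) : ℂ) by push_cast; ring,
    mul_cpow_ofReal_nonneg (by positivity) (by positivity), cpow_neg (((n:ℝ) + 1 : ℝ) : ℂ)]
  push_cast; rw [one_div]

lemma rw_zeta_term {s : ℂ} (hs : 1 < s.re) : HasSum (fun n : ℕ => (rwc 1 s ^ 2 + rwc (-1) s ^ 2) * ((2 * π * ((n:ℝ) + 1) : ℝ) : ℂ) ^ (-s) * Complex.Gamma s) (riemannZeta (1 - s)) := by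
  have h := ((rw_zeta_hasSum hs).mul_left (rwc 1 s ^ 2 + rwc (-1) s ^ 2)).mul_right (Complex.Gamma s)
  suffices h3 : riemannZeta (1 - s) = (rwc 1 s ^ 2 + rwc (-1) s ^ 2) * (((2 * π : ℝ) : ℂ) ^ (-s) * riemannZeta s) * Complex.Gamma s by
    rw [h3]; exact h
  rw [rwc_sq_sum, riemannZeta_one_sub (fun n h => by rw [h] at hs; simp at hs; linarith [(Nat.cast_nonneg n : (0:ℝ) ≤ n)]) (fun h => by rw [h] at hs; simp at hs)]
  push_cast
  ring

lemma rw_id1 {q : ℝ} (hq : 0 < q) {s : ℂ} (hs : 1 < s.re) :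
    (Real.sqrt 2 : ℂ) * rwL q s = rwK * riemannZeta (1 - s) + q * riemannZeta (-s) +
      Real.sqrt 2 * ((q:ℂ) ^ (-s) * rwM s) + rwR q s := by
  have hπ := Real.pi_pos
  have hs0 : 0 < s.re := by linarith
  set f0 : ℝ → ℂ := fun x => (x:ℂ) ^ (s - 1) * rwD (q * x) with hf0
  have hinteg : IntegrableOn f0 (Ioi 0) := rwD_mc hq hs0
  have hcont : Continuous (fun x : ℝ => f0 |x|) := by
    have h1 : Continuous (fun x : ℝ => ((|x| : ℝ) : ℂ) ^ (s - 1)) :=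
      (continuous_ofReal_cpow_const (by simp; linarith)).comp continuous_abs
    have h2 := rwD_diff.continuous
    rw [hf0]
    exact h1.mul (by fun_prop)
  obtain ⟨C, hC0, hC⟩ := rwf0_bound hq s.re
  have hF : ∀ n : ℕ, (Real.sqrt 2 : ℂ) * 𝓕 (fun x : ℝ => f0 |x|) ((n:ℝ) + 1) =
      rwK * ((rwc 1 s ^ 2 + rwc (-1) s ^ 2) * ((2 * π * ((n:ℝ) + 1) : ℝ) : ℂ) ^ (-s) * Complex.Gamma s)
      + q * ((rwc 1 (s+1) ^ 2 + rwc (-1) (s+1) ^ 2) * ((2 * π * ((n:ℝ) + 1) : ℝ) : ℂ) ^ (-(s+1)) * Complex.Gamma (s+1))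
      + (rwQ q 1 (2 * π * ((n:ℝ) + 1)) s + rwQ q (-1) (2 * π * ((n:ℝ) + 1)) s) := by
    intro n
    have hm : ∀ e : ℝ, (∫ x in Ioi (0:ℝ), f0 x * cexp (I * (e:ℝ) * (2 * π * ((n:ℝ) + 1) : ℝ) * x)) =
        mellin (fun v : ℝ => rwD (q * v) * cexp (I * e * (2 * π * ((n:ℝ) + 1) : ℝ) * v)) s := by
      intro e
      rw [mellin]
      refine integral_congr_ae (ae_of_all _ (fun x => ?_))
      simp only [hf0, smul_eq_mul]; ring
    rw [rw_fourier_even hinteg, hm, hm, mul_add, rwB1 hq (Or.inl rfl) (by positivity) hs0, rwB1 hq (Or.inr rfl) (by positivity) hs0]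
    ring
  have hS1 := (rw_zeta_term hs).mul_left rwK
  have hS2 := (rw_zeta_term (s := s + 1) (by simp; linarith)).mul_left (q:ℂ)
  have hS3 := ((rwQ_summable hq (Or.inl rfl) hs0).add (rwQ_summable hq (Or.inr rfl) hs0)).hasSum
  have hS := (hS1.add hS2).add hS3
  have hS' : HasSum (fun n : ℕ => (Real.sqrt 2 : ℂ) * 𝓕 (fun x : ℝ => f0 |x|) ((n:ℝ) + 1)) (rwK * riemannZeta (1 - s) + q * riemannZeta (1 - (s+1)) + rwR q s) := by
    simp_rw [hF]; exact hS
  have hsum2 : Summable (fun n : ℕ => 𝓕 (fun x : ℝ => f0 |x|) ((n:ℝ) + 1)) :=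
    (summable_mul_left_iff rw_sqrt2_ne).mp hS'.summable
  have hP := rw_poisson_even hinteg hcont (b := 2) (by norm_num) (fun x hx => hC s le_rfl x hx) hsum2
  have hT := hS'.tsum_eq
  rw [tsum_mul_left] at hT
  have hz : f0 0 = 0 := by
    simp only [hf0]
    rw [ofReal_zero, zero_cpow (fun h => by rw [sub_eq_zero] at h; rw [h] at hs; simp at hs), zero_mul]
  have h0 : 𝓕 (fun x : ℝ => f0 |x|) 0 = 2 * ((q:ℂ) ^ (-s) * rwM s) := by
    rw [rw_fourier_even hinteg]
    have := mellin_comp_mul_left (fun v : ℝ => rwD v) s hq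
    have h3 : ∀ e : ℝ, (∫ x in Ioi (0:ℝ), f0 x * cexp (I * (e:ℝ) * (2 * π * (0:ℝ) : ℝ) * x)) = mellin (fun v : ℝ => rwD ((q * v : ℝ):ℂ)) s := by
      intro e
      rw [mellin]
      refine integral_congr_ae (ae_of_all _ (fun x => ?_))
      simp [hf0]
    rw [h3, h3, this, smul_eq_mul, rwM]; ring
  rw [hz, h0] at hP
  have hL : rwL q s = ∑' n : ℕ, f0 ((n:ℝ) + 1) := rfl
  rw [hL]
  have e1 : (1 - (s + 1)) = -s := by ring
  rw [e1] at hT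
  linear_combination (Real.sqrt 2 : ℂ) / 2 * hP + hT

lemma rw_id2 {q : ℝ} (hq : 0 < q) {s : ℂ} (hs : 0 < s.re) :
    (Real.sqrt 2 : ℂ) * rwL q s = rwK * riemannZeta (1 - s) + q * riemannZeta (-s) +
      Real.sqrt 2 * ((q:ℂ) ^ (-s) * rwM s) + rwR q s := by
  refine rw_identity (f := fun s => (Real.sqrt 2 : ℂ) * rwL q s) (g := fun s => rwK * riemannZeta (1 - s) + q * riemannZeta (-s) +
      Real.sqrt 2 * ((q:ℂ) ^ (-s) * rwM s) + rwR q s) (fun s hs => ?_) (fun s hs => ?_) 1 (fun s h1 _ => rw_id1 hq h1) hs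
  · exact (rwL_diff hq hs).const_mul _
  · have h1 : DifferentiableAt ℂ (fun s : ℂ => riemannZeta (1 - s)) s :=
      (differentiableAt_riemannZeta (s := 1 - s) (fun h => by
        have : s = 0 := by linear_combination -h
        rw [this] at hs; simp at hs)).comp s (by fun_prop)
    have h2 : DifferentiableAt ℂ (fun s : ℂ => riemannZeta (-s)) s :=
      (differentiableAt_riemannZeta (s := -s) (fun h => by
        have : s = -1 := by linear_combination -h
        rw [this] at hs; norm_num at hs)).comp s (by fun_prop)
    have h3 : DifferentiableAt ℂ (fun s : ℂ => (q:ℂ) ^ (-s)) s :=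
      DifferentiableAt.const_cpow (by fun_prop) (Or.inl (ofReal_ne_zero.mpr hq.ne'))
    have h4 : DifferentiableAt ℂ rwM s := rwD_mellin_diff hs
    exact (((h1.const_mul _).add (h2.const_mul _)).add ((h3.mul h4).const_mul _)).add (rwR_diff hq hs)

end RW13

section RW14
open MeasureTheory Set Filter Topology

lemma poch_succ (a : ℂ) (k : ℕ) : poch a (k + 1) = poch a k * (a + k) := by
  rw [poch, poch, Finset.prod_range_succ]

lemma rw_Gamma_poch {a : ℂ} (ha : 0 < a.re) (k : ℕ) : Complex.Gamma (a + k) = poch a k * Complex.Gamma a := by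
  induction k with
  | zero => simp [poch]
  | succ k ih =>
    have : a + k ≠ 0 := fun h => by
      have h2 := congrArg Complex.re h
      simp at h2
      linarith [(Nat.cast_nonneg k : (0:ℝ) ≤ k)]
    rw [show a + ((k + 1 : ℕ) : ℂ) = (a + k) + 1 by push_cast; ring, Complex.Gamma_add_one _ this, ih, poch_succ]
    ring

lemma rw_poch_half (k : ℕ) : ((2 * k).factorial : ℂ) = 4 ^ k * (poch (1 / 2) k * k.factorial) := by
  induction k with
  | zero => simp [poch]
  | succ k ih =>
    rw [show 2 * (k + 1) = (2 * k + 1) + 1 by ring, Nat.factorial_succ, Nat.factorial_succ, Nat.factorial_succ k, poch_succ]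
    push_cast
    rw [ih]
    ring

lemma poch_half_ne (k : ℕ) : poch (1 / 2) k ≠ 0 := by
  intro h
  have := rw_poch_half k
  rw [h] at this
  simp at this
  exact (Nat.factorial_ne_zero _) this

lemma rw_gauss_mellin {t : ℝ} (ht : 0 < t) {s : ℂ} (hs : 0 < s.re) :
    mellin (fun v : ℝ => cexp (-(t * v ^ 2))) s = 2⁻¹ * ((t:ℂ) ^ (-(s / 2)) * Complex.Gamma (s / 2)) := by
  have h1 := mellin_comp_rpow (fun u : ℝ => cexp (-(t * u))) s 2
  have h2 : (fun v : ℝ => cexp (-(t * v ^ 2))) = fun v : ℝ => cexp (-(t * ((v ^ (2:ℝ) : ℝ) : ℂ))) := by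
    funext v; rw [Real.rpow_two]; push_cast; rfl
  have h3 := rw_gamma_ray ht (φ := 0) (by simp; positivity) (s := s / 2) (by
    rw [show s / 2 = ((1/2 : ℝ) : ℂ) * s by push_cast; ring, re_ofReal_mul]; positivity)
  have h4 : (fun u : ℝ => cexp (-(t * u))) = fun v : ℝ => cexp (-(t * cexp ((0:ℝ) * I)) * v) := by
    funext v; congr 1; simp
  rw [h2, h1, h4, ofReal_ofNat, h3, abs_of_pos (by norm_num : (0:ℝ) < 2)]
  rw [real_smul]
  simp

lemma rw_gauss_mc {t : ℝ} (ht : 0 < t) {s : ℂ} (hs : 0 < s.re) : MellinConvergent (fun v : ℝ => cexp (-(t * v ^ 2))) s := by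
  refine rw_mc (C := Real.exp (1 / (4 * t))) (c := 1) (Continuous.continuousOn (by fun_prop)) (by norm_num) (fun v hv => ?_) hs
  rw [Complex.norm_exp, ← Real.exp_add]
  refine Real.exp_le_exp.mpr ?_
  rw [show (-(t * (v:ℂ) ^ 2)) = ((-(t * v ^ 2) : ℝ) : ℂ) by push_cast; ring, ofReal_re]
  have h3 : 0 ≤ t * (v - 1 / (2 * t)) ^ 2 := by positivity
  have h4 : t * (v - 1 / (2 * t)) ^ 2 = t * v ^ 2 - v + 1 / (4 * t) := by field_simp; ring
  linarith

lemma rw_gauss_cos {t x : ℝ} (ht : 0 < t) {s : ℂ} (hs : 0 < s.re) :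
    mellin (fun v : ℝ => Complex.cos (x * v) * cexp (-(t * v ^ 2))) s =
      2⁻¹ * ((t:ℂ) ^ (-(s / 2)) * Complex.Gamma (s / 2) * F11 (s / 2) (1 / 2) (-(x ^ 2 / (4 * t) : ℝ))) := by
  have hs2 : 0 < (s / 2).re := by
    rw [show s / 2 = ((1/2 : ℝ) : ℂ) * s by push_cast; ring, re_ofReal_mul]; positivity
  have htC : (t:ℂ) ≠ 0 := ofReal_ne_zero.mpr ht.ne'
  have h := rw_mellin_sum (f := fun (k : ℕ) (v : ℝ) => ((-1) ^ k * (x * v : ℂ) ^ (2 * k) / (2 * k).factorial) * cexp (-(t * v ^ 2)))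
    (b := fun v : ℝ => cexp (-((t / 2 : ℝ) * v ^ 2))) (u := fun k => (2 * x ^ 2 / t) ^ k / k.factorial) (s := s)
    (rw_gauss_mc (by positivity) hs) (Real.summable_pow_div_factorial _)
    (fun k => Continuous.continuousOn (by fun_prop)) (fun k v hv => ?_)
  · have h1 : (fun v : ℝ => ∑' k : ℕ, ((-1) ^ k * (x * v : ℂ) ^ (2 * k) / (2 * k).factorial) * cexp (-(t * v ^ 2))) =
        fun v : ℝ => Complex.cos (x * v) * cexp (-(t * v ^ 2)) := by
      funext v
      rw [tsum_mul_right, (Complex.hasSum_cos (x * v)).tsum_eq]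
    have h2 : ∀ k : ℕ, mellin (fun v : ℝ => ((-1) ^ k * (x * v : ℂ) ^ (2 * k) / (2 * k).factorial) * cexp (-(t * v ^ 2))) s =
        2⁻¹ * ((t:ℂ) ^ (-(s / 2)) * Complex.Gamma (s / 2)) * (poch (s / 2) k / (poch (1 / 2) k * (k.factorial : ℂ)) * (-(x ^ 2 / (4 * t) : ℝ) : ℂ) ^ k) := by
      intro k
      have h3 : (fun v : ℝ => ((-1) ^ k * (x * v : ℂ) ^ (2 * k) / (2 * k).factorial) * cexp (-(t * v ^ 2))) =
        fun v : ℝ => ((-1) ^ k * (x : ℂ) ^ (2 * k) / (2 * k).factorial) • ((v:ℂ) ^ ((2 * k : ℕ) : ℂ) • cexp (-(t * v ^ 2))) := by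
        funext v
        rw [smul_eq_mul, smul_eq_mul, cpow_natCast, mul_pow]; ring
      rw [h3, mellin_const_smul, mellin_cpow_smul, rw_gauss_mellin ht (by
        simp only [add_re, natCast_re]
        positivity), show (s + ((2 * k : ℕ) : ℂ)) / 2 = s / 2 + k by push_cast; ring, rw_Gamma_poch hs2,
        neg_add, cpow_add _ _ htC, rw_poch_half, cpow_neg _ (k:ℂ), cpow_natCast, smul_eq_mul]
      have := poch_half_ne k
      have hk : (k.factorial : ℂ) ≠ 0 := by exact_mod_cast Nat.factorial_ne_zero k
      generalize (t:ℂ) ^ (-(s / 2)) = T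
      push_cast
      rw [neg_pow ((x:ℂ) ^ 2 / (4 * t)), div_pow, mul_pow, ← pow_mul]
      field_simp
    rw [h1] at h
    simp_rw [h2] at h
    rw [← h.tsum_eq, tsum_mul_left, F11]
    ring
  · have hv : 0 < v := hv
    have e1 : ∀ t : ℝ, ‖cexp (-(t * (v:ℂ) ^ 2))‖ = Real.exp (-(t * v ^ 2)) := by
      intro t
      rw [Complex.norm_exp, show (-(t * (v:ℂ) ^ 2)) = ((-(t * v ^ 2) : ℝ) : ℂ) by push_cast; ring, ofReal_re]
    rw [norm_mul, e1, e1]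
    have e2 : ‖((-1) ^ k * (x * v : ℂ) ^ (2 * k) / (2 * k).factorial)‖ = (x ^ 2) ^ k * (v ^ 2) ^ k / (2 * k).factorial := by
      rw [norm_div, norm_mul, norm_pow, norm_pow, norm_neg, norm_one, one_pow, one_mul, norm_mul, Complex.norm_real, Complex.norm_real, pow_mul, mul_pow, mul_pow, Complex.norm_natCast]
      simp
    rw [e2]
    have e3 := Real.pow_div_factorial_le_exp (t / 2 * v ^ 2) (by positivity) k
    have e4 : Real.exp (-(t * v ^ 2)) = (Real.exp (t / 2 * v ^ 2))⁻¹ * Real.exp (-(t / 2 * v ^ 2)) := by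
      rw [← Real.exp_neg, ← Real.exp_add]; congr 1; ring
    rw [e4, ← mul_assoc]
    refine mul_le_mul_of_nonneg_right ?_ (Real.exp_pos _).le
    rw [← div_eq_mul_inv, div_le_iff₀ (Real.exp_pos _)]
    have e5 : ((k.factorial : ℝ) * k.factorial) ≤ (2 * k).factorial := by
      have := Nat.le_of_dvd (Nat.factorial_pos _) (Nat.factorial_mul_factorial_dvd_factorial_add k k)
      rw [← two_mul] at this
      exact_mod_cast this
    have hk : (0:ℝ) < k.factorial := by exact_mod_cast Nat.factorial_pos k
    calc (x ^ 2) ^ k * (v ^ 2) ^ k / (2 * k).factorial ≤ (x ^ 2) ^ k * (v ^ 2) ^ k / (k.factorial * k.factorial) := by gcongr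
      _ = (2 * x ^ 2 / t) ^ k / k.factorial * ((t / 2 * v ^ 2) ^ k / k.factorial) := by
          rw [div_pow, mul_pow, mul_pow, div_pow]; field_simp
      _ ≤ _ := by gcongr

lemma rw_F11_rep {t x : ℝ} (ht : 0 < t) {s : ℂ} (hs : 0 < s.re) :
    mellin (fun v : ℝ => cexp (-(t * v ^ 2)) * cexp (I * (1:ℝ) * x * v)) s + mellin (fun v : ℝ => cexp (-(t * v ^ 2)) * cexp (I * (-1:ℝ) * x * v)) s =
      (t:ℂ) ^ (-(s / 2)) * Complex.Gamma (s / 2) * F11 (s / 2) (1 / 2) (-(x ^ 2 / (4 * t) : ℝ)) := by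
  have hm : ∀ e : ℝ, MellinConvergent (fun v : ℝ => cexp (-(t * v ^ 2)) * cexp (I * e * x * v)) s := by
    intro e
    refine rw_mc_of_le (rw_gauss_mc ht hs) (Continuous.continuousOn (by fun_prop)) (fun v hv => ?_)
    rw [norm_mul, show I * e * x * v = ((e * x * v : ℝ) : ℂ) * I by push_cast; ring, Complex.norm_exp_ofReal_mul_I, mul_one]
  have h1 := (hasMellin_add (hm 1) (hm (-1))).2
  rw [← h1]
  have h2 : (fun v : ℝ => cexp (-(t * v ^ 2)) * cexp (I * (1:ℝ) * x * v) + cexp (-(t * v ^ 2)) * cexp (I * (-1:ℝ) * x * v)) =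
      fun v : ℝ => (2:ℂ) • (Complex.cos (x * v) * cexp (-(t * v ^ 2))) := by
    funext v
    rw [smul_eq_mul, ← mul_assoc, Complex.two_cos, show I * (1:ℝ) * x * v = x * v * I by push_cast; ring, show I * (-1:ℝ) * x * v = -(x * v) * I by push_cast; ring]
    ring
  rw [h2, mellin_const_smul, rw_gauss_cos ht hs, smul_eq_mul]
  ring

end RW14

section RW15
open MeasureTheory Set Filter Topology

lemma rw_regroup (w : ℂ) (H : ℕ → ℂ) (hS : Summable (fun p : ℕ × ℕ => ((p.1 + 1 : ℕ) : ℂ) ^ w * H ((p.1 + 1) ^ 2 * (p.2 + 1)))) :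
    ∑' N : ℕ, cpsi w (N + 1) * H (N + 1) = ∑' p : ℕ × ℕ, ((p.1 + 1 : ℕ) : ℂ) ^ w * H ((p.1 + 1) ^ 2 * (p.2 + 1)) := by
  set φ : ℕ × ℕ → ℕ := fun p => (p.1 + 1) ^ 2 * (p.2 + 1) - 1 with hφ
  have h := hS.hasSum.tsum_fiberwise φ
  rw [← h.tsum_eq]
  refine tsum_congr (fun N => ?_)
  set i : ℕ → ℕ × ℕ := fun j => (j - 1, (N + 1) / j ^ 2 - 1) with hi
  set S := (Finset.Icc 1 (N+1)).filter (fun j => j ^ 2 ∣ (N+1)) with hSdef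
  have key : ∀ j ∈ S, (j - 1) + 1 = j ∧ ((N + 1) / j ^ 2 - 1) + 1 = (N + 1) / j ^ 2 ∧ j ^ 2 * ((N + 1) / j ^ 2) = N + 1 := by
    intro j hj
    rw [hSdef, Finset.mem_filter, Finset.mem_Icc] at hj
    obtain ⟨⟨h1, h2⟩, h3⟩ := hj
    have h4 : 0 < (N + 1) / j ^ 2 := Nat.div_pos (Nat.le_of_dvd (by omega) h3) (by positivity)
    exact ⟨by omega, by omega, Nat.mul_div_cancel' h3⟩
  have hset : φ ⁻¹' {N} = ((S.image i : Finset (ℕ × ℕ)) : Set (ℕ × ℕ)) := by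
    ext ⟨a, b⟩
    simp only [Set.mem_preimage, Set.mem_singleton_iff, Finset.coe_image, Set.mem_image, Finset.mem_coe, hφ, hi, Prod.mk.injEq]
    constructor
    · intro hN
      have hpos : 0 < (a + 1) ^ 2 * (b + 1) := by positivity
      have hN' : (a + 1) ^ 2 * (b + 1) = N + 1 := by omega
      refine ⟨a + 1, ?_, by omega, ?_⟩
      · rw [hSdef, Finset.mem_filter, Finset.mem_Icc]
        refine ⟨⟨by omega, ?_⟩, ⟨b + 1, hN'.symm⟩⟩
        rw [← hN']; nlinarith [Nat.zero_le a, Nat.zero_le b, Nat.zero_le (a*b), Nat.zero_le (a^2), Nat.zero_le (a^2*b)]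
      · rw [← hN', Nat.mul_div_cancel_left _ (by positivity)]; omega
    · rintro ⟨j, hj, rfl, rfl⟩
      obtain ⟨h1, h2, h3⟩ := key j hj
      rw [h1, h2, h3]; omega
  rw [hset]
  refine Eq.trans ?_ ((S.image i).tsum_subtype' (fun p : ℕ × ℕ => ((p.1 + 1 : ℕ) : ℂ) ^ w * H ((p.1 + 1) ^ 2 * (p.2 + 1)))).symm
  rw [Finset.sum_image]
  · rw [cpsi, Finset.sum_mul]
    refine Finset.sum_congr rfl (fun j hj => ?_)
    obtain ⟨h1, h2, h3⟩ := key j hj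
    simp only [hi]
    rw [h1, h2, h3]
  · intro a ha b hb hab
    have h1 := (key a ha).1
    have h2 := (key b hb).1
    simp only [hi, Prod.mk.injEq] at hab
    omega

end RW15

section RW16
open MeasureTheory Set Filter Topology

lemma rw_ofReal_exp {y : ℝ} (hy : 0 < y) : (y:ℂ) = cexp ((Real.log y : ℝ) : ℂ) := by
  rw [← ofReal_exp, Real.exp_log hy]

lemma rw_pow1 {m kk q : ℝ} (hm : 0 < m) (hk : 0 < kk) (hq : 0 < q) (s : ℂ) :
    (m:ℂ) ^ (1 - s) * ((2:ℂ) ^ (-s - 1/2) * (π:ℂ) ^ (-s - 2) * q) * ((m ^ 2 * kk : ℝ) : ℂ)⁻¹ *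
      ((2:ℂ) ^ (2 * s) * (π:ℂ) ^ (3 * s / 2 + 2) * ((m ^ 2 * kk / q ^ 2 : ℝ) : ℂ) ^ ((s + 1) / 2)) =
    (Real.sqrt 2 : ℂ)⁻¹ * (((Real.sqrt kk)⁻¹ : ℝ) : ℂ) * ((q ^ 2 / (4 * π * kk) : ℝ) : ℂ) ^ (-(s / 2)) := by
  have hπ := Real.pi_pos
  have e2 : (2:ℂ) = ((2:ℝ) : ℂ) := by norm_num
  have l1 : Real.log (m ^ 2 * kk) = 2 * Real.log m + Real.log kk := by
    rw [Real.log_mul (by positivity) (by positivity), Real.log_pow]; norm_num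
  have l2 : Real.log (m ^ 2 * kk / q ^ 2) = 2 * Real.log m + Real.log kk - 2 * Real.log q := by
    rw [Real.log_div (by positivity) (by positivity), l1, Real.log_pow]; norm_num
  have l3 : Real.log (q ^ 2 / (4 * π * kk)) = 2 * Real.log q - (2 * Real.log 2 + Real.log π + Real.log kk) := by
    rw [Real.log_div (by positivity) (by positivity), Real.log_mul (by positivity) (by positivity), Real.log_mul (by positivity) (by positivity), Real.log_pow, show (4:ℝ) = 2 ^ 2 by norm_num, Real.log_pow]; norm_num
  have l4 : Real.log (Real.sqrt kk)⁻¹ = - (Real.log kk / 2) := by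
    rw [Real.log_inv, Real.log_sqrt hk.le]
  have l5 : Real.log (Real.sqrt 2) = Real.log 2 / 2 := Real.log_sqrt (by norm_num)
  have h2 : ∀ w : ℂ, (2:ℂ) ^ w = cexp (w * (Real.log 2 : ℝ)) := by
    intro w; have := rw_cpow (by norm_num : (0:ℝ) < 2) w; simpa using this
  rw [rw_cpow hm, h2, h2, rw_cpow hπ, rw_cpow hπ, rw_cpow (by positivity : 0 < m ^ 2 * kk / q ^ 2), rw_cpow (by positivity : 0 < q ^ 2 / (4 * π * kk)),
    rw_ofReal_exp (by positivity : 0 < m ^ 2 * kk), rw_ofReal_exp (by positivity : 0 < Real.sqrt 2), rw_ofReal_exp (by positivity : 0 < (Real.sqrt kk)⁻¹), l1, l2, l3, l4, l5,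
    rw_ofReal_exp hq, ← Complex.exp_neg, ← Complex.exp_neg]
  simp only [← Complex.exp_add]
  congr 1
  push_cast
  ring

lemma rw_pow2 {m kk q : ℝ} (hm : 0 < m) (hk : 0 < kk) (hq : 0 < q) (s : ℂ) :
    (m:ℂ) ^ (1 - s) * ((2:ℂ) ^ (-s - 1/2) * (π:ℂ) ^ (-s - 2) * q) * ((m ^ 2 * kk : ℝ) : ℂ)⁻¹ *
      ((π:ℂ) ^ 3 * (Real.sqrt (m ^ 2 * kk) : ℂ) * (q:ℂ)⁻¹) =
    (Real.sqrt 2 : ℂ)⁻¹ * (((Real.sqrt kk)⁻¹ : ℝ) : ℂ) * (π * ((2 * π * m : ℝ) : ℂ) ^ (-s)) := by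
  have hπ := Real.pi_pos
  have l1 : Real.log (m ^ 2 * kk) = 2 * Real.log m + Real.log kk := by
    rw [Real.log_mul (by positivity) (by positivity), Real.log_pow]; norm_num
  have l2 : Real.log (Real.sqrt (m ^ 2 * kk)) = (2 * Real.log m + Real.log kk) / 2 := by
    rw [Real.log_sqrt (by positivity), l1]
  have l3 : Real.log (2 * π * m) = Real.log 2 + Real.log π + Real.log m := by
    rw [Real.log_mul (by positivity) (by positivity), Real.log_mul (by positivity) (by positivity)]
  have l4 : Real.log (Real.sqrt kk)⁻¹ = - (Real.log kk / 2) := by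
    rw [Real.log_inv, Real.log_sqrt hk.le]
  have l5 : Real.log (Real.sqrt 2) = Real.log 2 / 2 := Real.log_sqrt (by norm_num)
  have h2 : ∀ w : ℂ, (2:ℂ) ^ w = cexp (w * (Real.log 2 : ℝ)) := by
    intro w; have := rw_cpow (by norm_num : (0:ℝ) < 2) w; simpa using this
  rw [rw_cpow hm, h2, rw_cpow hπ, rw_cpow (by positivity : 0 < 2 * π * m),
    rw_ofReal_exp (by positivity : 0 < m ^ 2 * kk), rw_ofReal_exp (by positivity : 0 < Real.sqrt 2), rw_ofReal_exp (by positivity : 0 < (Real.sqrt kk)⁻¹),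
    rw_ofReal_exp (by positivity : 0 < Real.sqrt (m ^ 2 * kk)), l1, l2, l3, l4, l5,
    rw_ofReal_exp hq, rw_ofReal_exp hπ, ← Complex.exp_neg, ← Complex.exp_neg, ← Complex.exp_neg, ← Complex.exp_nat_mul]
  simp only [← Complex.exp_add]
  congr 1
  push_cast
  ring

lemma rw_refl {s : ℂ} (hs : 0 < s.re) (hsev : ∀ k : ℕ, s ≠ 2 * ((k : ℂ) + 1)) :
    (π:ℂ) * (Complex.Gamma (1 - s) * Complex.sin (π * s / 2))⁻¹ = 2 * Complex.cos (π * s / 2) * Complex.Gamma s := by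
  have hπ : (π:ℂ) ≠ 0 := ofReal_ne_zero.mpr Real.pi_ne_zero
  have hG : Complex.Gamma s ≠ 0 := Complex.Gamma_ne_zero_of_re_pos hs
  have hsin : Complex.sin (π * s / 2) ≠ 0 := by
    intro h
    rw [Complex.sin_eq_zero_iff] at h
    obtain ⟨k, hk⟩ := h
    have h1 : s = 2 * k := by
      have : (π:ℂ) * (s - 2 * k) = 0 := by linear_combination 2 * hk
      rcases mul_eq_zero.mp this with h | h
      · exact absurd h hπ
      · linear_combination h
    have h2 : 0 < k := by
      rw [h1] at hs
      have : (2 * (k:ℂ)).re = 2 * (k:ℝ) := by simp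
      rw [this] at hs
      have : (0:ℝ) < k := by linarith
      exact_mod_cast this
    apply hsev (k - 1).toNat
    rw [h1]
    have : (((k - 1).toNat : ℤ) : ℂ) = ((k - 1 : ℤ) : ℂ) := by rw [Int.toNat_of_nonneg (by omega)]
    push_cast at this
    rw [this]; ring
  have hsd : Complex.sin (π * s) = 2 * Complex.sin (π * s / 2) * Complex.cos (π * s / 2) := by
    rw [← Complex.sin_two_mul]; congr 1; ring
  have hR := Complex.Gamma_mul_Gamma_one_sub s
  rw [hsd] at hR
  by_cases h0 : Complex.Gamma (1 - s) = 0
  · rw [h0, mul_zero] at hR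
    have : 2 * Complex.sin (π * s / 2) * Complex.cos (π * s / 2) = 0 := by
      rcases div_eq_zero_iff.mp hR.symm with h | h
      · exact absurd h hπ
      · exact h
    have hc : Complex.cos (π * s / 2) = 0 := by
      rcases mul_eq_zero.mp this with h | h
      · exact absurd h (mul_ne_zero two_ne_zero hsin)
      · exact h
    rw [h0, hc]; simp
  · have hc : Complex.cos (π * s / 2) ≠ 0 := by
      intro hc
      rw [hc, mul_zero, div_zero] at hR
      exact (mul_ne_zero hG h0) hR
    rw [eq_div_iff (mul_ne_zero (mul_ne_zero two_ne_zero hsin) hc)] at hR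
    rw [mul_inv_eq_iff_eq_mul₀ (mul_ne_zero h0 hsin)]
    linear_combination -hR

end RW16

section RW17
open MeasureTheory Set Filter Topology

lemma rw_lhs (s : ℂ) {β : ℝ} (hβ : 0 < β) :
    (∑' n : ℕ, cpsi s (n + 1) * ((Real.sqrt ((n : ℝ) + 1) : ℝ) : ℂ)⁻¹ *
        ((Real.exp (-Real.sqrt (((n : ℝ) + 1) * β)) : ℝ) : ℂ) *
        ((Real.sin (π / 4 - Real.sqrt (((n : ℝ) + 1) * β)) : ℝ) : ℂ)) = rwL (Real.sqrt β) s := by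
  set q := Real.sqrt β with hqdef
  have hq : 0 < q := Real.sqrt_pos.mpr hβ
  set H : ℕ → ℂ := fun N => ((Real.sqrt (N : ℝ) : ℝ) : ℂ)⁻¹ *
        (((Real.exp (-Real.sqrt ((N : ℝ) * β)) : ℝ) : ℂ) *
        ((Real.sin (π / 4 - Real.sqrt ((N : ℝ) * β)) : ℝ) : ℂ)) with hH
  have hterm : ∀ p : ℕ × ℕ, ((p.1 + 1 : ℕ) : ℂ) ^ s * H ((p.1 + 1) ^ 2 * (p.2 + 1)) =
      (((p.1:ℝ) + 1 : ℝ) : ℂ) ^ (s - 1) * (rwSt p.2 (q * ((p.1:ℝ) + 1)) : ℂ) := by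
    rintro ⟨j, k⟩
    simp only [hH]
    have hj : (0:ℝ) < (j:ℝ) + 1 := by positivity
    have e1 : Real.sqrt ((((j + 1) ^ 2 * (k + 1) : ℕ) : ℝ)) = ((j:ℝ) + 1) * Real.sqrt ((k:ℝ) + 1) := by
      push_cast
      rw [Real.sqrt_mul (by positivity), Real.sqrt_sq hj.le]
    have e2 : Real.sqrt ((((j + 1) ^ 2 * (k + 1) : ℕ) : ℝ) * β) = q * ((j:ℝ) + 1) * Real.sqrt ((k:ℝ) + 1) := by
      rw [Real.sqrt_mul (by positivity), e1]; ring
    rw [e1, e2, rwSt, show ((j + 1 : ℕ) : ℂ) = (((j:ℝ) + 1 : ℝ) : ℂ) by push_cast; ring, cpow_sub _ _ (ofReal_ne_zero.mpr hj.ne'), cpow_one]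
    push_cast
    rw [mul_inv]
    ring
  have hS : Summable (fun p : ℕ × ℕ => ((p.1 + 1 : ℕ) : ℂ) ^ s * H ((p.1 + 1) ^ 2 * (p.2 + 1))) := by
    simp_rw [hterm]
    obtain ⟨C, hC0, hC⟩ := rw_rpow_exp (s.re + 1) (c := q / 2) (by positivity)
    have s1 : Summable (fun j : ℕ => C * (((j:ℝ) + 1) ^ 2)⁻¹) := rw_inv_sq_summable.mul_left C
    have s2 := rw_exp_sqrt_summable (a := q / 2) (by positivity)
    have s3 := s1.mul_of_nonneg s2 (fun j => by positivity) (fun k => (Real.exp_pos _).le)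
    refine Summable.of_norm_bounded s3 ?_
    rintro ⟨j, k⟩
    simp only
    have hj : (0:ℝ) < (j:ℝ) + 1 := by positivity
    have hj1 : (1:ℝ) ≤ (j:ℝ) + 1 := by linarith [(Nat.cast_nonneg j : (0:ℝ) ≤ j)]
    have hk1 : (1:ℝ) ≤ Real.sqrt ((k:ℝ) + 1) := Real.one_le_sqrt.mpr (by linarith [(Nat.cast_nonneg k : (0:ℝ) ≤ k)])
    rw [norm_mul, norm_cpow_eq_rpow_re_of_pos hj]
    have h1 := rwSt_bound k (q * ((j:ℝ) + 1))
    have h2 : Real.exp (-(q * ((j:ℝ) + 1) * Real.sqrt ((k:ℝ) + 1))) ≤ Real.exp (-(q / 2) * ((j:ℝ) + 1)) * Real.exp (-(q / 2 * Real.sqrt ((k:ℝ) + 1))) := by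
      rw [← Real.exp_add]
      refine Real.exp_le_exp.mpr ?_
      have : ((j:ℝ) + 1) + Real.sqrt ((k:ℝ) + 1) ≤ 2 * (((j:ℝ) + 1) * Real.sqrt ((k:ℝ) + 1)) := by nlinarith
      nlinarith
    have h3 : ((j:ℝ) + 1) ^ (s - 1).re * Real.exp (-(q / 2) * ((j:ℝ) + 1)) ≤ C * (((j:ℝ) + 1) ^ 2)⁻¹ := by
      have h4 := hC ((j:ℝ) + 1) hj1
      rw [show (s - 1).re = (s.re + 1) + (-2) by simp; ring, Real.rpow_add hj, Real.rpow_neg hj.le, Real.rpow_two]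
      calc _ = ((j:ℝ) + 1) ^ (s.re + 1) * Real.exp (-(q / 2) * ((j:ℝ) + 1)) * (((j:ℝ) + 1) ^ 2)⁻¹ := by ring
        _ ≤ _ := by gcongr
    calc _ ≤ ((j:ℝ) + 1) ^ (s - 1).re * (Real.exp (-(q / 2) * ((j:ℝ) + 1)) * Real.exp (-(q / 2 * Real.sqrt ((k:ℝ) + 1)))) := by
          gcongr; exact h1.trans h2
      _ = (((j:ℝ) + 1) ^ (s - 1).re * Real.exp (-(q / 2) * ((j:ℝ) + 1))) * Real.exp (-(q / 2 * Real.sqrt ((k:ℝ) + 1))) := by ring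
      _ ≤ _ := by gcongr
  have hR := rw_regroup s H hS
  have hl : (∑' n : ℕ, cpsi s (n + 1) * ((Real.sqrt ((n : ℝ) + 1) : ℝ) : ℂ)⁻¹ *
        ((Real.exp (-Real.sqrt (((n : ℝ) + 1) * β)) : ℝ) : ℂ) *
        ((Real.sin (π / 4 - Real.sqrt (((n : ℝ) + 1) * β)) : ℝ) : ℂ)) = ∑' N : ℕ, cpsi s (N + 1) * H (N + 1) := by
    refine tsum_congr (fun n => ?_)
    simp only [hH]
    rw [Nat.cast_add, Nat.cast_one]
    ring
  rw [hl, hR, hS.tsum_prod, rwL]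
  refine tsum_congr (fun j => ?_)
  refine (tsum_congr (fun k => hterm (j, k))).trans ?_
  simp only
  rw [tsum_mul_left, ← rwS, ← rwD_eq (by positivity)]
  push_cast
  rfl

lemma rw_term {s : ℂ} (hs : 0 < s.re) (hsev : ∀ k : ℕ, s ≠ 2 * ((k : ℂ) + 1)) {q α : ℝ} (hq : 0 < q) (hα : α * q ^ 2 = 4 * π ^ 3) (j k : ℕ) :
    (((j:ℝ) + 1 : ℝ) : ℂ) ^ (1 - s) * (((2 : ℂ) ^ (-s - 1 / 2) * (π : ℂ) ^ (-s - 2) * q) * (((((j:ℝ) + 1) ^ 2 * ((k:ℝ) + 1) : ℝ) : ℂ)⁻¹ *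
          (-(π : ℂ) ^ 3 * (Real.sqrt (((j:ℝ) + 1) ^ 2 * ((k:ℝ) + 1)) : ℂ) /
              (q * Complex.Gamma (1 - s) * Complex.sin ((π : ℂ) * s / 2))
            + (2 : ℂ) ^ (2 * s) * (π : ℂ) ^ (3 * s / 2 + 2) *
                ((((j:ℝ) + 1) ^ 2 * ((k:ℝ) + 1) / q ^ 2 : ℝ) : ℂ) ^ ((s + 1) / 2) *
                Complex.Gamma (s / 2) *
                F11 (s / 2) (1 / 2) (-((((j:ℝ) + 1) ^ 2 * ((k:ℝ) + 1)) * α : ℝ))))) =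
    (Real.sqrt 2 : ℂ)⁻¹ * (rwT q 1 (2 * π * ((j:ℝ) + 1)) k s + rwT q (-1) (2 * π * ((j:ℝ) + 1)) k s) := by
  have hπ := Real.pi_pos
  have hj : (0:ℝ) < (j:ℝ) + 1 := by positivity
  have hk : (0:ℝ) < (k:ℝ) + 1 := by positivity
  rw [rwT_eq hq (Or.inl rfl) (by positivity) k hs, rwT_eq hq (Or.inr rfl) (by positivity) k hs]
  have h1 := rw_F11_rep (t := q ^ 2 / (4 * π * ((k:ℝ) + 1))) (x := 2 * π * ((j:ℝ) + 1)) (by positivity) hs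
  have h2 : (2 * π * ((j:ℝ) + 1)) ^ 2 / (4 * (q ^ 2 / (4 * π * ((k:ℝ) + 1)))) = (((j:ℝ) + 1) ^ 2 * ((k:ℝ) + 1)) * α := by
    have : α = 4 * π ^ 3 / q ^ 2 := by field_simp; linarith
    rw [this]; field_simp; ring
  rw [h2] at h1
  have h3 := rwc_sq_sum s
  have h4 := rw_refl hs hsev
  have p1 := rw_pow1 hj hk hq s
  have p2 := rw_pow2 hj hk hq s
  generalize F11 (s / 2) (1 / 2) (-((((j:ℝ) + 1) ^ 2 * ((k:ℝ) + 1)) * α : ℝ)) = F at *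
  generalize mellin (E := ℂ) _ s = A1 at *
  generalize mellin (E := ℂ) _ s = A2 at *
  generalize Complex.Gamma (s / 2) = G2 at *
  generalize (((j:ℝ) + 1 : ℝ) : ℂ) ^ (1 - s) = X1 at *
  generalize ((2 : ℂ) ^ (-s - 1 / 2) * (π : ℂ) ^ (-s - 2) * q) = X2 at *
  generalize ((((j:ℝ) + 1) ^ 2 * ((k:ℝ) + 1) : ℝ) : ℂ)⁻¹ = X3 at *
  generalize ((2 : ℂ) ^ (2 * s) * (π : ℂ) ^ (3 * s / 2 + 2) *
                ((((j:ℝ) + 1) ^ 2 * ((k:ℝ) + 1) / q ^ 2 : ℝ) : ℂ) ^ ((s + 1) / 2)) = X4 at *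
  generalize ((2 * π * ((j:ℝ) + 1) : ℝ) : ℂ) ^ (-s) = X5 at *
  generalize ((q ^ 2 / (4 * π * ((k:ℝ) + 1)) : ℝ) : ℂ) ^ (-(s / 2)) = X6 at *
  have e : -(π : ℂ) ^ 3 * (Real.sqrt (((j:ℝ) + 1) ^ 2 * ((k:ℝ) + 1)) : ℂ) /
              (q * Complex.Gamma (1 - s) * Complex.sin ((π : ℂ) * s / 2)) = -((π:ℂ) ^ 3 * (Real.sqrt (((j:ℝ) + 1) ^ 2 * ((k:ℝ) + 1)) : ℂ) * (q:ℂ)⁻¹) * (Complex.Gamma (1 - s) * Complex.sin (π * s / 2))⁻¹ := by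
    rw [div_eq_mul_inv, mul_assoc (q:ℂ), mul_inv]; ring
  rw [e]
  generalize ((π:ℂ) ^ 3 * (Real.sqrt (((j:ℝ) + 1) ^ 2 * ((k:ℝ) + 1)) : ℂ) * (q:ℂ)⁻¹) = X7 at *
  generalize (Complex.Gamma (1 - s) * Complex.sin (π * s / 2))⁻¹ = X8 at *
  generalize Complex.Gamma s = Gs at *
  generalize Complex.cos (π * s / 2) = cs at *
  generalize (Real.sqrt 2 : ℂ)⁻¹ = r2 at *
  generalize (((Real.sqrt ((k:ℝ) + 1))⁻¹ : ℝ) : ℂ) = rk at *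
  linear_combination G2 * F * p1 - X8 * p2 - r2 * rk * h1 + r2 * rk * X5 * Gs * h3 - r2 * rk * X5 * h4

lemma rw_T_summable {s : ℂ} (hs : 0 < s.re) {q e : ℝ} (hq : 0 < q) (he : e = 1 ∨ e = -1) :
    Summable (fun p : ℕ × ℕ => rwT q e (2 * π * ((p.1:ℝ) + 1)) p.2 s) := by
  have hπ := Real.pi_pos
  have s3 := (rw_inv_sq_summable.mul_of_nonneg rwu_summable (fun j => by positivity) rwu_nonneg).mul_left
    (Real.exp (π / 4 * |s.im|) * (((4 * π)⁻¹ * q ^ 2) * Real.Gamma (s.re + 2)))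
  refine Summable.of_norm_bounded s3 ?_
  rintro ⟨j, k⟩
  refine (rwT_bound hq he (by positivity) k hs).trans ?_
  have h1 := rw_xbound j hs
  have h2 := rwu_nonneg k
  have h6 : 0 < Real.Gamma (s.re + 2) := Real.Gamma_pos_of_pos (by linarith)
  calc _ ≤ Real.exp (π / 4 * |s.im|) * (rwu k * ((4 * π)⁻¹ * q ^ 2) * ((((j:ℝ) + 1) ^ 2)⁻¹ * Real.Gamma (s.re + 2))) := by gcongr
    _ = _ := by ring

lemma rw_rhs {s : ℂ} (hs : 0 < s.re) (hsev : ∀ k : ℕ, s ≠ 2 * ((k : ℂ) + 1)) {α β : ℝ} (hβ : 0 < β) (hαβ : α * β = 4 * π ^ 3) :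
    (2 : ℂ) ^ (-s - 1 / 2) * (π : ℂ) ^ (-s - 2) * (Real.sqrt β : ℂ) *
        ∑' n : ℕ, cpsi (1 - s) (n + 1) / ((n : ℂ) + 1) *
          (-(π : ℂ) ^ 3 * (Real.sqrt ((n : ℝ) + 1) : ℂ) /
              ((Real.sqrt β : ℂ) * Complex.Gamma (1 - s) * Complex.sin ((π : ℂ) * s / 2))
            + (2 : ℂ) ^ (2 * s) * (π : ℂ) ^ (3 * s / 2 + 2) *
                ((((n : ℝ) + 1) / β : ℝ) : ℂ) ^ ((s + 1) / 2) *
                Complex.Gamma (s / 2) *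
                F11 (s / 2) (1 / 2) (-(((n : ℝ) + 1) * α : ℝ))) = (Real.sqrt 2 : ℂ)⁻¹ * rwR (Real.sqrt β) s := by
  have hq : 0 < Real.sqrt β := Real.sqrt_pos.mpr hβ
  have hq2 : Real.sqrt β ^ 2 = β := Real.sq_sqrt hβ.le
  set q := Real.sqrt β with hqdef
  have hα : α * q ^ 2 = 4 * π ^ 3 := by rw [hq2, hαβ]
  set H : ℕ → ℂ := fun N => ((2 : ℂ) ^ (-s - 1 / 2) * (π : ℂ) ^ (-s - 2) * q) * (((N:ℝ) : ℂ)⁻¹ *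
          (-(π : ℂ) ^ 3 * (Real.sqrt (N:ℝ) : ℂ) /
              (q * Complex.Gamma (1 - s) * Complex.sin ((π : ℂ) * s / 2))
            + (2 : ℂ) ^ (2 * s) * (π : ℂ) ^ (3 * s / 2 + 2) *
                (((N:ℝ) / q ^ 2 : ℝ) : ℂ) ^ ((s + 1) / 2) *
                Complex.Gamma (s / 2) *
                F11 (s / 2) (1 / 2) (-((N:ℝ) * α : ℝ)))) with hH
  have hterm : ∀ p : ℕ × ℕ, ((p.1 + 1 : ℕ) : ℂ) ^ (1 - s) * H ((p.1 + 1) ^ 2 * (p.2 + 1)) =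
      (Real.sqrt 2 : ℂ)⁻¹ * (rwT q 1 (2 * π * ((p.1:ℝ) + 1)) p.2 s + rwT q (-1) (2 * π * ((p.1:ℝ) + 1)) p.2 s) := by
    rintro ⟨j, k⟩
    rw [← rw_term hs hsev hq hα]
    simp only [hH]
    rw [show ((((j + 1) ^ 2 * (k + 1) : ℕ)) : ℝ) = ((j:ℝ) + 1) ^ 2 * ((k:ℝ) + 1) by push_cast; ring, show ((j + 1 : ℕ) : ℂ) = (((j:ℝ) + 1 : ℝ) : ℂ) by push_cast; ring]
  have hS : Summable (fun p : ℕ × ℕ => ((p.1 + 1 : ℕ) : ℂ) ^ (1 - s) * H ((p.1 + 1) ^ 2 * (p.2 + 1))) := by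
    simp_rw [hterm]
    exact ((rw_T_summable hs hq (Or.inl rfl)).add (rw_T_summable hs hq (Or.inr rfl))).mul_left _
  have hR := rw_regroup (1 - s) H hS
  rw [hS.tsum_prod] at hR
  have hin : ∀ j : ℕ, ∑' k : ℕ, (Real.sqrt 2 : ℂ)⁻¹ * (rwT q 1 (2 * π * ((j:ℝ) + 1)) k s + rwT q (-1) (2 * π * ((j:ℝ) + 1)) k s) =
      (Real.sqrt 2 : ℂ)⁻¹ * (rwQ q 1 (2 * π * ((j:ℝ) + 1)) s + rwQ q (-1) (2 * π * ((j:ℝ) + 1)) s) := by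
    intro j
    have hπ := Real.pi_pos
    exact (((rwT_hasSum hq (Or.inl rfl) (by positivity) hs).add (rwT_hasSum hq (Or.inr rfl) (by positivity) hs)).mul_left _).tsum_eq
  replace hR := hR.trans (tsum_congr fun j => (tsum_congr fun k => hterm (j, k)).trans (hin j))
  rw [tsum_mul_left] at hR
  rw [rwR, ← hR, ← tsum_mul_left]
  refine tsum_congr (fun n => ?_)
  simp only [hH]
  rw [hq2, Nat.cast_add, Nat.cast_one]
  push_cast
  ring

end RW17

theorem ramanujan_wigert_generalization
    (s : ℂ) (hs : 0 < s.re) (hs1 : s ≠ 1) (hsev : ∀ k : ℕ, s ≠ 2 * ((k : ℂ) + 1))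
    (α β : ℝ) (hα : 0 < α) (hβ : 0 < β) (hαβ : α * β = 4 * π ^ 3) :
    (∑' n : ℕ, cpsi s (n + 1) * ((Real.sqrt ((n : ℝ) + 1) : ℝ) : ℂ)⁻¹ *
        ((Real.exp (-Real.sqrt (((n : ℝ) + 1) * β)) : ℝ) : ℂ) *
        ((Real.sin (π / 4 - Real.sqrt (((n : ℝ) + 1) * β)) : ℝ) : ℂ))
    = ((Real.sqrt β / Real.sqrt 2 : ℝ) : ℂ) * riemannZeta (-s)
      + Complex.Gamma s * Complex.cos ((π : ℂ) / 4 + (π : ℂ) * s / 4) *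
          riemannZeta ((1 + s) / 2) * ((2 * β : ℝ) : ℂ) ^ (-s / 2)
      + (1 / (Real.sqrt 2 : ℂ)) * riemannZeta (1 / 2) * riemannZeta (1 - s)
      + (2 : ℂ) ^ (-s - 1 / 2) * (π : ℂ) ^ (-s - 2) * (Real.sqrt β : ℂ) *
        ∑' n : ℕ, cpsi (1 - s) (n + 1) / ((n : ℂ) + 1) *
          (-(π : ℂ) ^ 3 * (Real.sqrt ((n : ℝ) + 1) : ℂ) /
              ((Real.sqrt β : ℂ) * Complex.Gamma (1 - s) * Complex.sin ((π : ℂ) * s / 2))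
            + (2 : ℂ) ^ (2 * s) * (π : ℂ) ^ (3 * s / 2 + 2) *
                ((((n : ℝ) + 1) / β : ℝ) : ℂ) ^ ((s + 1) / 2) *
                Complex.Gamma (s / 2) *
                F11 (s / 2) (1 / 2) (-(((n : ℝ) + 1) * α : ℝ))) := by
  have hq : 0 < Real.sqrt β := Real.sqrt_pos.mpr hβ
  rw [rw_lhs s hβ, rw_rhs hs hsev hβ hαβ]
  have h := rw_id2 hq hs
  rw [rwM, rwD_mellin hs hs1, rwK_eq] at h
  have hsq : Complex.sin (π / 4 - π * s / 4) = Complex.cos ((π : ℂ) / 4 + (π : ℂ) * s / 4) := by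
    rw [← Complex.cos_pi_div_two_sub]; congr 1; ring
  rw [hsq] at h
  have hp : ((2 * β : ℝ) : ℂ) ^ (-s / 2) = (Real.sqrt 2 : ℂ) ^ (-s) * (Real.sqrt β : ℂ) ^ (-s) := by
    rw [rw_sqrt_cpow (by norm_num : (0:ℝ) < 2), rw_sqrt_cpow hβ, ofReal_mul, mul_cpow_ofReal_nonneg (by norm_num) hβ.le]
  rw [hp]
  have h2 : (Real.sqrt 2 : ℂ)⁻¹ * (Real.sqrt 2 : ℂ) = 1 := inv_mul_cancel₀ rw_sqrt2_ne
  rw [ofReal_div, div_eq_mul_inv, one_div]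
  generalize (Real.sqrt 2 : ℂ) ^ (-s) = Y1 at *
  generalize (Real.sqrt β : ℂ) ^ (-s) = Y2 at *
  generalize rwL (Real.sqrt β) s = LL at *
  generalize rwR (Real.sqrt β) s = RR at *
  generalize (Real.sqrt 2 : ℂ)⁻¹ = r at *
  generalize (Real.sqrt 2 : ℂ) = r' at *
  linear_combination r * h - (LL - Y1 * Y2 * Complex.Gamma s * Complex.cos ((π : ℂ) / 4 + (π : ℂ) * s / 4) * riemannZeta ((1 + s) / 2)) * h2
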